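/- Fix real κ > 0, η > 0 and a ∈ (0, 1/2). There exist C > 0 and f₀ > 0 such that for all f ∈ (0, f₀): D_f(0) ≠ 0, and for every R_L > 2f^a there exists r with (1 − f)·R_L < r < R_L such that D_f has no zeros on the circle {|z| = r} and |(1/2π)·∫₀^{2π} log|D_f(re^{it})/D_f(0)| dt − (8/(9π))·r^{3/2}/f| ≤ C·(1 + r^{1/2})·(log(f⁻¹ + r))² (log denotes the natural logarithm). -/

import Mathlib

open Real

/-- Taylor coefficients of the Airy function `Ai`:
`a₀ = 3^{−2/3}/Γ(2/3)`, `a₁ = −3^{−1/3}/Γ(1/3)`, `a₂ = 0`,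
`a_{k+3} = a_k/((k+3)(k+2))`. -/
noncomputable def airyCoeff : ℕ → ℂ
  | 0 => (3 : ℂ) ^ (-(2 : ℂ) / 3) / Complex.Gamma (2 / 3)
  | 1 => -((3 : ℂ) ^ (-(1 : ℂ) / 3) / Complex.Gamma (1 / 3))
  | 2 => 0
  | (k + 3) => airyCoeff k / (((k : ℂ) + 3) * ((k : ℂ) + 2))

/-- The Airy function `Ai`, as the entire function with the above Taylor
coefficients at `0`. -/
noncomputable def Ai (z : ℂ) : ℂ := ∑' k : ℕ, airyCoeff k * z ^ k

/-- `ω = e^{2πi/3}` -/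
noncomputable def ωc : ℂ := Complex.exp (2 * π * Complex.I / 3)

/-- `W = f^{1/3}·e^{−iπ/6}/(2π)` -/
noncomputable def Wf (f : ℝ) : ℂ :=
  ((f ^ ((1 : ℝ) / 3) : ℝ) : ℂ) * Complex.exp (-(π : ℂ) * Complex.I / 6) / (2 * π)

/-- `α₊(z) = Ai(−ω(z − κf)f^{−2/3})·Ai(−(z − κf)f^{−2/3})` -/
noncomputable def alphaP (κ f : ℝ) (z : ℂ) : ℂ :=
  Ai (-ωc * (z - κ * f) * ((f ^ (-(2 : ℝ) / 3) : ℝ) : ℂ)) *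
    Ai (-(z - κ * f) * ((f ^ (-(2 : ℝ) / 3) : ℝ) : ℂ))

/-- `α₋(z) = Ai(−ω(z + κf)f^{−2/3})·Ai(−(z + κf)f^{−2/3})` -/
noncomputable def alphaM (κ f : ℝ) (z : ℂ) : ℂ :=
  Ai (-ωc * (z + κ * f) * ((f ^ (-(2 : ℝ) / 3) : ℝ) : ℂ)) *
    Ai (-(z + κ * f) * ((f ^ (-(2 : ℝ) / 3) : ℝ) : ℂ))

/-- `β₊(z) = Ai(−ω(z + κf)f^{−2/3})·Ai(−(z − κf)f^{−2/3})` -/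
noncomputable def betaP (κ f : ℝ) (z : ℂ) : ℂ :=
  Ai (-ωc * (z + κ * f) * ((f ^ (-(2 : ℝ) / 3) : ℝ) : ℂ)) *
    Ai (-(z - κ * f) * ((f ^ (-(2 : ℝ) / 3) : ℝ) : ℂ))

/-- `β₋(z) = Ai(−ω(z − κf)f^{−2/3})·Ai(−(z + κf)f^{−2/3})` -/
noncomputable def betaM (κ f : ℝ) (z : ℂ) : ℂ :=
  Ai (-ωc * (z - κ * f) * ((f ^ (-(2 : ℝ) / 3) : ℝ) : ℂ)) *
    Ai (-(z + κ * f) * ((f ^ (-(2 : ℝ) / 3) : ℝ) : ℂ))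

/-- The resonance determinant `D_f` of the Stark Hamiltonian
`p² + fx + η⁻¹(δ_κ + δ_{−κ})`:
`D_f(z) = 1 + (α₊ + α₋)/(ηW) + β₊(β₋ − β₊)/(η²W²)`. -/
noncomputable def Df (κ η f : ℝ) (z : ℂ) : ℂ :=
  1 + (alphaP κ f z + alphaM κ f z) / (η * Wf f)
    + betaP κ f z * (betaM κ f z - betaP κ f z) / (η ^ 2 * (Wf f) ^ 2)

/-! Put `z = k²` with `k` in the closed first quadrant and `E = (1 + |k|) log (f⁻¹ + |k|²)`. The
Airy asymptotics, combined with the connection formula near the positive axis, compare `D_f(z)` with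
the determinant of the problem without field and give `log |D_f(z)| = O(E)`. Reflection in the real
axis adds a term of modulus `exp ((4/(3f)) Im k³ + O(E))`, so that
`log |D_f(r e^{-iθ})| = (4/(3f)) r^{3/2} max (sin (3θ/2)) 0 + O(E)` for `0 ≤ θ ≤ π`. The lower
bounds may fail for `θ` within `O(E f / r^{3/2})` of the angles `0` and `2π/3`, where two terms of
the same size can cancel; since the integrand is at most of order `r^{3/2}/f`, the Poisson–Jensen
inequality at two interior points bounds the contribution of these arcs by `O(E)`. Integrating the
sine gives `8/(9π) · r^{3/2}/f`, and `log |D_f(0)| = O(log f⁻¹)` because `f^{1/3} D_f(0)` has a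
finite nonzero limit. -/

open MeasureTheory Filter Topology Set
open Complex (I)

/-! ### The Airy function as a contour integral -/

/-- The moments `∫₀^∞ τⁿ e^{-τ³/3} dτ`, in terms of which the Taylor coefficients of `Ai` are
expressed. -/
noncomputable def cubicMoment (n : ℕ) : ℝ :=
  ∫ τ in Ioi (0 : ℝ), τ ^ n * Real.exp (-τ ^ 3 / 3)

lemma cubicMoment_eq (n : ℕ) :
    cubicMoment n = (3 : ℝ) ^ (((n : ℝ) - 2) / 3) * Real.Gamma (((n : ℝ) + 1) / 3) := by
  have h := integral_rpow_mul_exp_neg_mul_rpow (p := 3) (q := n) (b := 1 / 3) (by norm_num)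
    (by have := n.cast_nonneg (α := ℝ); linarith) (by norm_num)
  have h_const : (1 / 3 : ℝ) ^ (-((n : ℝ) + 1) / 3) * (1 / 3) = (3 : ℝ) ^ (((n : ℝ) - 2) / 3) := by
    rw [one_div, ← Real.rpow_neg_one 3, ← Real.rpow_mul (by norm_num),
      ← Real.rpow_add (by norm_num)]
    congr 1
    ring
  rw [← h_const, ← h, cubicMoment]
  refine setIntegral_congr_fun measurableSet_Ioi fun τ _ => ?_
  rw [show (3 : ℝ) = (3 : ℕ) by norm_num, Real.rpow_natCast, Real.rpow_natCast]
  ring_nf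

lemma cubicMoment_pos (n : ℕ) : 0 < cubicMoment n := by
  have : 0 < Real.Gamma (((n : ℝ) + 1) / 3) := Real.Gamma_pos_of_pos (by positivity)
  rw [cubicMoment_eq]
  positivity

lemma cubicMoment_add_three (n : ℕ) : cubicMoment (n + 3) = (n + 1) * cubicMoment n := by
  rw [cubicMoment_eq, cubicMoment_eq,
    show (((n + 3 : ℕ) : ℝ) + 1) / 3 = ((n : ℝ) + 1) / 3 + 1 by push_cast; ring,
    show (((n + 3 : ℕ) : ℝ) - 2) / 3 = ((n : ℝ) - 2) / 3 + 1 by push_cast; ring,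
    Real.Gamma_add_one (by positivity), Real.rpow_add (by norm_num), Real.rpow_one]
  ring

lemma Gamma_one_third_mul_Gamma_two_thirds :
    Real.Gamma (1 / 3) * Real.Gamma (2 / 3) = 2 * π / √3 := by
  have h := Real.Gamma_mul_Gamma_one_sub (1 / 3)
  rw [show (1 : ℝ) - 1 / 3 = 2 / 3 by norm_num, show π * (1 / 3) = π / 3 by ring,
    Real.sin_pi_div_three] at h
  rw [h]
  field_simp

lemma airyCoeff_zero : airyCoeff 0 = ((√3 / (2 * π) * cubicMoment 0 : ℝ) : ℂ) := by
  have hΓ : Real.Gamma (2 / 3) ≠ 0 := (Real.Gamma_pos_of_pos (by norm_num)).ne'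
  have h_real : airyCoeff 0 = (((3 : ℝ) ^ (-2 / 3 : ℝ) / Real.Gamma (2 / 3) : ℝ) : ℂ) := by
    rw [airyCoeff, Complex.ofReal_div, Complex.ofReal_cpow (by norm_num), ← Complex.Gamma_ofReal]
    norm_num
  rw [h_real, cubicMoment_eq, Nat.cast_zero, zero_sub, zero_add,
    eq_div_of_mul_eq hΓ Gamma_one_third_mul_Gamma_two_thirds]
  congr 1
  field_simp

lemma airyCoeff_one : airyCoeff 1 = ((-(√3 / (2 * π) * cubicMoment 1) : ℝ) : ℂ) := by
  have hΓ : Real.Gamma (1 / 3) ≠ 0 := (Real.Gamma_pos_of_pos (by norm_num)).ne'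
  have h_real : airyCoeff 1 = ((-((3 : ℝ) ^ (-1 / 3 : ℝ) / Real.Gamma (1 / 3)) : ℝ) : ℂ) := by
    rw [airyCoeff, Complex.ofReal_neg, Complex.ofReal_div, Complex.ofReal_cpow (by norm_num),
      ← Complex.Gamma_ofReal]
    norm_num
  have hΓΓ := Gamma_one_third_mul_Gamma_two_thirds
  rw [mul_comm] at hΓΓ
  rw [h_real, cubicMoment_eq, Nat.cast_one, show (1 - 2 : ℝ) = -1 by norm_num, one_add_one_eq_two,
    eq_div_of_mul_eq hΓ hΓΓ]
  congr 1
  field_simp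

lemma airyCoeff_zero_ne_zero : airyCoeff 0 ≠ 0 := by
  have := cubicMoment_pos 0
  rw [airyCoeff_zero, Complex.ofReal_ne_zero]
  positivity

lemma airyCoeff_three_mul_add_two (k : ℕ) : airyCoeff (3 * k + 2) = 0 := by
  induction k with
  | zero => simp [airyCoeff]
  | succ k ih => rw [show 3 * (k + 1) + 2 = (3 * k + 2) + 3 by ring, airyCoeff, ih, zero_div]

lemma conj_airyCoeff (n : ℕ) : starRingEnd ℂ (airyCoeff n) = airyCoeff n := by
  induction n using Nat.strong_induction_on with
  | _ n ih =>
    match n with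
    | 0 => rw [airyCoeff_zero, Complex.conj_ofReal]
    | 1 => rw [airyCoeff_one, Complex.conj_ofReal]
    | 2 => simp [airyCoeff]
    | (k + 3) =>
      rw [airyCoeff, map_div₀, ih k (by omega)]
      simp [Complex.conj_ofNat]

lemma isPrimitiveRoot_ωc : IsPrimitiveRoot ωc 3 :=
  Complex.isPrimitiveRoot_exp 3 (by norm_num)

lemma ωc_cube : ωc ^ 3 = 1 := isPrimitiveRoot_ωc.pow_eq_one

lemma ωc_ne_zero : ωc ≠ 0 := Complex.exp_ne_zero _

lemma norm_ωc : ‖ωc‖ = 1 := isPrimitiveRoot_ωc.norm'_eq_one (by norm_num)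

lemma ωc_sq_add_self_add_one : ωc ^ 2 + ωc + 1 = 0 := by
  have h := isPrimitiveRoot_ωc.geom_sum_eq_zero (by norm_num)
  simp only [Finset.sum_range_succ, Finset.sum_range_zero, pow_zero, pow_one, zero_add] at h
  linear_combination h

lemma ωc_eq : ωc = -1 / 2 + (√3 / 2 : ℝ) * I := by
  rw [ωc, show 2 * (π : ℂ) * I / 3 = ((π - π / 3 : ℝ) : ℂ) * I by push_cast; ring,
    Complex.exp_mul_I, ← Complex.ofReal_cos, ← Complex.ofReal_sin, Real.cos_pi_sub,
    Real.sin_pi_sub, Real.cos_pi_div_three, Real.sin_pi_div_three]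
  push_cast
  ring

lemma ωc_sq_eq : ωc ^ 2 = -1 / 2 - (√3 / 2 : ℝ) * I := by
  linear_combination ωc_sq_add_self_add_one - ωc_eq

lemma conj_ωc : starRingEnd ℂ ωc = ωc ^ 2 := by
  rw [ωc_sq_eq, ωc_eq, map_add, map_mul, Complex.conj_I, Complex.conj_ofReal, map_div₀, map_neg,
    map_one, Complex.conj_ofNat]
  ring

lemma airyCoeff_eq (n : ℕ) :
    airyCoeff n = (ωc ^ (n + 1) - (ωc ^ 2) ^ (n + 1)) / (2 * π * I) *
      (cubicMoment n / n.factorial) := by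
  have hI := Complex.I_ne_zero
  have hπ : (π : ℂ) ≠ 0 := mod_cast Real.pi_ne_zero
  have h_sub : ωc - ωc ^ 2 = √3 * I := by
    rw [ωc_sq_eq, ωc_eq]
    push_cast
    ring
  induction n using Nat.strong_induction_on with
  | _ n ih =>
    match n with
    | 0 =>
      rw [airyCoeff_zero, zero_add, pow_one, pow_one, h_sub]
      push_cast [Nat.factorial]
      field_simp
    | 1 =>
      have h_sub' : ωc ^ (1 + 1) - (ωc ^ 2) ^ (1 + 1) = -(√3 * I) := by
        linear_combination -h_sub - ωc * ωc_cube
      rw [airyCoeff_one, h_sub']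
      push_cast [Nat.factorial]
      field_simp
    | 2 => simp [airyCoeff, ωc_cube, ← pow_mul, pow_mul ωc 3 2]
    | (k + 3) =>
      have hω (c : ℂ) (hc : c ^ 3 = 1) : c ^ (k + 3 + 1) = c ^ (k + 1) := by
        rw [show k + 3 + 1 = (k + 1) + 3 by ring, pow_add, hc, mul_one]
      have hω2 : (ωc ^ 2) ^ 3 = 1 := by rw [pow_right_comm, ωc_cube, one_pow]
      have h1 : (k : ℂ) + 1 ≠ 0 := mod_cast k.succ_ne_zero
      have h2 : (k : ℂ) + 2 ≠ 0 := mod_cast (k + 1).succ_ne_zero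
      have h3 : (k : ℂ) + 3 ≠ 0 := mod_cast (k + 2).succ_ne_zero
      have hfac : (k.factorial : ℂ) ≠ 0 := mod_cast k.factorial_ne_zero
      rw [airyCoeff, ih k (by omega), cubicMoment_add_three, hω _ ωc_cube, hω _ hω2]
      push_cast [Nat.factorial_succ]
      rw [show (k : ℂ) + 1 + 1 = k + 2 by ring, show (k : ℂ) + 2 + 1 = k + 3 by ring]
      field_simp

lemma mul_sub_cube_div_three_le {b t : ℝ} (hb : 0 ≤ b) (ht : 0 ≤ t) :
    b * t - t ^ 3 / 3 ≤ b * (1 + 3 * b) := by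
  rcases le_total (3 * b) (t ^ 2) with h | h
  · have : b * t ≤ t ^ 3 / 3 := by nlinarith
    nlinarith [mul_nonneg hb hb]
  · have h1 : t ≤ 1 + 3 * b := by nlinarith [sq_nonneg (t - 1)]
    have : 0 ≤ t ^ 3 := by positivity
    nlinarith [mul_le_mul_of_nonneg_left h1 hb]

lemma integrableOn_exp_mul_sub_cube (c : ℝ) :
    IntegrableOn (fun t : ℝ => Real.exp (c * t - t ^ 3 / 3)) (Ioi 0) := by
  have h := (exp_neg_integrableOn_Ioi 0 (b := 1) one_pos).const_mul
    (Real.exp ((|c| + 1) * (1 + 3 * (|c| + 1))))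
  refine Integrable.mono' h (by fun_prop) ((ae_restrict_iff' measurableSet_Ioi).2 (.of_forall ?_))
  intro t (ht : 0 < t)
  rw [Real.norm_of_nonneg (Real.exp_pos _).le, ← Real.exp_add, Real.exp_le_exp]
  have := mul_sub_cube_div_three_le (b := |c| + 1) (by positivity) ht.le
  nlinarith [le_abs_self c]

/-- The integral of `s ↦ exp (s³ / 3 - y s)` from `0` to `∞` along the ray through a cube root `c`
of `-1`, written with `c³ = -1` substituted so that it converges for every `c`. -/
noncomputable def airyRay (c y : ℂ) : ℂ :=
  ∫ t in Ioi (0 : ℝ), c * Complex.exp (-(c * t * y) - (t : ℂ) ^ 3 / 3)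

lemma integrableOn_airyRay (c y : ℂ) :
    IntegrableOn (fun t : ℝ => c * Complex.exp (-(c * t * y) - (t : ℂ) ^ 3 / 3)) (Ioi 0) := by
  refine Integrable.const_mul (Integrable.mono' (integrableOn_exp_mul_sub_cube (‖c‖ * ‖y‖))
    (by fun_prop) ((ae_restrict_iff' measurableSet_Ioi).2 (.of_forall ?_))) c
  intro t (ht : 0 < t)
  have h_lin : (-(c * t * y)).re ≤ ‖c‖ * ‖y‖ * t := by
    refine (Complex.re_le_norm _).trans_eq ?_
    rw [norm_neg, norm_mul, norm_mul, Complex.norm_real, Real.norm_of_nonneg ht.le]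
    ring
  have h_cube : ((t : ℂ) ^ 3 / 3).re = t ^ 3 / 3 := by
    rw [show (t : ℂ) ^ 3 / 3 = ((t ^ 3 / 3 : ℝ) : ℂ) by push_cast; ring, Complex.ofReal_re]
  rw [Complex.norm_exp, Real.exp_le_exp, Complex.sub_re, h_cube]
  linarith

lemma ofReal_cubicMoment (n : ℕ) :
    (cubicMoment n : ℂ) = ∫ t in Ioi (0 : ℝ), (t : ℂ) ^ n * Complex.exp (-(t : ℂ) ^ 3 / 3) := by
  rw [cubicMoment, ← integral_complex_ofReal]
  push_cast
  rfl

lemma hasSum_airyRay (c y : ℂ) :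
    HasSum (fun n : ℕ => c * (-(c * y)) ^ n * (cubicMoment n / n.factorial)) (airyRay c y) := by
  have h := hasSum_integral_of_dominated_convergence (μ := volume.restrict (Ioi (0 : ℝ)))
    (F := fun (n : ℕ) (t : ℝ) =>
      c * ((-(c * t * y)) ^ n / n.factorial) * Complex.exp (-(t : ℂ) ^ 3 / 3))
    (f := fun t => c * Complex.exp (-(c * t * y) - (t : ℂ) ^ 3 / 3))
    (fun n t => ‖c‖ * ((‖c‖ * ‖y‖ * t) ^ n / n.factorial) * Real.exp (-t ^ 3 / 3))
    (fun n => by fun_prop) ?bound ?summable ?integrable ?hasSum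
  · refine h.congr_fun fun n => ?_
    rw [ofReal_cubicMoment, ← integral_div, ← integral_const_mul]
    refine integral_congr_ae (.of_forall fun t => ?_)
    simp only [neg_pow (c * _), neg_pow (c * _ * _), mul_pow]
    ring
  case bound =>
    refine fun n => (ae_restrict_iff' measurableSet_Ioi).2 (.of_forall ?_)
    intro t (ht : 0 < t)
    rw [show (-(t : ℂ) ^ 3 / 3) = ((-t ^ 3 / 3 : ℝ) : ℂ) by push_cast; ring, ← Complex.ofReal_exp]
    simp only [norm_mul, norm_div, norm_pow, norm_neg, Complex.norm_real, Complex.norm_natCast,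
      Real.norm_of_nonneg ht.le, Real.norm_of_nonneg (Real.exp_pos _).le]
    rw [mul_right_comm ‖c‖ t]
  case summable =>
    exact .of_forall fun t => ((Real.summable_pow_div_factorial _).mul_left _).mul_right _
  case integrable =>
    refine ((integrableOn_exp_mul_sub_cube (‖c‖ * ‖y‖)).const_mul ‖c‖).congr
      (.of_forall fun t => ?_)
    simp only
    rw [tsum_mul_right, tsum_mul_left, sub_eq_add_neg, Real.exp_add, ← mul_assoc, neg_div,
      Real.exp_eq_exp_ℝ, NormedSpace.exp_eq_tsum_div]
  case hasSum =>
    refine .of_forall fun t => ?_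
    rw [sub_eq_add_neg, Complex.exp_add, ← mul_assoc, ← neg_div]
    refine ((?_ : HasSum _ _).mul_left c).mul_right _
    rw [Complex.exp_eq_exp_ℂ]
    exact NormedSpace.expSeries_div_hasSum_exp _

lemma hasSum_airyRay_sub (y : ℂ) :
    HasSum (fun n : ℕ => airyCoeff n * y ^ n)
      ((airyRay (-ωc ^ 2) y - airyRay (-ωc) y) / (2 * π * I)) := by
  refine (((hasSum_airyRay (-ωc ^ 2) y).sub (hasSum_airyRay (-ωc) y)).div_const
    (2 * π * I)).congr_fun fun n => ?_
  rw [airyCoeff_eq]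
  simp only [neg_mul, neg_neg, mul_pow]
  ring

lemma hasSum_Ai (y : ℂ) : HasSum (fun n : ℕ => airyCoeff n * y ^ n) (Ai y) :=
  (hasSum_airyRay_sub y).summable.hasSum

lemma Ai_eq_airyRay_sub (y : ℂ) :
    Ai y = (airyRay (-ωc ^ 2) y - airyRay (-ωc) y) / (2 * π * I) :=
  (hasSum_Ai y).unique (hasSum_airyRay_sub y)

lemma differentiable_Ai : Differentiable ℂ Ai := by
  intro z
  have h_summable : Summable fun n : ℕ => ‖airyCoeff n * ((‖z‖ + 1 : ℝ) : ℂ) ^ n‖ :=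
    (hasSum_Ai _).summable.norm
  have h_ball : DifferentiableOn ℂ Ai (Metric.ball 0 (‖z‖ + 1)) := by
    refine Complex.differentiableOn_tsum_of_summable_norm h_summable (fun n => by fun_prop)
      Metric.isOpen_ball fun n w hw => ?_
    have hw' : ‖w‖ < ‖z‖ + 1 := mem_ball_zero_iff.1 hw
    rw [norm_mul, norm_mul, norm_pow, norm_pow, Complex.norm_real,
      Real.norm_of_nonneg (by positivity)]
    gcongr
  exact h_ball.differentiableAt (Metric.isOpen_ball.mem_nhds (by simp))

lemma Ai_zero : Ai 0 = airyCoeff 0 := by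
  refine (hasSum_Ai 0).unique ?_
  simpa using hasSum_single (f := fun n => airyCoeff n * (0 : ℂ) ^ n) 0 fun n hn => by simp [hn]

lemma hasDerivAt_Ai_zero : HasDerivAt Ai (airyCoeff 1) 0 := by
  have h : HasFPowerSeriesAt Ai (FormalMultilinearSeries.ofScalars ℂ airyCoeff) 0 := by
    rw [hasFPowerSeriesAt_iff]
    exact .of_forall fun y => by simpa [mul_comm] using hasSum_Ai y
  simpa using h.hasDerivAt

/-- Only the Taylor coefficients of index `≡ 2 (mod 3)` survive the sum over the three rotations,
and these vanish. -/
lemma Ai_connection (y : ℂ) : Ai y + ωc * Ai (ωc * y) + ωc ^ 2 * Ai (ωc ^ 2 * y) = 0 := by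
  refine (((hasSum_Ai y).add ((hasSum_Ai (ωc * y)).mul_left ωc)).add
    ((hasSum_Ai (ωc ^ 2 * y)).mul_left (ωc ^ 2))).unique (hasSum_zero.congr_fun fun n => ?_)
  have hω (k : ℕ) : ωc ^ (3 * k) = 1 := by rw [pow_mul, ωc_cube, one_pow]
  have h_sum := ωc_sq_add_self_add_one
  obtain ⟨k, rfl | rfl | rfl⟩ : ∃ k, n = 3 * k ∨ n = 3 * k + 1 ∨ n = 3 * k + 2 := ⟨n / 3, by omega⟩
  · rw [mul_pow, mul_pow, pow_right_comm ωc, hω]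
    linear_combination airyCoeff (3 * k) * y ^ (3 * k) * h_sum
  · rw [mul_pow, mul_pow, pow_right_comm ωc, pow_succ ωc (3 * k), hω]
    linear_combination airyCoeff (3 * k + 1) * y ^ (3 * k + 1) * (h_sum + ωc * ωc_cube)
  · simp [airyCoeff_three_mul_add_two]

lemma conj_Ai (y : ℂ) : starRingEnd ℂ (Ai y) = Ai (starRingEnd ℂ y) :=
  ((hasSum_Ai y).map (starRingEnd ℂ) Complex.continuous_conj).unique
    ((hasSum_Ai (starRingEnd ℂ y)).congr_fun fun n => by simp [conj_airyCoeff])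

/-! ### Asymptotics of the Airy function -/

section ContourShift

variable {P : ℂ → ℂ} {y : ℂ} (hP : ∀ s, HasDerivAt P (Complex.exp (s ^ 3 / 3 - y * s)) s)

include hP

lemma tendsto_primitive_airyRay {c : ℂ} (hc : c ^ 3 = -1) :
    Tendsto (fun T : ℝ => P (c * T)) atTop (𝓝 (P 0 + airyRay c y)) := by
  have hd (t : ℝ) : HasDerivAt (fun t : ℝ => P (c * t))
      (c * Complex.exp (-(c * t * y) - (t : ℂ) ^ 3 / 3)) t := by
    have h_ray : HasDerivAt (fun t : ℝ => c * (t : ℂ)) c t := by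
      simpa using (Complex.ofRealCLM.hasDerivAt (x := t)).const_mul c
    refine ((hP (c * t)).comp t h_ray).congr_deriv ?_
    rw [mul_comm _ c]
    congr 2
    linear_combination (t : ℂ) ^ 3 / 3 * hc
  refine ((intervalIntegral_tendsto_integral_Ioi 0 (integrableOn_airyRay c y)
    tendsto_id).const_add (P 0)).congr fun T => ?_
  rw [intervalIntegral.integral_eq_sub_of_hasDerivAt (fun t _ => hd t)
    (by apply Continuous.intervalIntegrable; fun_prop)]
  simp

lemma norm_primitive_sub_le {b Y : ℝ} (hb : 0 ≤ b) (hY : √3 * b ≤ |Y|) :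
    ‖P ((|Y| / √3 : ℝ) + Y * I) - P (b + Y * I)‖ ≤
      Real.exp (-(8 / 9) * b * Y ^ 2 + 2 * ‖y‖ * |Y|) * |Y| := by
  have h3 : (0 : ℝ) < √3 := by positivity
  have h_le : |Y| / √3 ≤ |Y| := div_le_self (abs_nonneg _) (Real.one_le_sqrt.2 (by norm_num))
  have hbY : b ≤ |Y| / √3 := by rwa [le_div_iff₀ h3, mul_comm]
  have hd (x : ℝ) : HasDerivAt (fun x : ℝ => P (x + Y * I))
      (Complex.exp ((x + Y * I) ^ 3 / 3 - y * (x + Y * I))) x := by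
    have h_line : HasDerivAt (fun t : ℝ => (t : ℂ) + Y * I) 1 x := by
      simpa using (Complex.ofRealCLM.hasDerivAt (x := x)).add_const (Y * I)
    exact ((hP (x + Y * I)).comp x h_line).congr_deriv (mul_one _)
  refine (norm_image_sub_le_of_norm_deriv_le_segment' (a := b) (b := |Y| / √3)
    (C := Real.exp (-(8 / 9) * b * Y ^ 2 + 2 * ‖y‖ * |Y|))
    (fun x _ => (hd x).hasDerivWithinAt) (fun x hx => ?_) (|Y| / √3) ⟨hbY, le_rfl⟩).trans ?_
  · have hx_le : x ≤ |Y| := hx.2.le.trans h_le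
    have hx_sq : 3 * x ^ 2 ≤ Y ^ 2 := by
      have := pow_le_pow_left₀ (by nlinarith [hx.1]) ((le_div_iff₀ h3).1 hx.2.le) 2
      rw [mul_pow, Real.sq_sqrt (by norm_num), sq_abs] at this
      linarith
    have h_cube : (((x : ℂ) + Y * I) ^ 3 / 3).re = x ^ 3 / 3 - x * Y ^ 2 := by
      rw [show ((x : ℂ) + Y * I) ^ 3 / 3 = ((x ^ 3 / 3 - x * Y ^ 2 : ℝ) : ℂ) +
        ((x ^ 2 * Y - Y ^ 3 / 3 : ℝ) : ℂ) * I by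
          push_cast
          linear_combination ((x : ℂ) * Y ^ 2 + Y ^ 3 / 3 * I) * Complex.I_sq]
      rw [Complex.add_re, Complex.re_ofReal_mul, Complex.ofReal_re, Complex.I_re, mul_zero,
        add_zero]
    have h_lin : -(y * (x + Y * I)).re ≤ 2 * ‖y‖ * |Y| := by
      refine (neg_le_abs _).trans ((Complex.abs_re_le_norm _).trans ?_)
      have : ‖(x : ℂ) + Y * I‖ ≤ |x| + |Y| := by simpa using norm_add_le (x : ℂ) (Y * I)
      rw [abs_of_nonneg (hb.trans hx.1)] at this
      rw [norm_mul]
      nlinarith [mul_le_mul_of_nonneg_left (this.trans (add_le_add_left hx_le _)) (norm_nonneg y)]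
    rw [Complex.norm_exp, Real.exp_le_exp, Complex.sub_re, h_cube]
    nlinarith [mul_le_mul_of_nonneg_right hx.1 (sq_nonneg Y),
      mul_le_mul_of_nonneg_left hx_sq (hb.trans hx.1)]
  · gcongr
    linarith

omit hP in
lemma tendsto_exp_neg_sq_add_mul_abs (a B : ℝ) (ha : 0 < a) :
    Tendsto (fun Y : ℝ => Real.exp (-a * Y ^ 2 + B * |Y|) * |Y|) (cocompact ℝ) (𝓝 0) := by
  have h_atTop : Tendsto (fun Y : ℝ => Real.exp (-a * Y ^ 2 + B * Y) * Y) atTop (𝓝 0) := by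
    have h0 : Tendsto (fun Y : ℝ => Y ^ 1 * Real.exp (-Y)) atTop (𝓝 0) :=
      Real.tendsto_pow_mul_exp_neg_atTop_nhds_zero 1
    refine squeeze_zero' ?_ ?_ h0
    · filter_upwards [eventually_ge_atTop 0] with Y hY
      positivity
    · filter_upwards [eventually_ge_atTop 0, eventually_ge_atTop ((B + 1) / a)] with Y h1 h2
      rw [div_le_iff₀ ha] at h2
      rw [mul_comm, pow_one]
      gcongr
      nlinarith
  simpa [Function.comp_def] using h_atTop.comp (tendsto_norm_cocompact_atTop (E := ℝ))

lemma tendsto_primitive_sub_cocompact {b : ℝ} (hb : 0 < b) :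
    Tendsto (fun Y : ℝ => P ((|Y| / √3 : ℝ) + Y * I) - P (b + Y * I)) (cocompact ℝ) (𝓝 0) := by
  refine squeeze_zero_norm' ?_
    (tendsto_exp_neg_sq_add_mul_abs (8 / 9 * b) (2 * ‖y‖) (by positivity))
  filter_upwards [(tendsto_norm_cocompact_atTop (E := ℝ)).eventually_ge_atTop (√3 * b)] with Y hY
  simpa only [neg_mul] using norm_primitive_sub_le hP hb.le hY

lemma tendsto_primitive_vertical_atTop {b : ℝ} (hb : 0 < b) :
    Tendsto (fun Y : ℝ => P (b + Y * I)) atTop (𝓝 (P 0 + airyRay (-ωc ^ 2) y)) := by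
  have h_ray := (tendsto_primitive_airyRay hP (c := -ωc ^ 2)
    (by linear_combination -(ωc ^ 3 + 1) * ωc_cube)).comp
    (tendsto_id.const_mul_atTop (show 0 < 2 / √3 by positivity))
  have h := h_ray.sub ((tendsto_primitive_sub_cocompact hP hb).mono_left atTop_le_cocompact)
  rw [sub_zero] at h
  refine h.congr' ?_
  filter_upwards [eventually_ge_atTop 0] with Y hY
  have h_pt : -ωc ^ 2 * ((2 / √3 * Y : ℝ) : ℂ) = (|Y| / √3 : ℝ) + Y * I := by
    rw [abs_of_nonneg hY, ωc_sq_eq]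
    push_cast
    field_simp
    ring
  simp only [Function.comp_apply, id, h_pt, sub_sub_cancel]

lemma tendsto_primitive_vertical_atBot {b : ℝ} (hb : 0 < b) :
    Tendsto (fun Y : ℝ => P (b + Y * I)) atBot (𝓝 (P 0 + airyRay (-ωc) y)) := by
  have h_ray := (tendsto_primitive_airyRay hP (c := -ωc)
    (by linear_combination -ωc_cube)).comp
    (tendsto_id.const_mul_atBot_of_neg (show -(2 / √3) < 0 by simp))
  have h := h_ray.sub ((tendsto_primitive_sub_cocompact hP hb).mono_left atBot_le_cocompact)
  rw [sub_zero] at h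
  refine h.congr' ?_
  filter_upwards [eventually_le_atBot 0] with Y hY
  have h_pt : -ωc * ((-(2 / √3) * Y : ℝ) : ℂ) = (|Y| / √3 : ℝ) + Y * I := by
    rw [abs_of_nonpos hY, ωc_eq]
    push_cast
    field_simp
  simp only [Function.comp_apply, id, h_pt, sub_sub_cancel]

end ContourShift

lemma norm_exp_neg_mul_sq_sub_cube (w : ℂ) (t : ℝ) :
    ‖Complex.exp (-w * t ^ 2 - I * t ^ 3 / 3)‖ = Real.exp (-w.re * t ^ 2) := by
  rw [← norm_cexp_neg_mul_sq, sub_eq_add_neg, Complex.exp_add, norm_mul,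
    show -(I * (t : ℂ) ^ 3 / 3) = ((-t ^ 3 / 3 : ℝ) : ℂ) * I by push_cast; ring,
    Complex.norm_exp_ofReal_mul_I, mul_one]

lemma integrable_exp_neg_mul_sq_sub_cube {w : ℂ} (hw : 0 < w.re) :
    Integrable fun t : ℝ => Complex.exp (-w * t ^ 2 - I * t ^ 3 / 3) :=
  (integrable_exp_neg_mul_sq hw).mono' (by fun_prop)
    (.of_forall fun t => (norm_exp_neg_mul_sq_sub_cube w t).le)

/-- The two rays through the cube roots of `-1` are joined at infinity to the vertical line through
the saddle point `q` of `s³ / 3 - q² s`. -/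
lemma Ai_sq_eq_integral {q : ℂ} (hq : 0 < q.re) :
    Ai (q ^ 2) = Complex.exp (-(2 * q ^ 3 / 3)) / (2 * π) *
      ∫ t : ℝ, Complex.exp (-q * t ^ 2 - I * t ^ 3 / 3) := by
  have h_entire : Differentiable ℂ fun s : ℂ => Complex.exp (s ^ 3 / 3 - q ^ 2 * s) := by fun_prop
  obtain ⟨P, hP⟩ := h_entire.isExactOn_univ
  replace hP (s : ℂ) : HasDerivAt P (Complex.exp (s ^ 3 / 3 - q ^ 2 * s)) s := hP s trivial
  have hd (t : ℝ) : HasDerivAt (fun t : ℝ => P (q.re + (t + q.im : ℝ) * I))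
      (I * Complex.exp (-(2 * q ^ 3 / 3)) * Complex.exp (-q * t ^ 2 - I * t ^ 3 / 3)) t := by
    have h_line : HasDerivAt (fun t : ℝ => (q.re : ℂ) + (t + q.im : ℝ) * I) I t := by
      simpa using (((Complex.ofRealCLM.hasDerivAt (x := t)).add_const (q.im : ℂ)).mul_const
        I).const_add (q.re : ℂ)
    refine ((hP _).comp t h_line).congr_deriv ?_
    rw [mul_comm, mul_assoc, ← Complex.exp_add,
      show (q.re : ℂ) + (t + q.im : ℝ) * I = q + t * I by
        conv_rhs => rw [← Complex.re_add_im q]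
        push_cast
        ring]
    congr 2
    linear_combination (q * t ^ 2 + t ^ 3 / 3 * I) * Complex.I_sq
  have h_line := integral_of_hasDerivAt_of_tendsto hd
    ((integrable_exp_neg_mul_sq_sub_cube hq).const_mul _)
    ((tendsto_primitive_vertical_atBot hP hq).comp
      (tendsto_atBot_add_const_right _ q.im tendsto_id))
    ((tendsto_primitive_vertical_atTop hP hq).comp
      (tendsto_atTop_add_const_right _ q.im tendsto_id))
  have hπ : (π : ℂ) ≠ 0 := mod_cast Real.pi_ne_zero
  rw [integral_const_mul, add_sub_add_left_eq_sub] at h_line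
  rw [Ai_eq_airyRay_sub, ← h_line]
  field_simp

lemma norm_exp_neg_I_mul_sub_one_add_le (x : ℝ) :
    ‖Complex.exp (-I * x) - 1 + I * x‖ ≤ 3 * x ^ 2 := by
  have h_norm : ‖-I * (x : ℂ)‖ = |x| := by simp
  rcases le_or_gt |x| 1 with hx | hx
  · have := Complex.norm_exp_sub_one_sub_id_le (h_norm.trans_le hx)
    rw [h_norm, sq_abs, show Complex.exp (-I * x) - 1 - -I * x = Complex.exp (-I * x) - 1 + I * x by
      ring] at this
    nlinarith [sq_nonneg x]
  · have h_unit : ‖Complex.exp (-I * x)‖ = 1 := by simp [Complex.norm_exp]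
    calc ‖Complex.exp (-I * x) - 1 + I * x‖ ≤ ‖Complex.exp (-I * x)‖ + ‖(1 : ℂ)‖ + ‖I * (x : ℂ)‖ :=
          (norm_add_le _ _).trans (add_le_add_left (norm_sub_le _ _) _)
      _ = 2 + |x| := by
          rw [h_unit, norm_one, norm_mul, Complex.norm_I, Complex.norm_real, Real.norm_eq_abs]
          ring
      _ ≤ 3 * x ^ 2 := by nlinarith [sq_abs x]

lemma integrable_pow_mul_exp_neg_mul_sq {b : ℝ} (hb : 0 < b) (n : ℕ) :
    Integrable fun t : ℝ => t ^ n * Real.exp (-b * t ^ 2) := by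
  simpa using integrable_rpow_mul_exp_neg_mul_sq hb (s := n)
    (by linarith [n.cast_nonneg (α := ℝ)])

lemma integral_pow_mul_exp_neg_sq_mul_sq {a : ℝ} (ha : 0 < a) (n : ℕ) :
    ∫ t : ℝ, t ^ n * Real.exp (-a ^ 2 * t ^ 2) =
      (∫ t : ℝ, t ^ n * Real.exp (-t ^ 2)) / a ^ (n + 1) := by
  have h := Measure.integral_comp_mul_left (fun t : ℝ => t ^ n * Real.exp (-t ^ 2)) a
  simp only [mul_pow, mul_assoc, integral_const_mul, ← neg_mul, smul_eq_mul] at h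
  rw [abs_of_pos (inv_pos.2 ha)] at h
  rw [eq_div_iff (by positivity), mul_comm, pow_succ' a n, mul_assoc, h]
  field_simp

lemma integral_gaussian_sq {σ : ℂ} (hσ : 0 < σ.re) (hσ2 : 0 < (σ ^ 2).re) :
    ∫ t : ℝ, Complex.exp (-σ ^ 2 * t ^ 2) = √π / σ := by
  have h_re : 0 < ((√π : ℝ) / σ : ℂ).re := by
    have : 0 < Complex.normSq σ := Complex.normSq_pos.2 (by rintro rfl; simp at hσ)
    rw [div_eq_mul_inv, Complex.re_ofReal_mul, Complex.inv_re]
    positivity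
  rw [integral_gaussian_complex hσ2, ← Complex.sq_cpow_two_inv h_re, div_pow,
    ← Complex.ofReal_pow, Real.sq_sqrt pi_pos.le, one_div]

lemma integral_cube_mul_exp_neg_mul_sq_eq_zero (w : ℂ) :
    ∫ t : ℝ, I * t ^ 3 / 3 * Complex.exp (-w * t ^ 2) = 0 := by
  have h := integral_neg_eq_self (fun t : ℝ => I * t ^ 3 / 3 * Complex.exp (-w * t ^ 2)) volume
  have h_odd (t : ℝ) : I * ((-t : ℝ) : ℂ) ^ 3 / 3 * Complex.exp (-w * ((-t : ℝ) : ℂ) ^ 2) =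
      -(I * t ^ 3 / 3 * Complex.exp (-w * t ^ 2)) := by
    push_cast
    rw [neg_sq]
    ring
  simp only [h_odd, integral_neg] at h
  exact self_eq_neg.1 h.symm

/-- The cubic term of the phase is odd, so it contributes only at second order. -/
lemma norm_integral_exp_sub_cube_sub_gaussian_le {w : ℂ} (hw : 0 < w.re) :
    ‖(∫ t : ℝ, Complex.exp (-w * t ^ 2 - I * t ^ 3 / 3)) - ∫ t : ℝ, Complex.exp (-w * t ^ 2)‖ ≤
      ∫ t : ℝ, t ^ 6 * Real.exp (-w.re * t ^ 2) := by
  have h_int := integrable_exp_neg_mul_sq_sub_cube hw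
  have h_gauss := integrable_cexp_neg_mul_sq hw
  have h_cube : Integrable fun t : ℝ => I * t ^ 3 / 3 * Complex.exp (-w * t ^ 2) := by
    refine (integrable_pow_mul_exp_neg_mul_sq hw 3).norm.mono' (by fun_prop)
      (.of_forall fun t => ?_)
    rw [norm_mul, norm_cexp_neg_mul_sq, norm_mul, Real.norm_of_nonneg (Real.exp_pos _).le, norm_div,
      norm_mul, Complex.norm_I, one_mul, ← Complex.ofReal_pow, Complex.norm_real]
    gcongr
    exact div_le_self (by positivity) (by norm_num)
  have h_split : (∫ t : ℝ, Complex.exp (-w * t ^ 2 - I * t ^ 3 / 3)) -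
      ∫ t : ℝ, Complex.exp (-w * t ^ 2) = ∫ t : ℝ, Complex.exp (-w * t ^ 2) *
        (Complex.exp (-I * ((t ^ 3 / 3 : ℝ) : ℂ)) - 1 + I * ((t ^ 3 / 3 : ℝ) : ℂ)) := by
    rw [← add_zero (_ - _), ← integral_cube_mul_exp_neg_mul_sq_eq_zero w,
      ← integral_sub' h_int h_gauss, ← integral_add' (h_int.sub h_gauss) h_cube]
    refine integral_congr_ae (.of_forall fun t => ?_)
    simp only [Pi.add_apply, Pi.sub_apply]
    rw [sub_eq_add_neg (-w * (t : ℂ) ^ 2), Complex.exp_add,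
      show -(I * (t : ℂ) ^ 3 / 3) = -I * ((t ^ 3 / 3 : ℝ) : ℂ) by push_cast; ring]
    push_cast
    ring
  rw [h_split]
  refine norm_integral_le_of_norm_le (integrable_pow_mul_exp_neg_mul_sq hw 6)
    (.of_forall fun t => ?_)
  rw [norm_mul, norm_cexp_neg_mul_sq, mul_comm]
  gcongr
  refine (norm_exp_neg_I_mul_sub_one_add_le (t ^ 3 / 3)).trans ?_
  nlinarith [sq_nonneg (t ^ 3)]

lemma exists_Ai_asymptotic : ∃ C : ℝ, 0 < C ∧ ∀ σ : ℂ, 0 < σ.re → ‖σ‖ ^ 2 / 4 ≤ (σ ^ 2).re →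
    ‖Ai (σ ^ 4) * (2 * (√π : ℝ) * σ * Complex.exp (2 * σ ^ 6 / 3)) - 1‖ ≤ C / ‖σ‖ ^ 6 := by
  set M : ℝ := ∫ t : ℝ, t ^ 6 * Real.exp (-t ^ 2)
  have hM : 0 ≤ M := integral_nonneg fun t => by positivity
  refine ⟨128 * (M + 1), mul_pos (by norm_num) (by linarith [hM]), fun σ hσ hσ2 => ?_⟩
  have hσ0 : σ ≠ 0 := by rintro rfl; simp at hσ
  have hn : 0 < ‖σ‖ := norm_pos_iff.2 hσ0
  have hre : 0 < (σ ^ 2).re := lt_of_lt_of_le (by positivity) hσ2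
  set J := ∫ t : ℝ, Complex.exp (-σ ^ 2 * t ^ 2 - I * t ^ 3 / 3) with hJ
  have h_laplace : ‖J - √π / σ‖ ≤ M / (‖σ‖ / 2) ^ 7 := by
    rw [← integral_gaussian_sq hσ hre, ← integral_pow_mul_exp_neg_sq_mul_sq (by positivity)]
    refine (norm_integral_exp_sub_cube_sub_gaussian_le hre).trans (integral_mono
      (integrable_pow_mul_exp_neg_mul_sq hre 6)
      (integrable_pow_mul_exp_neg_mul_sq (by positivity) 6) fun t => ?_)
    simp only
    gcongr
    linarith [show (‖σ‖ / 2) ^ 2 = ‖σ‖ ^ 2 / 4 by ring]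
  have h_eq : Ai (σ ^ 4) * (2 * (√π : ℝ) * σ * Complex.exp (2 * σ ^ 6 / 3)) - 1 =
      σ / (√π : ℝ) * (J - √π / σ) := by
    have hsπ : ((√π : ℝ) : ℂ) ≠ 0 := mod_cast (Real.sqrt_pos.2 pi_pos).ne'
    have hπ : (π : ℂ) = ((√π : ℝ) : ℂ) ^ 2 := by rw [← Complex.ofReal_pow, Real.sq_sqrt pi_pos.le]
    have h_exp := Complex.exp_ne_zero (2 * σ ^ 6 / 3)
    rw [show σ ^ 4 = (σ ^ 2) ^ 2 by ring, Ai_sq_eq_integral hre,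
      show (σ ^ 2) ^ 3 = σ ^ 6 by ring, Complex.exp_neg, hπ, ← hJ]
    field_simp
  have hsπ : 1 ≤ √π := Real.one_le_sqrt.2 (by linarith [Real.pi_gt_three])
  rw [h_eq, norm_mul, norm_div, Complex.norm_real, Real.norm_of_nonneg (Real.sqrt_nonneg _)]
  calc ‖σ‖ / √π * ‖J - √π / σ‖ ≤ ‖σ‖ * (M / (‖σ‖ / 2) ^ 7) := by
        gcongr
        exact div_le_self hn.le hsπ
    _ = 128 * M / ‖σ‖ ^ 6 := by field_simp; ring
    _ ≤ 128 * (M + 1) / ‖σ‖ ^ 6 := by gcongr; linarith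

/-! ### Airy asymptotics in the variables of the determinant -/

lemma I_mul_ωc_sq : I * ωc ^ 2 = Complex.exp (-(π : ℂ) * I / 6) := by
  rw [ωc, ← Complex.exp_nat_mul]
  nth_rw 1 [← Complex.exp_pi_div_two_mul_I]
  rw [← Complex.exp_add, ← Complex.exp_periodic (-(π : ℂ) * I / 6)]
  congr 1
  push_cast
  ring

lemma Wf_eq (f : ℝ) : Wf f = ((f ^ ((1 : ℝ) / 3) : ℝ) : ℂ) * (I * ωc ^ 2) / (2 * π) := by
  rw [Wf, I_mul_ωc_sq]

lemma Wf_ne_zero {f : ℝ} (hf : 0 < f) : Wf f ≠ 0 := by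
  have h_rpow : ((f ^ ((1 : ℝ) / 3) : ℝ) : ℂ) ≠ 0 := mod_cast (Real.rpow_pos_of_pos hf _).ne'
  exact div_ne_zero (mul_ne_zero h_rpow (Complex.exp_ne_zero _))
    (mul_ne_zero two_ne_zero (mod_cast Real.pi_ne_zero))

lemma complex_sqrt_sq (w : ℂ) : w.sqrt ^ 2 = w := Complex.cpow_ofNat_inv_pow w 2

lemma abs_im_sqrt_lt_re_sqrt {w : ℂ} (hw : 0 < w.re) : |w.sqrt.im| < w.sqrt.re := by
  have h_re : 0 ≤ w.sqrt.re := by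
    rw [Complex.sqrt, Complex.cpow_inv_two_re]
    positivity
  rw [← complex_sqrt_sq w, sq, Complex.mul_re] at hw
  exact abs_lt_of_sq_lt_sq (by linarith) h_re

lemma re_sqrt_pos {w : ℂ} (hw : 0 < w.re) : 0 < w.sqrt.re :=
  (abs_nonneg _).trans_lt (abs_im_sqrt_lt_re_sqrt hw)

lemma complex_sqrt_mul_sqrt {w₁ w₂ c : ℂ} (h₁ : 0 < w₁.re) (h₂ : 0 < w₂.re) (hc : 0 < c.re)
    (h : w₁ * w₂ = c ^ 2) : w₁.sqrt * w₂.sqrt = c := by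
  have h_sq : (w₁.sqrt * w₂.sqrt) ^ 2 = c ^ 2 := by
    rw [mul_pow, complex_sqrt_sq, complex_sqrt_sq, h]
  refine (sq_eq_sq_iff_eq_or_eq_neg.1 h_sq).resolve_right fun h_neg => ?_
  have h_re : 0 < (w₁.sqrt * w₂.sqrt).re := by
    have := mul_lt_mul'' (abs_im_sqrt_lt_re_sqrt h₁) (abs_im_sqrt_lt_re_sqrt h₂)
      (abs_nonneg _) (abs_nonneg _)
    rw [← abs_mul] at this
    rw [Complex.mul_re]
    linarith [le_abs_self (w₁.sqrt.im * w₂.sqrt.im)]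
  rw [h_neg, Complex.neg_re] at h_re
  linarith

section SixthRoot

variable {f : ℝ} (hf : 0 < f)
include hf

lemma rpow_neg_sixth_pow_four : (f ^ (-(1 : ℝ) / 6)) ^ 4 = f ^ (-(2 : ℝ) / 3) := by
  rw [← Real.rpow_natCast, ← Real.rpow_mul hf.le]; norm_num

lemma rpow_neg_sixth_pow_six : (f ^ (-(1 : ℝ) / 6)) ^ 6 = f⁻¹ := by
  rw [← Real.rpow_natCast, ← Real.rpow_mul hf.le, ← Real.rpow_neg_one]; norm_num

lemma rpow_third_mul_rpow_neg_sixth_sq : f ^ ((1 : ℝ) / 3) * (f ^ (-(1 : ℝ) / 6)) ^ 2 = 1 := by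
  rw [← Real.rpow_natCast, ← Real.rpow_mul hf.le, ← Real.rpow_add hf]; norm_num

end SixthRoot

/-- The quotient of `Ai (w² f^{-2/3})` by the leading term of its asymptotic expansion in the
right half-plane `Re w > 0`, where `w.sqrt` is the principal square root. -/
noncomputable def airyRatio (f : ℝ) (w : ℂ) : ℂ :=
  Ai (w ^ 2 * ((f ^ (-(2 : ℝ) / 3) : ℝ) : ℂ)) *
    (2 * (√π : ℝ) * (w.sqrt * ((f ^ (-(1 : ℝ) / 6) : ℝ) : ℂ)) * Complex.exp (2 * w ^ 3 / (3 * f)))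

lemma exists_norm_airyRatio_sub_one_le : ∃ C : ℝ, 0 < C ∧ ∀ (f : ℝ) (w : ℂ), 0 < f → 0 < w.re →
    ‖w‖ / 4 ≤ w.re → ‖airyRatio f w - 1‖ ≤ C * (f / ‖w‖ ^ 3) := by
  obtain ⟨C, hC, hAi⟩ := exists_Ai_asymptotic
  refine ⟨C, hC, fun f w hf hw hw4 => ?_⟩
  set h : ℝ := f ^ (-(1 : ℝ) / 6)
  have h_pos : 0 < h := Real.rpow_pos_of_pos hf _
  set σ : ℂ := w.sqrt * h
  have h_norm : ‖σ‖ ^ 2 = ‖w‖ * h ^ 2 := by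
    rw [norm_mul, Complex.norm_real, Real.norm_of_nonneg h_pos.le, mul_pow, ← norm_pow,
      complex_sqrt_sq]
  have hσ2 : σ ^ 2 = w * (h ^ 2 : ℝ) := by rw [mul_pow, complex_sqrt_sq, Complex.ofReal_pow]
  have hσ4 : σ ^ 4 = w ^ 2 * ((f ^ (-(2 : ℝ) / 3) : ℝ) : ℂ) := by
    rw [← rpow_neg_sixth_pow_four hf, pow_mul σ 2 2, hσ2]
    push_cast
    ring
  have hσ6 : σ ^ 6 = w ^ 3 / f := by
    rw [div_eq_mul_inv, ← Complex.ofReal_inv, ← rpow_neg_sixth_pow_six hf, pow_mul σ 2 3, hσ2]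
    push_cast
    ring
  have hσ6_norm : ‖σ‖ ^ 6 = ‖w‖ ^ 3 / f := by
    rw [div_eq_mul_inv, ← rpow_neg_sixth_pow_six hf, pow_mul ‖σ‖ 2 3, h_norm]
    ring
  have hσ_re : 0 < σ.re := by
    rw [Complex.re_mul_ofReal]
    exact mul_pos (re_sqrt_pos hw) h_pos
  have hσ2_re : ‖σ‖ ^ 2 / 4 ≤ (σ ^ 2).re := by
    rw [h_norm, hσ2, Complex.re_mul_ofReal, mul_div_right_comm]
    gcongr
  have h_asymp := hAi σ hσ_re hσ2_re
  rw [hσ6_norm, hσ4, hσ6] at h_asymp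
  convert h_asymp using 1
  · rw [airyRatio]
    congr 5
    field_simp
  · field_simp

lemma airyRatio_mul_airyRatio {f : ℝ} (hf : 0 < f) {w₁ w₂ c : ℂ} (h₁ : 0 < w₁.re)
    (h₂ : 0 < w₂.re) (hc : 0 < c.re) (h : w₁ * w₂ = c ^ 2) :
    airyRatio f w₁ * airyRatio f w₂ =
      Ai (w₁ ^ 2 * ((f ^ (-(2 : ℝ) / 3) : ℝ) : ℂ)) * Ai (w₂ ^ 2 * ((f ^ (-(2 : ℝ) / 3) : ℝ) : ℂ)) /
        Wf f * (2 * c) * (I * ωc ^ 2) * Complex.exp (2 * (w₁ ^ 3 + w₂ ^ 3) / (3 * f)) := by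
  have h_pi : ((√π : ℝ) : ℂ) ^ 2 = π := mod_cast Real.sq_sqrt pi_pos.le
  have h_root : ((f ^ ((1 : ℝ) / 3) : ℝ) : ℂ) * ((f ^ (-(1 : ℝ) / 6) : ℝ) : ℂ) ^ 2 = 1 :=
    mod_cast rpow_third_mul_rpow_neg_sixth_sq hf
  have h_W : 2 * ((√π : ℝ) : ℂ) ^ 2 * ((f ^ (-(1 : ℝ) / 6) : ℝ) : ℂ) ^ 2 * Wf f = I * ωc ^ 2 := by
    have hπ : (π : ℂ) ≠ 0 := mod_cast pi_ne_zero
    rw [Wf_eq, h_pi]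
    generalize ((f ^ ((1 : ℝ) / 3) : ℝ) : ℂ) = x at h_root ⊢
    generalize ((f ^ (-(1 : ℝ) / 6) : ℝ) : ℂ) = h at h_root ⊢
    field_simp
    linear_combination ωc ^ 2 * h_root
  rw [airyRatio, airyRatio, mul_add, add_div, Complex.exp_add, ← complex_sqrt_mul_sqrt h₁ h₂ hc h,
    ← h_W]
  have hW := Wf_ne_zero hf
  generalize ((f ^ (-(1 : ℝ) / 6) : ℝ) : ℂ) = h
  field_simp

/-- The Airy factor `Ai (-ζ f^{-2/3})` of the resolvent kernel. -/
noncomputable def airyU (f : ℝ) (ζ : ℂ) : ℂ := Ai (-ζ * ((f ^ (-(2 : ℝ) / 3) : ℝ) : ℂ))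

/-- The Airy factor `Ai (-ωζ f^{-2/3})` of the resolvent kernel. -/
noncomputable def airyV (f : ℝ) (ζ : ℂ) : ℂ := Ai (-ωc * ζ * ((f ^ (-(2 : ℝ) / 3) : ℝ) : ℂ))

/-- The normalized square `Ai (-ζ f^{-2/3})² / W`. -/
noncomputable def airyUU (f : ℝ) (ζ : ℂ) : ℂ := airyU f ζ ^ 2 / Wf f

/-- The normalized product `Ai (-ζ f^{-2/3}) Ai (-ωζ f^{-2/3}) / W`. -/
noncomputable def airyUV (f : ℝ) (ζ : ℂ) : ℂ := airyU f ζ * airyV f ζ / Wf f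

/-- The normalized square `Ai (-ωζ f^{-2/3})² / W`. -/
noncomputable def airyVV (f : ℝ) (ζ : ℂ) : ℂ := airyV f ζ ^ 2 / Wf f

/-- The oscillating factor `e^{4ik³/(3f) + 2itk}`, the leading behaviour of `e^{4ip³/(3f)}` for
`p² = k² + tf`. -/
noncomputable def airyPhase (f t : ℝ) (k : ℂ) : ℂ :=
  Complex.exp (4 * I * k ^ 3 / (3 * f) + 2 * I * t * k)

/-- The quotient of `airyUV f (k² + tf)` by its leading behaviour `i/(2k)`. -/
noncomputable def relUV (f t : ℝ) (k : ℂ) : ℂ := airyUV f (k ^ 2 + t * f) * (2 * k) / I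

/-- The quotient of `airyUU f (k² + tf)` by its leading behaviour. -/
noncomputable def relUU (f t : ℝ) (k : ℂ) : ℂ :=
  airyUU f (k ^ 2 + t * f) * (2 * k) * airyPhase f t k / ωc

/-- The quotient of `airyVV f (k² + tf)` by its leading behaviour. -/
noncomputable def relVV (f t : ℝ) (k : ℂ) : ℂ :=
  airyVV f (k ^ 2 + t * f) * (2 * k) / (-ωc ^ 2 * airyPhase f t k)

lemma airyPhase_zero (f : ℝ) (k : ℂ) : airyPhase f 0 k = Complex.exp (4 * I * k ^ 3 / (3 * f)) := by
  rw [airyPhase, Complex.ofReal_zero, mul_zero, zero_mul, add_zero]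

lemma ωc_pow_four : ωc ^ 4 = ωc := by linear_combination ωc * ωc_cube

lemma re_I_mul_ωc_sq_mul (k : ℂ) : (I * ωc ^ 2 * k).re = √3 / 2 * k.re + k.im / 2 := by
  rw [ωc_sq_eq]
  simp
  ring

lemma re_neg_ωc_mul (k : ℂ) : (-ωc * k).re = k.re / 2 + √3 / 2 * k.im := by
  rw [ωc_eq]
  simp
  ring

lemma re_neg_I_mul_ωc_mul (k : ℂ) : (-I * ωc * k).re = √3 / 2 * k.re - k.im / 2 := by
  rw [ωc_eq]
  simp
  ring

lemma I_mul_ωc_sq_mul_sq (k : ℂ) : (I * ωc ^ 2 * k) ^ 2 = -ωc * k ^ 2 := by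
  linear_combination ωc ^ 4 * k ^ 2 * Complex.I_sq - k ^ 2 * ωc_pow_four

lemma I_mul_ωc_sq_mul_cube (k : ℂ) : (I * ωc ^ 2 * k) ^ 3 = -I * k ^ 3 := by
  linear_combination I * ωc ^ 6 * k ^ 3 * Complex.I_sq - I * k ^ 3 * (ωc ^ 3 + 1) * ωc_cube

lemma neg_I_mul_sq (k : ℂ) : (-I * k) ^ 2 = -k ^ 2 := by
  linear_combination k ^ 2 * Complex.I_sq

lemma neg_I_mul_cube (k : ℂ) : (-I * k) ^ 3 = I * k ^ 3 := by
  linear_combination -I * k ^ 3 * Complex.I_sq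

lemma neg_I_mul_ωc_mul_sq (k : ℂ) : (-I * ωc * k) ^ 2 = ωc ^ 2 * -k ^ 2 := by
  linear_combination ωc ^ 2 * k ^ 2 * Complex.I_sq

lemma neg_I_mul_ωc_mul_cube (k : ℂ) : (-I * ωc * k) ^ 3 = I * k ^ 3 := by
  linear_combination -I * ωc ^ 3 * k ^ 3 * Complex.I_sq + I * k ^ 3 * ωc_cube

section Factorization

variable {f : ℝ} (hf : 0 < f) {k : ℂ}
include hf

lemma relVV_zero (hk : 0 < (I * ωc ^ 2 * k).re) :
    relVV f 0 k = airyRatio f (I * ωc ^ 2 * k) ^ 2 := by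
  have hW := Wf_ne_zero hf
  have hω := ωc_ne_zero
  rw [sq, airyRatio_mul_airyRatio hf hk hk hk (sq _).symm, I_mul_ωc_sq_mul_sq,
    I_mul_ωc_sq_mul_cube, relVV, airyVV, airyV, airyPhase_zero,
    show 2 * (-I * k ^ 3 + -I * k ^ 3) / (3 * (f : ℂ)) = -(4 * I * k ^ 3 / (3 * f)) by ring,
    Complex.exp_neg, Complex.ofReal_zero, zero_mul, add_zero]
  generalize Ai _ = v
  field_simp
  linear_combination k * v ^ 2 * (-ωc ^ 6 * Complex.I_sq + (ωc ^ 3 + 1) * ωc_cube)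

lemma relUU_zero_of_im_pos (hk : 0 < k.im) : relUU f 0 k = airyRatio f (-I * k) ^ 2 := by
  have h_re : 0 < (-I * k).re := by simpa
  have hω := ωc_ne_zero
  rw [sq, airyRatio_mul_airyRatio hf h_re h_re h_re (sq _).symm, neg_I_mul_sq,
    neg_I_mul_cube, relUU, airyUU, airyU, airyPhase_zero,
    show 2 * (I * k ^ 3 + I * k ^ 3) / (3 * (f : ℂ)) = 4 * I * k ^ 3 / (3 * f) by ring,
    Complex.ofReal_zero, zero_mul, add_zero]
  generalize Ai _ = u
  field_simp
  linear_combination k * u ^ 2 / Wf f * (ωc ^ 3 * Complex.I_sq - ωc_cube)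

lemma relUV_zero_of_im_pos (hr : 0 ≤ k.re) (hk : 0 < k.im) :
    relUV f 0 k = airyRatio f (-I * k) * airyRatio f (I * ωc ^ 2 * k) := by
  have h₁ : 0 < (-I * k).re := by simpa
  have h₂ : 0 < (I * ωc ^ 2 * k).re := by rw [re_I_mul_ωc_sq_mul]; positivity
  have h₃ : 0 < (-ωc * k).re := by rw [re_neg_ωc_mul]; positivity
  have h_prod : -I * k * (I * ωc ^ 2 * k) = (-ωc * k) ^ 2 := by
    linear_combination -ωc ^ 2 * k ^ 2 * Complex.I_sq
  rw [airyRatio_mul_airyRatio hf h₁ h₂ h₃ h_prod, I_mul_ωc_sq_mul_sq, I_mul_ωc_sq_mul_cube,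
    neg_I_mul_sq, neg_I_mul_cube, relUV, airyUV, airyU, airyV,
    show 2 * (I * k ^ 3 + -I * k ^ 3) / (3 * (f : ℂ)) = 0 by ring, Complex.exp_zero,
    Complex.ofReal_zero, zero_mul, add_zero, Complex.div_I]
  linear_combination 2 * k * I * (Ai (-k ^ 2 * ((f ^ (-(2 : ℝ) / 3) : ℝ) : ℂ)) *
    Ai (-ωc * k ^ 2 * ((f ^ (-(2 : ℝ) / 3) : ℝ) : ℂ)) / Wf f) * ωc_cube

lemma airyRatio_mul_airyRatio_of_re_pos (hr : 0 < k.re) (h₁ : 0 < (-I * ωc * k).re)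
    (h₂ : 0 < (I * ωc ^ 2 * k).re) :
    airyRatio f (-I * ωc * k) * airyRatio f (I * ωc ^ 2 * k) =
      Ai (ωc ^ 2 * -k ^ 2 * ((f ^ (-(2 : ℝ) / 3) : ℝ) : ℂ)) * airyV f (k ^ 2) / Wf f * (2 * k) *
        (I * ωc ^ 2) := by
  have h_prod : -I * ωc * k * (I * ωc ^ 2 * k) = k ^ 2 := by
    linear_combination -ωc ^ 3 * k ^ 2 * Complex.I_sq + k ^ 2 * ωc_cube
  rw [airyRatio_mul_airyRatio hf h₁ h₂ hr h_prod, I_mul_ωc_sq_mul_sq, I_mul_ωc_sq_mul_cube,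
    neg_I_mul_ωc_mul_sq, neg_I_mul_ωc_mul_cube, airyV,
    show 2 * (I * k ^ 3 + -I * k ^ 3) / (3 * (f : ℂ)) = 0 by ring, Complex.exp_zero, mul_one]

lemma airyRatio_sq_of_re_pos (h₁ : 0 < (-I * ωc * k).re) :
    airyRatio f (-I * ωc * k) ^ 2 =
      Ai (ωc ^ 2 * -k ^ 2 * ((f ^ (-(2 : ℝ) / 3) : ℝ) : ℂ)) ^ 2 / Wf f * (2 * k) *
        airyPhase f 0 k := by
  rw [sq, airyRatio_mul_airyRatio hf h₁ h₁ h₁ (sq _).symm, neg_I_mul_ωc_mul_sq,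
    neg_I_mul_ωc_mul_cube, airyPhase_zero,
    show 2 * (I * k ^ 3 + I * k ^ 3) / (3 * (f : ℂ)) = 4 * I * k ^ 3 / (3 * f) by ring]
  generalize Ai _ = w
  linear_combination 2 * k * w ^ 2 / Wf f * Complex.exp (4 * I * k ^ 3 / (3 * f)) *
    (-ωc ^ 3 * Complex.I_sq + ωc_cube)

lemma airyPhase_mul_airyRatio_sq (h₂ : 0 < (I * ωc ^ 2 * k).re) :
    airyPhase f 0 k * airyRatio f (I * ωc ^ 2 * k) ^ 2 =
      -ωc * (airyV f (k ^ 2) ^ 2 / Wf f * (2 * k)) := by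
  have hP : airyPhase f 0 k ≠ 0 := Complex.exp_ne_zero _
  have hω := ωc_ne_zero
  rw [← relVV_zero hf h₂, relVV, airyVV, Complex.ofReal_zero, zero_mul, add_zero]
  generalize airyV f (k ^ 2) ^ 2 / Wf f * (2 * k) = v
  field_simp
  linear_combination v * ωc_cube

omit hf in
lemma airyU_eq (ζ : ℂ) : airyU f ζ =
    -ωc * airyV f ζ - ωc ^ 2 * Ai (ωc ^ 2 * -ζ * ((f ^ (-(2 : ℝ) / 3) : ℝ) : ℂ)) := by
  have h := Ai_connection (-ζ * ((f ^ (-(2 : ℝ) / 3) : ℝ) : ℂ))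
  rw [← mul_assoc, ← mul_assoc, mul_neg, ← neg_mul] at h
  rw [airyU, airyV]
  linear_combination h

-- Near the positive axis `-k² f^{-2/3}` leaves the sector of validity of the Airy asymptotics, and
-- the connection formula expresses `Ai` there through two points of that sector.
lemma relUV_zero_of_re_pos (hr : 0 < k.re) (h₁ : 0 < (-I * ωc * k).re)
    (h₂ : 0 < (I * ωc ^ 2 * k).re) :
    relUV f 0 k = (airyRatio f (-I * ωc * k) - I * airyPhase f 0 k * airyRatio f (I * ωc ^ 2 * k)) *
      airyRatio f (I * ωc ^ 2 * k) := by
  rw [relUV, airyUV, Complex.ofReal_zero, zero_mul, add_zero, airyU_eq, Complex.div_I]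
  linear_combination -airyRatio_mul_airyRatio_of_re_pos hf hr h₁ h₂ +
    I * airyPhase_mul_airyRatio_sq hf h₂

lemma relUU_zero_of_re_pos (hr : 0 < k.re) (h₁ : 0 < (-I * ωc * k).re)
    (h₂ : 0 < (I * ωc ^ 2 * k).re) :
    relUU f 0 k = (airyRatio f (-I * ωc * k) -
      I * airyPhase f 0 k * airyRatio f (I * ωc ^ 2 * k)) ^ 2 := by
  have h_inv : ωc⁻¹ = ωc ^ 2 := inv_eq_of_mul_eq_one_left (by linear_combination ωc_cube)
  rw [relUU, airyUU, Complex.ofReal_zero, zero_mul, add_zero, airyU_eq, div_eq_mul_inv, h_inv]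
  have h_ww := airyRatio_sq_of_re_pos hf h₁
  have h_vw := airyRatio_mul_airyRatio_of_re_pos hf hr h₁ h₂
  have h_vv := airyPhase_mul_airyRatio_sq hf h₂
  set P := airyPhase f 0 k
  set v := airyV f (k ^ 2)
  set w := Ai (ωc ^ 2 * -k ^ 2 * ((f ^ (-(2 : ℝ) / 3) : ℝ) : ℂ))
  linear_combination -h_ww + 2 * I * P * h_vw - I ^ 2 * P * h_vv
    + 2 * k * P / Wf f * ((ωc * v ^ 2 + 2 * ωc ^ 2 * v * w) * (Complex.I_sq + ωc_cube)
      + w ^ 2 * (ωc ^ 3 + 1) * ωc_cube)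

end Factorization

/-- The three Airy products at energy `k² + tf` agree with their leading behaviour up to a relative
error at most `δ`. -/
structure AiryError (f t : ℝ) (k : ℂ) (δ : ℝ) : Prop where
  relUV : ‖relUV f t k - 1‖ ≤ δ
  relUU : ‖relUU f t k - 1‖ ≤ δ
  relVV : ‖relVV f t k - 1‖ ≤ δ

lemma AiryError.mono {f t δ δ' : ℝ} {k : ℂ} (h : AiryError f t k δ) (hδ : δ ≤ δ') :
    AiryError f t k δ' :=
  ⟨h.relUV.trans hδ, h.relUU.trans hδ, h.relVV.trans hδ⟩

lemma norm_mul_sub_one_le {R : Type*} [NormedRing R] {x y : R} {δ ρ : ℝ} (hx : ‖x - 1‖ ≤ δ)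
    (hy : ‖y - 1‖ ≤ ρ) : ‖x * y - 1‖ ≤ δ + ρ + δ * ρ := by
  have hδ : 0 ≤ δ := (norm_nonneg _).trans hx
  calc ‖x * y - 1‖ = ‖(x - 1) + (y - 1) + (x - 1) * (y - 1)‖ := by congr 1; noncomm_ring
    _ ≤ ‖x - 1‖ + ‖y - 1‖ + ‖x - 1‖ * ‖y - 1‖ :=
      norm_add₃_le.trans (by gcongr; exact norm_mul_le _ _)
    _ ≤ δ + ρ + δ * ρ := by gcongr

lemma airyError_of_eq_mul {f t d S : ℝ} {k x y : ℂ} (hA : relUV f t k = x * y)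
    (hU : relUU f t k = x ^ 2) (hV : relVV f t k = y ^ 2) (hy : ‖y - 1‖ ≤ d)
    (hx : ‖x - 1‖ ≤ d + S * (1 + d)) (hd : d ≤ 1) (hS : 0 ≤ S) :
    AiryError f t k (3 * d + 8 * (S + S ^ 2)) := by
  have hd0 : 0 ≤ d := (norm_nonneg _).trans hy
  have hx' : ‖x - 1‖ ≤ d + 2 * S := hx.trans (by nlinarith)
  have hy' : ‖y - 1‖ ≤ d + 2 * S := hy.trans (by linarith)
  have h_le : d + 2 * S + (d + 2 * S) + (d + 2 * S) * (d + 2 * S) ≤ 3 * d + 8 * (S + S ^ 2) := by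
    nlinarith [mul_le_mul_of_nonneg_left hd hS, mul_le_mul_of_nonneg_left hd hd0, sq_nonneg S]
  refine ⟨?_, ?_, ?_⟩
  · exact hA ▸ (norm_mul_sub_one_le hx' hy').trans h_le
  · exact hU ▸ sq x ▸ (norm_mul_sub_one_le hx' hx').trans h_le
  · exact hV ▸ sq y ▸ (norm_mul_sub_one_le hy' hy').trans h_le

lemma norm_le_re_add_im {k : ℂ} (hr : 0 ≤ k.re) (hi : 0 ≤ k.im) : ‖k‖ ≤ k.re + k.im := by
  simpa only [abs_of_nonneg hr, abs_of_nonneg hi] using Complex.norm_le_abs_re_add_abs_im k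

lemma norm_unit_mul_ωc {u : ℂ} (hu : ‖u‖ = 1) (n : ℕ) (k : ℂ) : ‖u * ωc ^ n * k‖ = ‖k‖ := by
  rw [norm_mul, norm_mul, norm_pow, hu, norm_ωc, one_pow, one_mul, one_mul]

lemma norm_div_four_le_re_I_mul_ωc_sq_mul {k : ℂ} (hr : 0 ≤ k.re) (hi : 0 ≤ k.im) :
    ‖k‖ / 4 ≤ (I * ωc ^ 2 * k).re := by
  have h_sqrt : 1 ≤ √3 := Real.one_le_sqrt.2 (by norm_num)
  rw [re_I_mul_ωc_sq_mul]
  nlinarith [norm_le_re_add_im hr hi]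

lemma norm_div_four_le_re_neg_I_mul_ωc_mul {k : ℂ} (hr : 0 ≤ k.re) (hi : 0 ≤ k.im)
    (h : k.im < ‖k‖ / 4) : ‖k‖ / 4 ≤ (-I * ωc * k).re := by
  have h_sqrt : 1.7 ≤ √3 := Real.le_sqrt_of_sq_le (by norm_num)
  rw [re_neg_I_mul_ωc_mul]
  nlinarith [norm_le_re_add_im hr hi]

section ZeroShift

variable {C : ℝ} (h_ratio : ∀ (f : ℝ) (w : ℂ), 0 < f → 0 < w.re → ‖w‖ / 4 ≤ w.re →
  ‖airyRatio f w - 1‖ ≤ C * (f / ‖w‖ ^ 3)) {f : ℝ} {k : ℂ} (hf : 0 < f) (hr : 0 ≤ k.re)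
  (hi : 0 ≤ k.im) (hk : k ≠ 0) (hd : C * (f / ‖k‖ ^ 3) ≤ 1)
include h_ratio hf hr hi hk hd

lemma airyError_zero_of_le_im (h_im : ‖k‖ / 4 ≤ k.im) :
    AiryError f 0 k (3 * (C * (f / ‖k‖ ^ 3))) := by
  have hk0 : 0 < ‖k‖ := norm_pos_iff.2 hk
  have h_im0 : 0 < k.im := (div_pos hk0 zero_lt_four).trans_le h_im
  have hV_re := norm_div_four_le_re_I_mul_ωc_sq_mul hr hi
  have hV := h_ratio f _ hf (by linarith) ((norm_unit_mul_ωc Complex.norm_I 2 k).symm ▸ hV_re)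
  have hU := h_ratio f (-I * k) hf (by simpa) (by simpa)
  rw [norm_unit_mul_ωc Complex.norm_I 2 k] at hV
  rw [norm_mul, norm_neg, Complex.norm_I, one_mul] at hU
  exact (airyError_of_eq_mul (relUV_zero_of_im_pos hf hr h_im0) (relUU_zero_of_im_pos hf h_im0)
    (relVV_zero hf (by linarith)) hV (S := 0) (by linarith) hd le_rfl).mono (by linarith)

lemma airyError_zero_of_im_lt (h_im : k.im < ‖k‖ / 4) :
    AiryError f 0 k (3 * (C * (f / ‖k‖ ^ 3)) +
      8 * (‖airyPhase f 0 k‖ + ‖airyPhase f 0 k‖ ^ 2)) := by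
  have hk0 : 0 < ‖k‖ := norm_pos_iff.2 hk
  have hr0 : 0 < k.re := by linarith [norm_le_re_add_im hr hi]
  have hV_re := norm_div_four_le_re_I_mul_ωc_sq_mul hr hi
  have hW_re := norm_div_four_le_re_neg_I_mul_ωc_mul hr hi h_im
  have hW_norm : ‖-I * ωc * k‖ = ‖k‖ := by simpa using norm_unit_mul_ωc (u := -I) (by simp) 1 k
  have hV := h_ratio f _ hf ((div_pos hk0 zero_lt_four).trans_le hV_re)
    ((norm_unit_mul_ωc Complex.norm_I 2 k).symm ▸ hV_re)
  have hW := h_ratio f _ hf (by linarith) (hW_norm.symm ▸ hW_re)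
  rw [norm_unit_mul_ωc Complex.norm_I 2 k] at hV
  rw [hW_norm] at hW
  have hV' : ‖airyRatio f (I * ωc ^ 2 * k)‖ ≤ 1 + C * (f / ‖k‖ ^ 3) := by
    linarith [norm_le_norm_add_norm_sub' (airyRatio f (I * ωc ^ 2 * k)) 1, norm_one (α := ℂ)]
  have hU : ‖airyRatio f (-I * ωc * k) - I * airyPhase f 0 k * airyRatio f (I * ωc ^ 2 * k) - 1‖ ≤
      C * (f / ‖k‖ ^ 3) + ‖airyPhase f 0 k‖ * (1 + C * (f / ‖k‖ ^ 3)) := by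
    rw [sub_right_comm]
    refine (norm_sub_le _ _).trans (add_le_add hW ?_)
    rw [norm_mul, norm_mul, Complex.norm_I, one_mul]
    gcongr
  exact airyError_of_eq_mul (relUV_zero_of_re_pos hf hr0 (by linarith) (by linarith))
    (relUU_zero_of_re_pos hf hr0 (by linarith) (by linarith)) (relVV_zero hf (by linarith)) hV hU hd
    (norm_nonneg _)

end ZeroShift

-- The powers of the phase are due to the Stokes phenomenon across the positive axis.
lemma exists_airyError_zero : ∃ C : ℝ, 1 ≤ C ∧ ∀ (f : ℝ) (k : ℂ), 0 < f → 0 ≤ k.re → 0 ≤ k.im →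
    k ≠ 0 → C * (f / ‖k‖ ^ 3) ≤ 1 →
    AiryError f 0 k (C * (f / ‖k‖ ^ 3 + ‖airyPhase f 0 k‖ + ‖airyPhase f 0 k‖ ^ 2)) ∧
      (‖k‖ / 4 ≤ k.im → AiryError f 0 k (C * (f / ‖k‖ ^ 3))) := by
  obtain ⟨C, hC, h_ratio⟩ := exists_norm_airyRatio_sub_one_le
  refine ⟨3 * C + 8, by linarith, fun f k hf hr hi hk h_small => ?_⟩
  have hε : 0 ≤ f / ‖k‖ ^ 3 := by positivity
  have hP := norm_nonneg (airyPhase f 0 k)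
  have hd : C * (f / ‖k‖ ^ 3) ≤ 1 := by nlinarith
  have h_far (h_im : ‖k‖ / 4 ≤ k.im) : AiryError f 0 k ((3 * C + 8) * (f / ‖k‖ ^ 3)) :=
    (airyError_zero_of_le_im h_ratio hf hr hi hk hd h_im).mono (by linarith)
  refine ⟨?_, h_far⟩
  rcases le_or_gt (‖k‖ / 4) k.im with h_im | h_im
  · exact (h_far h_im).mono (by gcongr; linarith [sq_nonneg ‖airyPhase f 0 k‖])
  · exact (airyError_zero_of_im_lt h_ratio hf hr hi hk hd h_im).mono (by nlinarith)

/-- The size `(1 + x) log(f⁻¹ + x²)` of the logarithms that are treated as errors at distance `x²`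
from the origin. -/
noncomputable def logErr (f x : ℝ) : ℝ := (1 + x) * Real.log (f⁻¹ + x ^ 2)

/-- The exponent `(4/(3f)) Im k³`, which is minus the logarithm of `‖airyPhase f 0 k‖`. -/
noncomputable def phaseExp (f : ℝ) (k : ℂ) : ℝ := 4 / (3 * f) * (k ^ 3).im

/-- The size of the relative error in the Airy asymptotics at energy `k²`, where `x = ‖k‖`. -/
noncomputable def airyEps (f x : ℝ) : ℝ := f / x ^ 3 + f / x

/-- The parameters for which the Airy asymptotics are effective. The tolerance `τ` is the price of
a small field, and large energies are allowed because the asymptotics only improve with them. -/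
structure AiryRegime (τ f : ℝ) (k : ℂ) : Prop where
  tol_le : τ ≤ 1 / 4
  pos : 0 < f
  small : f ≤ τ
  large : f ≤ τ * ‖k‖ ^ 4
  re_nonneg : 0 ≤ k.re
  im_nonneg : 0 ≤ k.im
  ne_zero : k ≠ 0

lemma norm_airyPhase_zero (f : ℝ) (k : ℂ) : ‖airyPhase f 0 k‖ = rexp (-phaseExp f k) := by
  rw [airyPhase_zero, Complex.norm_exp, phaseExp]
  congr 1
  rw [show 4 * I * k ^ 3 / (3 * f) = ((4 / (3 * f) : ℝ) : ℂ) * (I * k ^ 3) by push_cast; ring,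
    Complex.re_ofReal_mul, Complex.I_mul_re]
  ring

lemma airyPhase_eq_mul (f t : ℝ) (k : ℂ) :
    airyPhase f t k = airyPhase f 0 k * Complex.exp (2 * I * t * k) := by
  rw [airyPhase_zero, airyPhase, Complex.exp_add]

lemma im_cube (k : ℂ) : (k ^ 3).im = k.im * (3 * k.re ^ 2 - k.im ^ 2) := by
  rw [pow_succ, sq, Complex.mul_im, Complex.mul_im, Complex.mul_re]
  ring

lemma phaseExp_nonneg_of_im_lt {f : ℝ} {k : ℂ} (hf : 0 < f) (hi : 0 ≤ k.im) (h : k.im < ‖k‖ / 2) :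
    0 ≤ phaseExp f k := by
  have h_norm := Complex.sq_norm_sub_sq_re k
  have h_nonneg : 0 ≤ 3 * k.re ^ 2 - k.im ^ 2 := by nlinarith
  rw [phaseExp, im_cube]
  positivity

lemma norm_exp_two_I_mul_le {t κ : ℝ} (ht : |t| ≤ κ) (k : ℂ) :
    ‖Complex.exp (2 * I * t * k)‖ ≤ rexp (2 * κ * ‖k‖) := by
  have h_norm : ‖2 * I * t * k‖ = 2 * |t| * ‖k‖ := by simp
  exact (Complex.norm_exp_le_exp_norm _).trans (Real.exp_le_exp.2 (h_norm ▸ by gcongr))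

namespace AiryRegime

variable {τ f : ℝ} {k : ℂ} (h : AiryRegime τ f k)
include h

lemma mono {τ' : ℝ} (hτ : τ ≤ τ') (hτ' : τ' ≤ 1 / 4) : AiryRegime τ' f k :=
  ⟨hτ', h.pos, h.small.trans hτ, h.large.trans (by gcongr), h.re_nonneg, h.im_nonneg, h.ne_zero⟩

lemma norm_pos : 0 < ‖k‖ := norm_pos_iff.2 h.ne_zero

lemma tol_pos : 0 < τ := h.pos.trans_le h.small

lemma div_pow_le {j : ℕ} (hj : j ≤ 4) : f / ‖k‖ ^ j ≤ τ := by
  have hx := h.norm_pos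
  have hf := h.pos
  rcases le_total 1 ‖k‖ with h_one | h_one
  · exact (div_le_self hf.le (one_le_pow₀ h_one)).trans h.small
  · have h_pow : ‖k‖ ^ 4 ≤ ‖k‖ ^ j := pow_le_pow_of_le_one hx.le h_one hj
    exact (div_le_div_of_nonneg_left hf.le (by positivity) h_pow).trans
      ((div_le_iff₀ (by positivity)).2 h.large)

lemma div_norm_le : f / ‖k‖ ≤ τ := by
  simpa only [pow_one] using h.div_pow_le (j := 1) (by norm_num)

lemma div_norm_le_airyEps : f / ‖k‖ ≤ airyEps f ‖k‖ :=
  le_add_of_nonneg_left (div_nonneg h.pos.le (by positivity))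

lemma div_norm_cube_le_airyEps : f / ‖k‖ ^ 3 ≤ airyEps f ‖k‖ :=
  le_add_of_nonneg_right (div_nonneg h.pos.le (norm_nonneg k))

lemma div_norm_sq_le_airyEps : f / ‖k‖ ^ 2 ≤ airyEps f ‖k‖ := by
  have hx := h.norm_pos
  have hf := h.pos
  rcases le_total 1 ‖k‖ with h_one | h_one
  · exact (div_le_div_of_nonneg_left hf.le hx (by nlinarith)).trans h.div_norm_le_airyEps
  · exact (div_le_div_of_nonneg_left hf.le (by positivity)
      (pow_le_pow_of_le_one hx.le h_one (by norm_num))).trans h.div_norm_cube_le_airyEps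

lemma airyEps_nonneg : 0 ≤ airyEps f ‖k‖ :=
  (div_nonneg h.pos.le (norm_nonneg k)).trans h.div_norm_le_airyEps

lemma airyEps_le : airyEps f ‖k‖ ≤ 2 * τ := by
  linarith [h.div_norm_le, h.div_pow_le (j := 3) (by norm_num), airyEps.eq_def f ‖k‖]

lemma airyEps_div_norm_le : airyEps f ‖k‖ / ‖k‖ ≤ 2 * τ := by
  have h_eq : airyEps f ‖k‖ / ‖k‖ = f / ‖k‖ ^ 4 + f / ‖k‖ ^ 2 := by
    have hx := h.norm_pos.ne'
    unfold airyEps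
    field_simp
  linarith [h.div_pow_le (j := 4) le_rfl, h.div_pow_le (j := 2) (by norm_num)]

lemma four_le_inv : 4 ≤ f⁻¹ :=
  (le_inv_comm₀ (by norm_num) h.pos).2 (by linarith [h.small, h.tol_le])

lemma one_le_log : 1 ≤ Real.log (f⁻¹ + ‖k‖ ^ 2) := by
  have hf := h.four_le_inv
  rw [Real.le_log_iff_exp_le (by positivity)]
  linarith [Real.exp_one_lt_d9, sq_nonneg ‖k‖]

lemma norm_add_one_le_logErr : ‖k‖ + 1 ≤ logErr f ‖k‖ := by
  rw [add_comm]
  exact le_mul_of_one_le_right (by positivity) h.one_le_log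

lemma norm_le_logErr : ‖k‖ ≤ logErr f ‖k‖ := by linarith [h.norm_add_one_le_logErr]

lemma one_le_logErr : 1 ≤ logErr f ‖k‖ := by linarith [h.norm_add_one_le_logErr, norm_nonneg k]

lemma exp_neg_logErr_le : rexp (-logErr f ‖k‖) ≤ f := by
  have hf := h.pos
  have h_log : Real.log (f⁻¹ + ‖k‖ ^ 2) ≤ logErr f ‖k‖ :=
    le_mul_of_one_le_left (by linarith [h.one_le_log]) (by linarith [norm_nonneg k])
  rw [Real.exp_neg]
  refine inv_le_of_inv_le₀ hf ?_
  calc f⁻¹ ≤ f⁻¹ + ‖k‖ ^ 2 := by linarith [sq_nonneg ‖k‖]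
    _ = rexp (Real.log (f⁻¹ + ‖k‖ ^ 2)) := (Real.exp_log (by positivity)).symm
    _ ≤ rexp (logErr f ‖k‖) := Real.exp_le_exp.2 h_log

lemma norm_le_exp_logErr : ‖k‖ ≤ rexp (logErr f ‖k‖) :=
  h.norm_le_logErr.trans (by linarith [Real.add_one_le_exp (logErr f ‖k‖)])

lemma inv_norm_le_exp_logErr : ‖k‖⁻¹ ≤ rexp (logErr f ‖k‖) := by
  have hx := h.norm_pos
  refine inv_le_of_inv_le₀ (Real.exp_pos _) ?_
  rw [← Real.exp_neg]
  have h_div := (div_le_iff₀ hx).1 h.div_norm_le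
  nlinarith [h.exp_neg_logErr_le, h.tol_le]

lemma exp_neg_two_mul_logErr_le : rexp (-(2 * logErr f ‖k‖)) ≤ f / ‖k‖ := by
  have h_inv : rexp (-logErr f ‖k‖) ≤ ‖k‖⁻¹ := by
    rw [Real.exp_neg]
    exact inv_anti₀ h.norm_pos h.norm_le_exp_logErr
  rw [show -(2 * logErr f ‖k‖) = -logErr f ‖k‖ + -logErr f ‖k‖ by ring, Real.exp_add,
    div_eq_mul_inv]
  exact mul_le_mul h.exp_neg_logErr_le h_inv (Real.exp_pos _).le h.pos.le

end AiryRegime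

lemma norm_le_norm_add_of_quadrant {p k : ℂ} (hpr : 0 ≤ p.re) (hpi : 0 ≤ p.im) (hkr : 0 ≤ k.re)
    (hki : 0 ≤ k.im) : ‖k‖ ≤ ‖p + k‖ := by
  rw [← sq_le_sq₀ (norm_nonneg _) (norm_nonneg _), ← Complex.normSq_eq_norm_sq,
    ← Complex.normSq_eq_norm_sq, Complex.normSq_apply, Complex.normSq_apply, Complex.add_re,
    Complex.add_im]
  nlinarith [mul_nonneg hpr hkr, mul_nonneg hpi hki]

lemma exists_sq_eq_of_im_nonneg {w : ℂ} (hw : 0 ≤ w.im) :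
    ∃ s : ℂ, s ^ 2 = w ∧ 0 ≤ s.re ∧ 0 ≤ s.im := by
  obtain ⟨s, hs⟩ := Complex.isSquare w
  have h_im : w.im = 2 * (s.re * s.im) := by
    rw [hs, Complex.mul_im]
    ring
  rcases mul_nonneg_iff.1 (show 0 ≤ s.re * s.im by linarith) with h | h
  · exact ⟨s, by rw [hs, sq], h⟩
  · exact ⟨-s, by rw [hs, neg_sq, sq], by simpa using h.1, by simpa using h.2⟩

section Sqrt

variable {p k s : ℂ} (hpr : 0 ≤ p.re) (hpi : 0 ≤ p.im) (hkr : 0 ≤ k.re) (hki : 0 ≤ k.im)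
  (hk : k ≠ 0) (hp : p ^ 2 = k ^ 2 + s)
include hpr hpi hkr hki hk hp

lemma norm_sub_le_of_sq_eq_add : ‖p - k‖ ≤ ‖s‖ / ‖k‖ := by
  rw [le_div_iff₀ (norm_pos_iff.2 hk)]
  calc ‖p - k‖ * ‖k‖ ≤ ‖p - k‖ * ‖p + k‖ := by
        gcongr
        exact norm_le_norm_add_of_quadrant hpr hpi hkr hki
    _ = ‖s‖ := by
        rw [← norm_mul]
        congr 1
        linear_combination hp

lemma norm_cube_sub_le_of_sq_eq_add (hs : ‖s‖ ≤ ‖k‖ ^ 2 / 4) :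
    ‖p ^ 3 - k ^ 3 - 3 / 2 * s * k‖ ≤ 2 * ‖s‖ ^ 2 / ‖k‖ := by
  have hk0 : 0 < ‖k‖ := norm_pos_iff.2 hk
  have h_sub := norm_sub_le_of_sq_eq_add hpr hpi hkr hki hk hp
  have h_small : ‖p - k‖ ≤ ‖k‖ / 4 := h_sub.trans (by rw [div_le_iff₀ hk0]; linarith)
  have h_sum : ‖p + k / 2‖ ≤ 2 * ‖k‖ := by
    calc ‖p + k / 2‖ = ‖(p - k) + 3 / 2 * k‖ := by ring_nf
      _ ≤ ‖p - k‖ + ‖3 / 2 * k‖ := norm_add_le _ _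
      _ = ‖p - k‖ + 3 / 2 * ‖k‖ := by simp
      _ ≤ 2 * ‖k‖ := by linarith
  have h_eq : (p ^ 3 - k ^ 3 - 3 / 2 * s * k) * (p + k) = s * ((p - k) * (p + k / 2)) := by
    rw [show s = p ^ 2 - k ^ 2 by rw [hp]; ring]
    ring
  rw [le_div_iff₀ hk0]
  calc ‖p ^ 3 - k ^ 3 - 3 / 2 * s * k‖ * ‖k‖
      ≤ ‖p ^ 3 - k ^ 3 - 3 / 2 * s * k‖ * ‖p + k‖ := by
        gcongr
        exact norm_le_norm_add_of_quadrant hpr hpi hkr hki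
    _ = ‖s‖ * (‖p - k‖ * ‖p + k / 2‖) := by rw [← norm_mul, h_eq, norm_mul, norm_mul]
    _ ≤ ‖s‖ * (‖s‖ / ‖k‖ * (2 * ‖k‖)) := by gcongr
    _ = 2 * ‖s‖ ^ 2 := by field_simp

end Sqrt

section Shift

variable {f t δ ρ : ℝ} {k p w : ℂ}

lemma airyError_of_shift (h : AiryError f 0 p δ) (hp : p ^ 2 = k ^ 2 + t * f) (hp0 : p ≠ 0)
    (h_phase : airyPhase f 0 p = airyPhase f t k * Complex.exp w) (h_div : ‖k / p - 1‖ ≤ ρ)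
    (hw : ‖w‖ ≤ ρ) (hρ : ρ ≤ 1) : AiryError f t k (6 * δ + 5 * ρ) := by
  have hδ : 0 ≤ δ := (norm_nonneg _).trans h.relUV
  have hρ0 : 0 ≤ ρ := (norm_nonneg _).trans hw
  have h_exp (z : ℂ) (hz : ‖z‖ ≤ ρ) : ‖Complex.exp z - 1‖ ≤ 2 * ρ :=
    (Complex.norm_exp_sub_one_le (hz.trans hρ)).trans (by gcongr)
  have h_mul (z : ℂ) (hz : ‖z‖ ≤ ρ) : ‖k / p * Complex.exp z - 1‖ ≤ 5 * ρ :=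
    (norm_mul_sub_one_le h_div (h_exp z hz)).trans (by nlinarith)
  have h_total {x y : ℂ} (hx : ‖x - 1‖ ≤ δ) (hy : ‖y - 1‖ ≤ 5 * ρ) :
      ‖x * y - 1‖ ≤ 6 * δ + 5 * ρ :=
    (norm_mul_sub_one_le hx hy).trans (by nlinarith)
  have hA : relUV f t k = relUV f 0 p * (k / p) := by
    simp only [relUV, ← hp, Complex.ofReal_zero, zero_mul, add_zero]
    field_simp
  have hU : relUU f t k = relUU f 0 p * (k / p * Complex.exp (-w)) := by
    simp only [relUU, ← hp, Complex.ofReal_zero, zero_mul, add_zero, h_phase, Complex.exp_neg]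
    have := Complex.exp_ne_zero w
    field_simp
  have hV : relVV f t k = relVV f 0 p * (k / p * Complex.exp w) := by
    simp only [relVV, ← hp, Complex.ofReal_zero, zero_mul, add_zero, h_phase]
    have := Complex.exp_ne_zero w
    field_simp
  exact ⟨hA ▸ h_total h.relUV (h_div.trans (by linarith)),
    hU ▸ h_total h.relUU (h_mul _ ((norm_neg w).trans_le hw)), hV ▸ h_total h.relVV (h_mul w hw)⟩

lemma exists_airyPhase_zero_eq_mul (hf : 0 < f)
    (h_cube : ‖p ^ 3 - k ^ 3 - 3 / 2 * (t * f) * k‖ ≤ 2 * ‖(t * f : ℂ)‖ ^ 2 / ‖k‖) :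
    ∃ w : ℂ, airyPhase f 0 p = airyPhase f t k * Complex.exp w ∧
      ‖w‖ ≤ 3 * t ^ 2 * (f / ‖k‖) := by
  refine ⟨4 * I / (3 * f) * (p ^ 3 - k ^ 3 - 3 / 2 * (t * f) * k), ?_, ?_⟩
  · have hf' : (f : ℂ) ≠ 0 := by exact_mod_cast hf.ne'
    rw [airyPhase_zero, airyPhase, ← Complex.exp_add]
    congr 1
    field_simp
    ring
  · have h_coeff : ‖4 * I / (3 * f : ℂ)‖ = 4 / (3 * f) := by simp [abs_of_pos hf]
    have h_norm : ‖(t * f : ℂ)‖ ^ 2 = t ^ 2 * f ^ 2 := by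
      rw [norm_mul, Complex.norm_real, Complex.norm_real, mul_pow, Real.norm_eq_abs,
        Real.norm_eq_abs, sq_abs, sq_abs]
    rw [h_norm] at h_cube
    rw [norm_mul, h_coeff]
    calc 4 / (3 * f) * ‖p ^ 3 - k ^ 3 - 3 / 2 * (t * f) * k‖
        ≤ 4 / (3 * f) * (2 * (t ^ 2 * f ^ 2) / ‖k‖) := by gcongr
      _ = 8 / 3 * t ^ 2 * (f / ‖k‖) := by field_simp; ring
      _ ≤ 3 * t ^ 2 * (f / ‖k‖) := by gcongr; norm_num

end Shift

section ShiftedRoot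

variable {κ τ f t : ℝ} {k p : ℂ} (h : AiryRegime τ f k) (hκ : 10 * κ * τ ≤ 1) (ht : |t| ≤ κ)
  (hp : p ^ 2 = k ^ 2 + t * f) (hpr : 0 ≤ p.re) (hpi : 0 ≤ p.im)
include h ht

lemma norm_shift_le : ‖(t * f : ℂ)‖ ≤ κ * f := by
  rw [norm_mul, Complex.norm_real, Complex.norm_real, Real.norm_eq_abs,
    Real.norm_of_nonneg h.pos.le]
  exact mul_le_mul_of_nonneg_right ht h.pos.le

include hp hpr hpi

lemma norm_shiftedRoot_sub_le : ‖p - k‖ ≤ κ * (f / ‖k‖) := by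
  rw [← mul_div_assoc]
  exact (norm_sub_le_of_sq_eq_add hpr hpi h.re_nonneg h.im_nonneg h.ne_zero hp).trans
    (by gcongr; exact norm_shift_le h ht)

include hκ

lemma norm_shiftedRoot_sub_le_div_ten : ‖p - k‖ ≤ ‖k‖ / 10 := by
  have hκ0 : 0 ≤ κ := (abs_nonneg t).trans ht
  have hx := h.norm_pos
  have h_sq := h.div_pow_le (j := 2) (by norm_num)
  calc ‖p - k‖ ≤ κ * (f / ‖k‖) := norm_shiftedRoot_sub_le h ht hp hpr hpi
    _ = κ * (f / ‖k‖ ^ 2) * ‖k‖ := by field_simp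
    _ ≤ κ * τ * ‖k‖ := by gcongr
    _ ≤ ‖k‖ / 10 := by nlinarith

lemma norm_le_norm_shiftedRoot : 9 / 10 * ‖k‖ ≤ ‖p‖ := by
  linarith [norm_shiftedRoot_sub_le_div_ten h hκ ht hp hpr hpi, norm_sub_norm_le k p,
    norm_sub_rev k p]

lemma norm_div_shiftedRoot_sub_one_le : ‖k / p - 1‖ ≤ 2 * κ * airyEps f ‖k‖ := by
  have hκ0 : 0 ≤ κ := (abs_nonneg t).trans ht
  have hx := h.norm_pos
  have hf := h.pos
  have h_norm := norm_le_norm_shiftedRoot h hκ ht hp hpr hpi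
  have hp0 : p ≠ 0 := norm_pos_iff.1 (by linarith)
  calc ‖k / p - 1‖ = ‖p - k‖ / ‖p‖ := by
        rw [div_sub_one hp0, norm_div, norm_sub_rev]
    _ ≤ κ * (f / ‖k‖) / (‖k‖ / 2) := by
        gcongr
        · exact norm_shiftedRoot_sub_le h ht hp hpr hpi
        · linarith
    _ = 2 * κ * (f / ‖k‖ ^ 2) := by field_simp
    _ ≤ 2 * κ * airyEps f ‖k‖ := by gcongr; exact h.div_norm_sq_le_airyEps

lemma exists_airyPhase_shiftedRoot_eq_mul :
    ∃ w : ℂ, airyPhase f 0 p = airyPhase f t k * Complex.exp w ∧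
      ‖w‖ ≤ 3 * κ ^ 2 * airyEps f ‖k‖ := by
  have hx := h.norm_pos
  have hf := h.pos
  have h_sq := (div_le_iff₀ (by positivity)).1 (h.div_pow_le (j := 2) (by norm_num))
  have h_quarter : ‖(t * f : ℂ)‖ ≤ ‖k‖ ^ 2 / 4 := by
    have hκ0 : 0 ≤ κ := (abs_nonneg t).trans ht
    calc ‖(t * f : ℂ)‖ ≤ κ * f := norm_shift_le h ht
      _ ≤ κ * (τ * ‖k‖ ^ 2) := by gcongr
      _ ≤ ‖k‖ ^ 2 / 4 := by nlinarith [sq_nonneg ‖k‖]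
  obtain ⟨w, h_phase, hw⟩ := exists_airyPhase_zero_eq_mul hf (norm_cube_sub_le_of_sq_eq_add hpr hpi
    h.re_nonneg h.im_nonneg h.ne_zero hp h_quarter)
  refine ⟨w, h_phase, hw.trans ?_⟩
  rw [← sq_abs t]
  gcongr
  exact h.div_norm_le_airyEps

lemma div_norm_shiftedRoot_cube_le : f / ‖p‖ ^ 3 ≤ 2 * (f / ‖k‖ ^ 3) := by
  have hx := h.norm_pos
  have hf := h.pos
  have h_pow := pow_le_pow_left₀ (by positivity) (norm_le_norm_shiftedRoot h hκ ht hp hpr hpi) 3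
  rw [mul_div_assoc', div_le_div_iff₀ ((by positivity : 0 < (9 / 10 * ‖k‖) ^ 3).trans_le h_pow)
    (by positivity)]
  nlinarith [pow_pos hx 3]

lemma norm_div_four_le_im_shiftedRoot (h_im : ‖k‖ / 2 ≤ k.im) : ‖p‖ / 4 ≤ p.im := by
  have h_sub := norm_shiftedRoot_sub_le_div_ten h hκ ht hp hpr hpi
  have h_sub_im := (Complex.abs_im_le_norm (p - k)).trans h_sub
  rw [Complex.sub_im, abs_le] at h_sub_im
  linarith [norm_sub_norm_le p k, norm_nonneg k]

end ShiftedRoot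

/-- The condition on `k` under which the Stokes contributions to the Airy asymptotics are
negligible. -/
def StokesNegligible (κ f : ℝ) (k : ℂ) : Prop :=
  ‖k‖ / 2 ≤ k.im ∨ (2 * κ + 2) * logErr f ‖k‖ ≤ phaseExp f k

/-- The Airy asymptotics with constant `C` at all the energies `k² + tf` with `-κ ≤ t ≤ κ`. -/
structure AiryAsymptotics (κ C f : ℝ) (k : ℂ) : Prop where
  general : ∀ t : ℝ, |t| ≤ κ → AiryError f t k (C * rexp (4 * κ * logErr f ‖k‖))
  sharp : StokesNegligible κ f k → ∀ t : ℝ, |t| ≤ κ → AiryError f t k (C * airyEps f ‖k‖)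

namespace AiryRegime

variable {τ f κ : ℝ} {k : ℂ} (h : AiryRegime τ f k) (hκ : 0 ≤ κ)
include h

lemma im_sq_add_nonneg (t : ℝ) : 0 ≤ (k ^ 2 + t * f).im := by
  have h_prod := mul_nonneg h.re_nonneg h.im_nonneg
  simp only [sq, Complex.add_im, Complex.mul_im, Complex.ofReal_im, mul_zero, Complex.ofReal_re,
    zero_mul, add_zero]
  linarith

include hκ

lemma norm_airyPhase_mul_exp_le_airyEps (hS : (2 * κ + 2) * logErr f ‖k‖ ≤ phaseExp f k) :
    ‖airyPhase f 0 k‖ * rexp (2 * κ * ‖k‖) ≤ airyEps f ‖k‖ := by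
  have h_norm := mul_le_mul_of_nonneg_left h.norm_le_logErr hκ
  rw [norm_airyPhase_zero, ← Real.exp_add]
  calc rexp (-phaseExp f k + 2 * κ * ‖k‖) ≤ rexp (-(2 * logErr f ‖k‖)) :=
        Real.exp_le_exp.2 (by linarith)
    _ ≤ f / ‖k‖ := h.exp_neg_two_mul_logErr_le
    _ ≤ airyEps f ‖k‖ := h.div_norm_le_airyEps

lemma norm_airyPhase_mul_exp_le_exp (h_im : k.im < ‖k‖ / 2) :
    ‖airyPhase f 0 k‖ * rexp (2 * κ * ‖k‖) ≤ rexp (2 * κ * logErr f ‖k‖) := by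
  have h_norm := mul_le_mul_of_nonneg_left h.norm_le_logErr hκ
  have hS := phaseExp_nonneg_of_im_lt h.pos h.im_nonneg h_im
  rw [norm_airyPhase_zero, ← Real.exp_add]
  exact Real.exp_le_exp.2 (by linarith)

end AiryRegime

lemma norm_airyPhase_le_of_eq_mul {κ f t : ℝ} {k p w : ℂ} (ht : |t| ≤ κ)
    (h_phase : airyPhase f 0 p = airyPhase f t k * Complex.exp w) (hw : ‖w‖ ≤ 1) :
    ‖airyPhase f 0 p‖ ≤ 3 * (‖airyPhase f 0 k‖ * rexp (2 * κ * ‖k‖)) := by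
  have h_exp : ‖Complex.exp w‖ ≤ 3 :=
    (Complex.norm_exp_le_exp_norm w).trans ((Real.exp_le_exp.2 hw).trans Real.exp_one_lt_three.le)
  rw [h_phase, airyPhase_eq_mul, norm_mul, norm_mul, mul_comm (3 : ℝ)]
  gcongr
  exact norm_exp_two_I_mul_le ht k

section Asymptotics

variable {κ τ C f : ℝ} {k : ℂ}
  (h_zero : ∀ (f : ℝ) (k : ℂ), 0 < f → 0 ≤ k.re → 0 ≤ k.im → k ≠ 0 → C * (f / ‖k‖ ^ 3) ≤ 1 →
    AiryError f 0 k (C * (f / ‖k‖ ^ 3 + ‖airyPhase f 0 k‖ + ‖airyPhase f 0 k‖ ^ 2)) ∧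
      (‖k‖ / 4 ≤ k.im → AiryError f 0 k (C * (f / ‖k‖ ^ 3))))
  (h : AiryRegime τ f k) (hC : 0 ≤ C) (hκ : 0 ≤ κ) (hτ : (2 * C + 10 * κ + 6 * κ ^ 2) * τ ≤ 1)
include h_zero h hC hκ hτ

lemma airyError_of_airyError_zero {t : ℝ} (ht : |t| ≤ κ) :
    AiryError f t k ((54 * C + 10 * κ + 15 * κ ^ 2) * (airyEps f ‖k‖ +
        ‖airyPhase f 0 k‖ * rexp (2 * κ * ‖k‖) + (‖airyPhase f 0 k‖ * rexp (2 * κ * ‖k‖)) ^ 2)) ∧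
      (‖k‖ / 2 ≤ k.im →
        AiryError f t k ((54 * C + 10 * κ + 15 * κ ^ 2) * airyEps f ‖k‖)) := by
  have hτ0 := h.tol_pos
  have hCτ : 0 ≤ C * τ := by positivity
  have hκτ : 0 ≤ κ * τ := by positivity
  have hκτ' : 0 ≤ κ ^ 2 * τ := by positivity
  have hκ' : 10 * κ * τ ≤ 1 := by linarith
  have hε := h.airyEps_nonneg
  obtain ⟨p, hp, hpr, hpi⟩ := exists_sq_eq_of_im_nonneg (h.im_sq_add_nonneg t)
  obtain ⟨w, h_phase, hw⟩ := exists_airyPhase_shiftedRoot_eq_mul h hκ' ht hp hpr hpi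
  have h_div := norm_div_shiftedRoot_sub_one_le h hκ' ht hp hpr hpi
  have h_cube := div_norm_shiftedRoot_cube_le h hκ' ht hp hpr hpi
  have hp0 : p ≠ 0 :=
    norm_pos_iff.1 (by linarith [norm_le_norm_shiftedRoot h hκ' ht hp hpr hpi, h.norm_pos])
  have hρ : 2 * κ * airyEps f ‖k‖ + 3 * κ ^ 2 * airyEps f ‖k‖ ≤ 1 := by
    nlinarith [h.airyEps_le]
  have hκε : 0 ≤ 2 * κ * airyEps f ‖k‖ := by positivity
  have hκε' : 0 ≤ 3 * κ ^ 2 * airyEps f ‖k‖ := by positivity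
  have h_shift {δ : ℝ} (hδ : AiryError f 0 p δ) :=
    airyError_of_shift hδ hp hp0 h_phase (h_div.trans (le_add_of_nonneg_right hκε'))
      (hw.trans (le_add_of_nonneg_left hκε)) hρ
  obtain ⟨h_gen, h_far⟩ := h_zero f p h.pos hpr hpi hp0
    (by nlinarith [h.div_pow_le (j := 3) (by norm_num)])
  have hM := norm_airyPhase_le_of_eq_mul ht h_phase (hw.trans (by linarith))
  have hM2 := pow_le_pow_left₀ (norm_nonneg _) hM 2
  have hM0 : 0 ≤ ‖airyPhase f 0 k‖ * rexp (2 * κ * ‖k‖) := by positivity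
  have h_cube' := mul_le_mul_of_nonneg_left
    (h_cube.trans (mul_le_mul_of_nonneg_left h.div_norm_cube_le_airyEps zero_le_two)) hC
  have hCM := mul_le_mul_of_nonneg_left (add_le_add hM hM2) hC
  generalize ‖airyPhase f 0 k‖ * rexp (2 * κ * ‖k‖) = M at *
  refine ⟨(h_shift h_gen).mono ?_, fun h_im =>
    (h_shift (h_far (norm_div_four_le_im_shiftedRoot h hκ' ht hp hpr hpi h_im))).mono ?_⟩
  · nlinarith [mul_nonneg hC hM0, mul_nonneg hC hε, mul_nonneg hκ (sq_nonneg M), mul_nonneg hκ hM0,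
      mul_nonneg (sq_nonneg κ) hM0, mul_nonneg (sq_nonneg κ) (sq_nonneg M)]
  · nlinarith [mul_nonneg hC hε]

lemma airyAsymptotics_of_airyError_zero :
    AiryAsymptotics κ (3 * (54 * C + 10 * κ + 15 * κ ^ 2)) f k := by
  have hA : 0 ≤ 54 * C + 10 * κ + 15 * κ ^ 2 := by positivity
  have hε := h.airyEps_nonneg
  have hε1 : airyEps f ‖k‖ ≤ 1 := by linarith [h.airyEps_le, h.tol_le]
  have hE := h.one_le_logErr
  have h_exp : 1 ≤ rexp (4 * κ * logErr f ‖k‖) := Real.one_le_exp (by positivity)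
  have h_err (t : ℝ) (ht : |t| ≤ κ) := airyError_of_airyError_zero h_zero h hC hκ hτ ht
  have hM0 : 0 ≤ ‖airyPhase f 0 k‖ * rexp (2 * κ * ‖k‖) := by positivity
  refine ⟨fun t ht => ?_, fun h_neg t ht => ?_⟩
  · rw [mul_assoc, mul_left_comm]
    rcases le_or_gt (‖k‖ / 2) k.im with h_im | h_im
    · exact ((h_err t ht).2 h_im).mono (mul_le_mul_of_nonneg_left (by linarith) hA)
    · have hM := h.norm_airyPhase_mul_exp_le_exp hκ h_im
      have hM2 := pow_le_pow_left₀ hM0 hM 2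
      have h_half : 1 ≤ rexp (2 * κ * logErr f ‖k‖) := Real.one_le_exp (by positivity)
      have h_sq : rexp (4 * κ * logErr f ‖k‖) = rexp (2 * κ * logErr f ‖k‖) ^ 2 := by
        rw [← Real.exp_nat_mul]
        push_cast
        ring_nf
      exact (h_err t ht).1.mono (mul_le_mul_of_nonneg_left (by nlinarith [h_half]) hA)
  · rw [mul_assoc, mul_left_comm]
    rcases h_neg with h_im | hS
    · exact ((h_err t ht).2 h_im).mono (mul_le_mul_of_nonneg_left (by linarith) hA)
    · have hM := h.norm_airyPhase_mul_exp_le_airyEps hκ hS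
      exact (h_err t ht).1.mono (mul_le_mul_of_nonneg_left (by nlinarith) hA)

end Asymptotics

lemma exists_airyAsymptotics {κ : ℝ} (hκ : 0 ≤ κ) : ∃ τ C : ℝ, 0 < τ ∧ τ ≤ 1 / 4 ∧ 0 < C ∧
    ∀ (f : ℝ) (k : ℂ), AiryRegime τ f k → AiryAsymptotics κ C f k := by
  obtain ⟨C, hC, h_zero⟩ := exists_airyError_zero
  have h_den : 0 < 4 + 2 * C + 10 * κ + 6 * κ ^ 2 := by positivity
  refine ⟨(4 + 2 * C + 10 * κ + 6 * κ ^ 2)⁻¹, _, by positivity, ?_, ?_, fun f k h =>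
    airyAsymptotics_of_airyError_zero h_zero h (by linarith) hκ ?_⟩
  · rw [one_div]
    exact inv_anti₀ zero_lt_four (by nlinarith)
  · positivity
  · rw [← div_eq_mul_inv, div_le_one h_den]
    linarith

/-! ### The determinant on both sides of the real axis -/

lemma Df_eq (κ η f : ℝ) (z : ℂ) : Df κ η f z =
    (1 + airyUV f (z - κ * f) / η) * (1 + airyUV f (z + κ * f) / η) -
      airyUU f (z - κ * f) * airyVV f (z + κ * f) / η ^ 2 := by
  simp only [Df, alphaP, alphaM, betaP, betaM, airyUV, airyUU, airyVV, airyU, airyV]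
  ring

lemma conj_airyU (f : ℝ) (ζ : ℂ) : starRingEnd ℂ (airyU f (starRingEnd ℂ ζ)) = airyU f ζ := by
  simp [airyU, conj_Ai]

lemma conj_airyV (f : ℝ) (ζ : ℂ) : starRingEnd ℂ (airyV f (starRingEnd ℂ ζ)) =
    -ωc * airyU f ζ - ωc ^ 2 * airyV f ζ := by
  have h := Ai_connection (-ζ * ((f ^ (-(2 : ℝ) / 3) : ℝ) : ℂ))
  have h_arg : ωc * (-ζ * ((f ^ (-(2 : ℝ) / 3) : ℝ) : ℂ)) =
      -ωc * ζ * ((f ^ (-(2 : ℝ) / 3) : ℝ) : ℂ) := by ring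
  have h_conj : starRingEnd ℂ (airyV f (starRingEnd ℂ ζ)) =
      Ai (ωc ^ 2 * (-ζ * ((f ^ (-(2 : ℝ) / 3) : ℝ) : ℂ))) := by
    rw [airyV, conj_Ai]
    congr 1
    simp only [map_mul, map_neg, conj_ωc, Complex.conj_conj, Complex.conj_ofReal]
    ring
  rw [h_arg] at h
  rw [h_conj, airyU, airyV]
  linear_combination ωc * h - Ai (ωc ^ 2 * (-ζ * ((f ^ (-(2 : ℝ) / 3) : ℝ) : ℂ))) * ωc_cube

lemma conj_Wf (f : ℝ) : starRingEnd ℂ (Wf f) = -ωc ^ 2 * Wf f := by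
  rw [Wf_eq]
  simp only [map_mul, map_div₀, map_pow, conj_ωc, Complex.conj_ofReal, Complex.conj_I,
    Complex.conj_ofNat]
  ring

section Conj

variable {f : ℝ} (hf : 0 < f) (ζ : ℂ)
include hf

lemma div_conj_Wf (y : ℂ) : y / starRingEnd ℂ (Wf f) = -ωc * (y / Wf f) := by
  have hW := Wf_ne_zero hf
  rw [conj_Wf, div_eq_iff (mul_ne_zero (neg_ne_zero.2 (pow_ne_zero 2 ωc_ne_zero)) hW)]
  field_simp
  linear_combination -y * ωc_cube

lemma conj_airyUU_conj : starRingEnd ℂ (airyUU f (starRingEnd ℂ ζ)) = -ωc * airyUU f ζ := by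
  rw [airyUU, map_div₀, map_pow, conj_airyU, div_conj_Wf hf, airyUU]

lemma conj_airyUV_conj :
    starRingEnd ℂ (airyUV f (starRingEnd ℂ ζ)) = ωc ^ 2 * airyUU f ζ + airyUV f ζ := by
  rw [airyUV, map_div₀, map_mul, conj_airyU, conj_airyV, div_conj_Wf hf, airyUV, airyUU]
  linear_combination airyU f ζ * airyV f ζ / Wf f * ωc_cube

lemma conj_airyVV_conj : starRingEnd ℂ (airyVV f (starRingEnd ℂ ζ)) =
    -airyUU f ζ - 2 * ωc * airyUV f ζ - ωc ^ 2 * airyVV f ζ := by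
  rw [airyVV, map_div₀, map_pow, conj_airyV, div_conj_Wf hf, airyUV, airyUU, airyVV]
  linear_combination (-(airyU f ζ ^ 2) - 2 * ωc * (airyU f ζ * airyV f ζ) -
    ωc ^ 2 * airyV f ζ ^ 2) / Wf f * ωc_cube

end Conj

lemma conj_Df_conj {κ η f : ℝ} (hf : 0 < f) (z : ℂ) :
    starRingEnd ℂ (Df κ η f (starRingEnd ℂ z)) = Df κ η f z +
      ωc ^ 2 / η * (airyUU f (z - κ * f) * (1 - airyUV f (z + κ * f) / η) +
        airyUU f (z + κ * f) * (1 + airyUV f (z - κ * f) / η)) := by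
  have h_minus : starRingEnd ℂ z - κ * f = starRingEnd ℂ (z - κ * f) := by simp
  have h_plus : starRingEnd ℂ z + κ * f = starRingEnd ℂ (z + κ * f) := by simp
  rw [Df_eq, Df_eq, h_minus, h_plus]
  generalize z - κ * f = x
  generalize z + κ * f = y
  simp only [map_sub, map_add, map_mul, map_div₀, map_one, map_pow, conj_airyUU_conj hf,
    conj_airyUV_conj hf, conj_airyVV_conj hf, Complex.conj_ofReal]
  linear_combination (ωc * airyUU f x * airyUU f y - airyUU f x * airyVV f y) / η ^ 2 * ωc_cube

/-- The strength `1/(2ηk)` of a single interaction at wave number `k`. -/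
noncomputable def coupling (η : ℝ) (k : ℂ) : ℂ := 1 / (2 * η * k)

/-- The plane wave factor `e^{2iκk}` between the two interactions. -/
noncomputable def wave (κ : ℝ) (k : ℂ) : ℂ := Complex.exp (2 * I * κ * k)

/-- The determinant of the operator without electric field at energy `k²`, the limit of
`Df κ η f (k ^ 2)` as `f` tends to `0` for `k` in the open first quadrant. -/
noncomputable def freeDet (κ η : ℝ) (k : ℂ) : ℂ :=
  (1 + coupling η k * I) ^ 2 + coupling η k ^ 2 * wave κ k ^ 2

/-- The coefficient of the exponentially growing part of the determinant below the real axis. -/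
noncomputable def growth (κ η f : ℝ) (k : ℂ) : ℂ :=
  relUU f (-κ) k * wave κ k ^ 2 * (1 - coupling η k * I * relUV f κ k) +
    relUU f κ k * (1 + coupling η k * I * relUV f (-κ) k)

/-- The limit of `growth κ η f k` as `f` tends to `0` for `k` in the open first quadrant. -/
noncomputable def freeGrowth (κ η : ℝ) (k : ℂ) : ℂ :=
  wave κ k ^ 2 * (1 - coupling η k * I) + (1 + coupling η k * I)

lemma wave_ne_zero (κ : ℝ) (k : ℂ) : wave κ k ≠ 0 := Complex.exp_ne_zero _

lemma wave_neg (κ : ℝ) (k : ℂ) : wave (-κ) k = (wave κ k)⁻¹ := by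
  rw [wave, wave, ← Complex.exp_neg]
  push_cast
  ring_nf

lemma norm_wave (κ : ℝ) (k : ℂ) : ‖wave κ k‖ = rexp (-(2 * κ * k.im)) := by
  rw [wave, Complex.norm_exp]
  simp [Complex.mul_re, Complex.mul_im]

lemma norm_wave_le_one {κ : ℝ} (hκ : 0 ≤ κ) {k : ℂ} (hk : 0 ≤ k.im) : ‖wave κ k‖ ≤ 1 := by
  rw [norm_wave, Real.exp_le_one_iff, neg_nonpos]
  positivity

lemma norm_coupling {η : ℝ} (hη : 0 < η) (k : ℂ) : ‖coupling η k‖ = 1 / (2 * η) * ‖k‖⁻¹ := by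
  rw [coupling, norm_div, norm_mul, norm_mul, Complex.norm_real, Real.norm_of_nonneg hη.le,
    norm_one, Complex.norm_ofNat]
  ring

section Expansion

variable {κ η f : ℝ} (hη : η ≠ 0) {k : ℂ} (hk : k ≠ 0)
include hη hk

lemma airyUV_div_eq (t : ℝ) :
    airyUV f (k ^ 2 + t * f) / η = coupling η k * I * relUV f t k := by
  have hη' : (η : ℂ) ≠ 0 := by exact_mod_cast hη
  rw [coupling, relUV]
  field_simp

lemma airyUU_div_eq (t : ℝ) :
    airyUU f (k ^ 2 + t * f) / η =
      coupling η k * ωc * relUU f t k / (airyPhase f 0 k * wave t k) := by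
  have hη' : (η : ℂ) ≠ 0 := by exact_mod_cast hη
  have hω := ωc_ne_zero
  have h_phase : airyPhase f 0 k ≠ 0 := Complex.exp_ne_zero _
  have h_wave := wave_ne_zero t k
  rw [coupling, relUU, airyPhase_eq_mul, ← wave]
  field_simp

lemma airyVV_div_eq (t : ℝ) : airyVV f (k ^ 2 + t * f) / η =
    -coupling η k * ωc ^ 2 * relVV f t k * (airyPhase f 0 k * wave t k) := by
  have hη' : (η : ℂ) ≠ 0 := by exact_mod_cast hη
  have hω := ωc_ne_zero
  have h_phase : airyPhase f 0 k ≠ 0 := Complex.exp_ne_zero _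
  have h_wave := wave_ne_zero t k
  rw [coupling, relVV, airyPhase_eq_mul, ← wave]
  field_simp

lemma Df_sq_eq : Df κ η f (k ^ 2) =
    (1 + coupling η k * I * relUV f (-κ) k) * (1 + coupling η k * I * relUV f κ k) +
      coupling η k ^ 2 * wave κ k ^ 2 * (relUU f (-κ) k * relVV f κ k) := by
  have h_phase : airyPhase f 0 k ≠ 0 := Complex.exp_ne_zero _
  have h_minus : k ^ 2 - κ * f = k ^ 2 + (-κ : ℝ) * f := by push_cast; ring
  rw [Df_eq, h_minus, airyUV_div_eq hη hk, airyUV_div_eq hη hk, sq (η : ℂ), mul_div_mul_comm,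
    airyUU_div_eq hη hk, airyVV_div_eq hη hk, wave_neg]
  field_simp
  linear_combination coupling η k ^ 2 * wave κ k ^ 2 * relUU f (-κ) k * relVV f κ k * ωc_cube

lemma conj_Df_conj_sq (hf : 0 < f) : starRingEnd ℂ (Df κ η f (starRingEnd ℂ (k ^ 2))) =
    Df κ η f (k ^ 2) +
      coupling η k / (airyPhase f 0 k * wave κ k) * growth κ η f k := by
  have h_phase : airyPhase f 0 k ≠ 0 := Complex.exp_ne_zero _
  have h_wave := wave_ne_zero κ k
  have h_minus : k ^ 2 - κ * f = k ^ 2 + (-κ : ℝ) * f := by push_cast; ring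
  rw [conj_Df_conj hf, h_minus, airyUV_div_eq hη hk, airyUV_div_eq hη hk, div_mul_eq_mul_div,
    mul_div_assoc, add_div, mul_div_right_comm, mul_div_right_comm, airyUU_div_eq hη hk,
    airyUU_div_eq hη hk, wave_neg, growth]
  congr 1
  field_simp
  linear_combination coupling η k * (relUU f (-κ) k * wave κ k ^ 2 *
    (1 - coupling η k * I * relUV f κ k) +
      relUU f κ k * (1 + coupling η k * I * relUV f (-κ) k)) * ωc_cube

end Expansion

/-! ### The determinant without field -/

lemma exists_pos_le_norm_of_im_nonneg {E : Type*} [NormedAddCommGroup E] {F : ℂ → E}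
    (hF : Continuous F) (h_ne : ∀ k : ℂ, 0 ≤ k.im → F k ≠ 0) {R c : ℝ} (hc : 0 < c)
    (h_large : ∀ k : ℂ, 0 ≤ k.im → R ≤ ‖k‖ → c ≤ ‖F k‖) :
    ∃ c' : ℝ, 0 < c' ∧ ∀ k : ℂ, 0 ≤ k.im → c' ≤ ‖F k‖ := by
  have h_compact : IsCompact (Metric.closedBall (0 : ℂ) |R| ∩ {k : ℂ | 0 ≤ k.im}) :=
    (isCompact_closedBall _ _).inter_right (isClosed_le continuous_const Complex.continuous_im)
  obtain ⟨k₀, ⟨-, hk₀⟩, h_min⟩ := h_compact.exists_isMinOn ⟨0, by simp⟩ hF.norm.continuousOn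
  refine ⟨min c ‖F k₀‖, lt_min hc (norm_pos_iff.2 (h_ne _ hk₀)), fun k hk => ?_⟩
  rcases le_total R ‖k‖ with h | h
  · exact (min_le_left _ _).trans (h_large k hk h)
  · exact (min_le_right _ _).trans (h_min ⟨by simpa using h.trans (le_abs_self R), hk⟩)

lemma eq_one_of_norm_le_one_of_one_le_re {w : ℂ} (h : ‖w‖ ≤ 1) (hr : 1 ≤ w.re) : w = 1 := by
  have h_re : w.re = 1 := le_antisymm ((Complex.re_le_norm w).trans h) hr
  have h_sq := Complex.sq_norm_sub_sq_re w
  have h_im : w.im = 0 := by nlinarith [norm_nonneg w]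
  exact Complex.ext h_re h_im

section HalfPlane

variable {a : ℝ} (ha : 0 < a) {k w : ℂ} (hw : ‖w‖ ≤ 1)
include ha hw

lemma eq_zero_of_add_mul_I_mul_one_add_eq_zero (hk : 0 ≤ k.im) (h : k + a * I * (1 + w) = 0) :
    k = 0 := by
  have h_im : k.im + a * (1 + w.re) = 0 := by
    simpa [mul_assoc, Complex.add_im, Complex.im_ofReal_mul] using congrArg Complex.im h
  have h_re : 1 ≤ (-w).re := by
    rw [Complex.neg_re]
    by_contra! h_lt
    nlinarith [mul_pos ha (show 0 < 1 + w.re by linarith)]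
  have h_one : -w = 1 := eq_one_of_norm_le_one_of_one_le_re (by rwa [norm_neg]) h_re
  linear_combination h + a * I * h_one

lemma norm_sub_le_norm_add_mul_I_mul_one_add : ‖k‖ - 2 * a ≤ ‖k + a * I * (1 + w)‖ := by
  have h_norm : ‖(a : ℂ) * I * (1 + w)‖ ≤ a * 2 := by
    rw [norm_mul, norm_mul, Complex.norm_I, mul_one, Complex.norm_real,
      Real.norm_of_nonneg ha.le]
    have h_two : ‖1 + w‖ ≤ 2 := (norm_add_le _ _).trans (by rw [norm_one]; linarith)
    gcongr
  have h_sub := norm_sub_le (k + a * I * (1 + w)) (a * I * (1 + w))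
  rw [add_sub_cancel_right] at h_sub
  linarith

end HalfPlane

lemma hasDerivAt_wave_zero (κ : ℝ) : HasDerivAt (wave κ) (2 * I * κ) 0 := by
  have h := ((hasDerivAt_id (0 : ℂ)).const_mul (2 * I * (κ : ℂ))).cexp
  exact h.congr_deriv (by simp)

lemma continuous_wave (κ : ℝ) : Continuous (wave κ) := by
  unfold wave
  fun_prop

lemma continuous_dslope_wave (κ : ℝ) : Continuous (dslope (wave κ) 0) := by
  rw [← continuousOn_univ, continuousOn_dslope univ_mem]
  exact ⟨(continuous_wave κ).continuousOn, (hasDerivAt_wave_zero κ).differentiableAt⟩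

lemma dslope_wave_zero (κ : ℝ) : dslope (wave κ) 0 0 = 2 * I * κ := by
  rw [dslope_same, (hasDerivAt_wave_zero κ).deriv]

lemma wave_zero_right (κ : ℝ) : wave κ 0 = 1 := by
  rw [wave, mul_zero, Complex.exp_zero]

lemma wave_two_mul (κ : ℝ) (k : ℂ) : wave (2 * κ) k = wave κ k ^ 2 := by
  rw [wave, wave, ← Complex.exp_nat_mul]
  push_cast
  ring_nf

lemma coupling_eq (η : ℝ) (k : ℂ) : coupling η k = (1 / (2 * η) : ℝ) / k := by
  rw [coupling]
  push_cast
  ring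

lemma coupling_mul_I_mul_one_sub_wave (κ η : ℝ) {k : ℂ} (hk : k ≠ 0) :
    coupling η k * I * (1 - wave κ k) = -((1 / (2 * η) : ℝ) * I * dslope (wave κ) 0 k) := by
  rw [coupling_eq, dslope_of_ne _ hk, slope_def_field, wave_zero_right]
  field_simp
  ring

lemma freeDet_eq (κ η : ℝ) (k : ℂ) : freeDet κ η k =
    (1 + coupling η k * I * (1 + wave κ k)) * (1 + coupling η k * I * (1 - wave κ k)) := by
  rw [freeDet]
  linear_combination coupling η k ^ 2 * wave κ k ^ 2 * Complex.I_sq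

lemma freeGrowth_eq (κ η : ℝ) {k : ℂ} (hk : k ≠ 0) : freeGrowth κ η k =
    1 + wave (2 * κ) k - (1 / (2 * η) : ℝ) * I * dslope (wave (2 * κ)) 0 k := by
  rw [sub_eq_add_neg, ← coupling_mul_I_mul_one_sub_wave _ _ hk, wave_two_mul, freeGrowth]
  ring

section LowerBounds

variable {κ η : ℝ} (hκ : 0 < κ) (hη : 0 < η)
include hκ hη

lemma exists_le_norm_one_add_coupling_mul_one_add_wave : ∃ c : ℝ, 0 < c ∧ ∀ k : ℂ, 0 ≤ k.im →
    k ≠ 0 → c * (1 + 1 / ‖k‖) ≤ ‖1 + coupling η k * I * (1 + wave κ k)‖ := by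
  set a : ℝ := 1 / (2 * η) with ha_def
  have ha : 0 < a := by positivity
  have h_cont := continuous_wave κ
  obtain ⟨c, hc, h_le⟩ := exists_pos_le_norm_of_im_nonneg (R := 2 * a + 1)
    (F := fun k => k + a * I * (1 + wave κ k)) (by fun_prop) (fun k hk h_zero => by
      have hk_zero := eq_zero_of_add_mul_I_mul_one_add_eq_zero ha (norm_wave_le_one hκ.le hk) hk
        h_zero
      simp [hk_zero, wave_zero_right, ha.ne', show (1 : ℂ) + 1 ≠ 0 by norm_num] at h_zero)
    one_pos (fun k hk hR => by
      linarith [norm_sub_le_norm_add_mul_I_mul_one_add (k := k) ha (norm_wave_le_one hκ.le hk)])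
  refine ⟨c / (c + 2 * a + 1), by positivity, fun k hk hk_ne => ?_⟩
  have h_norm : 0 < ‖k‖ := norm_pos_iff.2 hk_ne
  have h_far := norm_sub_le_norm_add_mul_I_mul_one_add (k := k) ha (norm_wave_le_one hκ.le hk)
  have h_eq : 1 + coupling η k * I * (1 + wave κ k) = (k + a * I * (1 + wave κ k)) / k := by
    rw [coupling_eq, ← ha_def]
    field_simp
  have h_near := h_le k hk
  rw [h_eq, norm_div, le_div_iff₀ h_norm, mul_assoc, add_mul, one_div_mul_cancel h_norm.ne',
    div_mul_eq_mul_div, div_le_iff₀ (by positivity)]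
  nlinarith

lemma exists_le_norm_one_add_coupling_mul_one_sub_wave : ∃ c : ℝ, 0 < c ∧ ∀ k : ℂ, 0 ≤ k.im →
    k ≠ 0 → c ≤ ‖1 + coupling η k * I * (1 - wave κ k)‖ := by
  set a : ℝ := 1 / (2 * η)
  have ha : 0 < a := by positivity
  have h_cont := continuous_dslope_wave κ
  have h_eq {k : ℂ} (hk : k ≠ 0) : (1 - a * I * dslope (wave κ) 0 k) * k =
      k + a * I * (1 + -wave κ k) := by
    rw [sub_eq_add_neg, ← coupling_mul_I_mul_one_sub_wave _ _ hk, coupling_eq]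
    field_simp
    ring
  have h_wave {k : ℂ} (hk : 0 ≤ k.im) : ‖-wave κ k‖ ≤ 1 :=
    (norm_neg _).trans_le (norm_wave_le_one hκ.le hk)
  obtain ⟨c, hc, h_le⟩ := exists_pos_le_norm_of_im_nonneg (R := 4 * a) (c := 1 / 2)
    (F := fun k => 1 - a * I * dslope (wave κ) 0 k) (by fun_prop) (fun k hk h_zero => by
      rcases eq_or_ne k 0 with rfl | hk_ne
      · rw [dslope_wave_zero] at h_zero
        have h_real : ((1 + 2 * a * κ : ℝ) : ℂ) = 0 := by
          push_cast
          linear_combination h_zero + 2 * a * κ * Complex.I_sq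
        have h_pos : 0 < 1 + 2 * a * κ := by positivity
        exact h_pos.ne' (by exact_mod_cast h_real)
      · have h_eq' := h_eq hk_ne
        rw [h_zero, zero_mul] at h_eq'
        exact hk_ne (eq_zero_of_add_mul_I_mul_one_add_eq_zero ha (h_wave hk) hk h_eq'.symm))
    (by norm_num) (fun k hk hR => by
      have hk_pos : 0 < ‖k‖ := lt_of_lt_of_le (by positivity) hR
      rw [← mul_le_mul_iff_left₀ hk_pos, ← norm_mul, h_eq (norm_pos_iff.1 hk_pos)]
      linarith [norm_sub_le_norm_add_mul_I_mul_one_add (k := k) ha (h_wave hk)])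
  refine ⟨c, hc, fun k hk hk_ne => (h_le k hk).trans_eq ?_⟩
  rw [coupling_mul_I_mul_one_sub_wave _ _ hk_ne, ← sub_eq_add_neg]

lemma exists_le_norm_freeDet : ∃ c : ℝ, 0 < c ∧ ∀ k : ℂ, 0 ≤ k.im → k ≠ 0 →
    c * (1 + 1 / ‖k‖) ≤ ‖freeDet κ η k‖ := by
  obtain ⟨c₁, hc₁, h₁⟩ := exists_le_norm_one_add_coupling_mul_one_add_wave hκ hη
  obtain ⟨c₂, hc₂, h₂⟩ := exists_le_norm_one_add_coupling_mul_one_sub_wave hκ hη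
  refine ⟨c₁ * c₂, mul_pos hc₁ hc₂, fun k hk hk_ne => ?_⟩
  rw [freeDet_eq, norm_mul, mul_right_comm]
  exact mul_le_mul (h₁ k hk hk_ne) (h₂ k hk hk_ne) hc₂.le (norm_nonneg _)

lemma exists_one_le_norm_freeGrowth : ∃ k₀ : ℝ, 0 < k₀ ∧ ∀ k : ℂ, k ≠ 0 → ‖k‖ ≤ k₀ →
    1 ≤ ‖freeGrowth κ η k‖ := by
  set a : ℝ := 1 / (2 * η)
  have h_wave := continuous_wave (2 * κ)
  have h_slope := continuous_dslope_wave (2 * κ)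
  have h_cont : Continuous fun k => ‖1 + wave (2 * κ) k - a * I * dslope (wave (2 * κ)) 0 k‖ := by
    fun_prop
  have h_zero : 1 < ‖1 + wave (2 * κ) 0 - a * I * dslope (wave (2 * κ)) 0 0‖ := by
    have h_eq : 1 + wave (2 * κ) 0 - a * I * dslope (wave (2 * κ)) 0 0 =
        ((2 + 4 * a * κ : ℝ) : ℂ) := by
      rw [wave_zero_right, dslope_wave_zero]
      push_cast
      linear_combination -4 * a * κ * Complex.I_sq
    rw [h_eq, Complex.norm_real, Real.norm_of_nonneg (by positivity)]
    have h_pos : 0 < a * κ := by positivity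
    linarith
  obtain ⟨δ, hδ, h_ball⟩ := Metric.eventually_nhds_iff.1
    (h_cont.continuousAt.eventually_const_lt h_zero)
  refine ⟨δ / 2, half_pos hδ, fun k hk hkδ => ?_⟩
  rw [freeGrowth_eq _ _ hk]
  exact (h_ball (y := k) (by rw [dist_zero_right]; linarith)).le

end LowerBounds

lemma re_coupling_mul_I_nonneg {η : ℝ} (hη : 0 ≤ η) {k : ℂ} (hk : 0 ≤ k.im) :
    0 ≤ (coupling η k * I).re := by
  have h_eq : coupling η k * I = (1 / (2 * η) : ℝ) * (I * k⁻¹) := by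
    rw [coupling_eq]
    ring
  rw [h_eq, Complex.re_ofReal_mul, Complex.I_mul_re, Complex.inv_im, neg_div, neg_neg]
  exact mul_nonneg (by positivity) (div_nonneg hk (Complex.normSq_nonneg _))

lemma norm_one_sub_le_norm_one_add {w : ℂ} (hw : 0 ≤ w.re) : ‖1 - w‖ ≤ ‖1 + w‖ := by
  rw [← sq_le_sq₀ (norm_nonneg _) (norm_nonneg _), ← Complex.normSq_eq_norm_sq,
    ← Complex.normSq_eq_norm_sq, Complex.normSq_sub, Complex.normSq_add]
  simp only [map_one, one_mul, Complex.conj_re]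
  linarith

lemma min_half_le_one_sub_exp_neg {x : ℝ} (hx : 0 ≤ x) : min (1 / 2) (x / 2) ≤ 1 - rexp (-x) := by
  have h_exp : rexp (-x) ≤ (1 + x)⁻¹ := by
    rw [Real.exp_neg]
    exact inv_anti₀ (by linarith) (by linarith [Real.add_one_le_exp x])
  rcases le_total x 1 with h | h
  · have h_inv : (1 + x)⁻¹ ≤ 1 - x / 2 := by
      rw [inv_le_iff_one_le_mul₀ (by linarith)]
      nlinarith
    exact (min_le_right _ _).trans (by linarith)
  · have h_inv : (1 + x)⁻¹ ≤ 2⁻¹ := inv_anti₀ two_pos (by linarith)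
    exact (min_le_left _ _).trans (by linarith)

lemma min_le_norm_freeGrowth {κ η : ℝ} (hκ : 0 ≤ κ) (hη : 0 ≤ η) {k : ℂ} (hk : 0 ≤ k.im) :
    min (1 / 2) (2 * κ * k.im) ≤ ‖freeGrowth κ η k‖ := by
  set w := coupling η k * I
  have hw : 0 ≤ w.re := re_coupling_mul_I_nonneg hη hk
  have h_one : 1 ≤ ‖1 + w‖ :=
    le_trans (by rw [Complex.add_re, Complex.one_re]; linarith) (Complex.re_le_norm _)
  have h_wave : ‖wave κ k ^ 2‖ = rexp (-(4 * κ * k.im)) := by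
    rw [← wave_two_mul, norm_wave]
    ring_nf
  have h_exp : rexp (-(4 * κ * k.im)) ≤ 1 :=
    Real.exp_le_one_iff.2 (by rw [neg_nonpos]; positivity)
  calc min (1 / 2) (2 * κ * k.im) = min (1 / 2) (4 * κ * k.im / 2) := by ring_nf
    _ ≤ (1 - rexp (-(4 * κ * k.im))) * 1 :=
      (min_half_le_one_sub_exp_neg (by positivity)).trans_eq (mul_one _).symm
    _ ≤ (1 - rexp (-(4 * κ * k.im))) * ‖1 + w‖ :=
      mul_le_mul_of_nonneg_left h_one (sub_nonneg.2 h_exp)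
    _ = ‖1 + w‖ - ‖wave κ k ^ 2‖ * ‖1 + w‖ := by rw [h_wave]; ring
    _ ≤ ‖1 + w‖ - ‖wave κ k ^ 2‖ * ‖1 - w‖ := by
      gcongr
      exact norm_one_sub_le_norm_one_add hw
    _ ≤ ‖freeGrowth κ η k‖ := by
      rw [← norm_mul, freeGrowth, add_comm (wave κ k ^ 2 * _)]
      simpa only [sub_neg_eq_add, norm_neg] using
        norm_sub_norm_le (1 + w) (-(wave κ k ^ 2 * (1 - w)))

lemma norm_one_add_mul_le {x a : ℂ} {δ : ℝ} (ha : ‖a - 1‖ ≤ δ) :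
    ‖1 + x * a‖ ≤ (1 + ‖x‖) * (1 + δ) := by
  have hδ : 0 ≤ δ := (norm_nonneg _).trans ha
  have ha' : ‖a‖ ≤ 1 + δ := by
    simpa using (norm_le_norm_add_norm_sub' a 1).trans (add_le_add_right ha ‖(1 : ℂ)‖)
  calc ‖1 + x * a‖ ≤ ‖(1 : ℂ)‖ + ‖x * a‖ := norm_add_le _ _
    _ = 1 + ‖x‖ * ‖a‖ := by rw [norm_one, norm_mul]
    _ ≤ (1 + ‖x‖) * (1 + δ) := by nlinarith [mul_le_mul_of_nonneg_left ha' (norm_nonneg x)]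

lemma norm_mul_one_add_mul_sub_le {x u a : ℂ} {δ : ℝ} (hu : ‖u - 1‖ ≤ δ) (ha : ‖a - 1‖ ≤ δ)
    (hδ : δ ≤ 1) : ‖u * (1 + x * a) - (1 + x)‖ ≤ 3 * δ * (1 + ‖x‖) := by
  have hδ0 : 0 ≤ δ := (norm_nonneg _).trans hu
  have h_ua : ‖u * a - 1‖ ≤ 3 * δ := (norm_mul_sub_one_le hu ha).trans (by nlinarith)
  calc ‖u * (1 + x * a) - (1 + x)‖ = ‖(u - 1) + x * (u * a - 1)‖ := by congr 1; ring
    _ ≤ ‖u - 1‖ + ‖x‖ * ‖u * a - 1‖ := (norm_add_le _ _).trans_eq (by rw [norm_mul])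
    _ ≤ δ + ‖x‖ * (3 * δ) := by gcongr
    _ ≤ 3 * δ * (1 + ‖x‖) := by nlinarith

section Perturbation

variable {κ η f δ : ℝ} {k : ℂ} (hκ : 0 ≤ κ) (hk : 0 ≤ k.im)
  (h_neg : AiryError f (-κ) k δ) (h_pos : AiryError f κ k δ)
include hκ hk h_neg h_pos

lemma norm_Df_sq_le (hη : η ≠ 0) (hk_ne : k ≠ 0) :
    ‖Df κ η f (k ^ 2)‖ ≤ 2 * ((1 + ‖coupling η k‖) * (1 + δ)) ^ 2 := by
  set q := coupling η k
  have hδ : 0 ≤ δ := (norm_nonneg _).trans h_pos.relUV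
  have hqI : ‖q * I‖ = ‖q‖ := by simp
  have h_wave := norm_wave_le_one hκ hk
  have h_minus : ‖1 + q * I * relUV f (-κ) k‖ ≤ (1 + ‖q‖) * (1 + δ) :=
    hqI ▸ norm_one_add_mul_le h_neg.relUV
  have h_plus : ‖1 + q * I * relUV f κ k‖ ≤ (1 + ‖q‖) * (1 + δ) :=
    hqI ▸ norm_one_add_mul_le h_pos.relUV
  have h_prod : ‖relUU f (-κ) k * relVV f κ k‖ ≤ (1 + δ) ^ 2 := by
    have h := norm_mul_sub_one_le h_neg.relUU h_pos.relVV
    have h' := norm_le_norm_add_norm_sub' (relUU f (-κ) k * relVV f κ k) 1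
    rw [norm_one] at h'
    linarith
  rw [Df_sq_eq hη hk_ne]
  calc _ ≤ ‖1 + q * I * relUV f (-κ) k‖ * ‖1 + q * I * relUV f κ k‖ +
        ‖q‖ ^ 2 * ‖wave κ k‖ ^ 2 * ‖relUU f (-κ) k * relVV f κ k‖ := by
        refine (norm_add_le _ _).trans_eq ?_
        rw [norm_mul, norm_mul, norm_mul, norm_pow, norm_pow]
    _ ≤ (1 + ‖q‖) * (1 + δ) * ((1 + ‖q‖) * (1 + δ)) +
        (1 + ‖q‖) ^ 2 * 1 ^ 2 * (1 + δ) ^ 2 := by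
        gcongr
        linarith
    _ = 2 * ((1 + ‖q‖) * (1 + δ)) ^ 2 := by ring

lemma norm_growth_le : ‖growth κ η f k‖ ≤ 2 * ((1 + ‖coupling η k‖) * (1 + δ)) ^ 2 := by
  set q := coupling η k
  have hδ : 0 ≤ δ := (norm_nonneg _).trans h_pos.relUV
  have h_wave : ‖wave κ k ^ 2‖ ≤ 1 :=
    (norm_pow _ _).trans_le (pow_le_one₀ (norm_nonneg _) (norm_wave_le_one hκ hk))
  have h_le (u : ℂ) (hu : ‖u - 1‖ ≤ δ) : ‖u‖ ≤ (1 + ‖q‖) * (1 + δ) := by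
    have h := norm_le_norm_add_norm_sub' u 1
    rw [norm_one] at h
    nlinarith [norm_nonneg q]
  have h_minus : ‖1 + -(q * I) * relUV f κ k‖ ≤ (1 + ‖q‖) * (1 + δ) := by
    simpa using norm_one_add_mul_le (x := -(q * I)) h_pos.relUV
  have h_plus : ‖1 + q * I * relUV f (-κ) k‖ ≤ (1 + ‖q‖) * (1 + δ) := by
    simpa using norm_one_add_mul_le (x := q * I) h_neg.relUV
  rw [growth, sub_eq_add_neg, ← neg_mul]
  calc _ ≤ ‖relUU f (-κ) k‖ * ‖wave κ k ^ 2‖ * ‖1 + -(q * I) * relUV f κ k‖ +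
        ‖relUU f κ k‖ * ‖1 + q * I * relUV f (-κ) k‖ := by
        refine (norm_add_le _ _).trans_eq ?_
        rw [norm_mul, norm_mul, norm_mul]
    _ ≤ (1 + ‖q‖) * (1 + δ) * 1 * ((1 + ‖q‖) * (1 + δ)) +
        (1 + ‖q‖) * (1 + δ) * ((1 + ‖q‖) * (1 + δ)) := by
        gcongr
        · exact h_le _ h_neg.relUU
        · exact h_le _ h_pos.relUU
    _ = 2 * ((1 + ‖q‖) * (1 + δ)) ^ 2 := by ring

variable (hδ : δ ≤ 1)
include hδ

lemma norm_Df_sq_sub_freeDet_le (hη : η ≠ 0) (hk_ne : k ≠ 0) :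
    ‖Df κ η f (k ^ 2) - freeDet κ η k‖ ≤
      6 * δ * ‖coupling η k‖ * (1 + ‖coupling η k‖) := by
  set q := coupling η k
  set x := q * I
  have hx : ‖x‖ = ‖q‖ := by simp [x]
  have hδ0 : 0 ≤ δ := (norm_nonneg _).trans h_pos.relUV
  have h_le : δ + δ + δ * δ ≤ 3 * δ := by nlinarith
  have hA := (norm_mul_sub_one_le h_neg.relUV h_pos.relUV).trans h_le
  have hUV := (norm_mul_sub_one_le h_neg.relUU h_pos.relVV).trans h_le
  have h_eq : Df κ η f (k ^ 2) - freeDet κ η k =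
      x * (relUV f (-κ) k - 1) + x * (relUV f κ k - 1) +
        x ^ 2 * (relUV f (-κ) k * relUV f κ k - 1) +
        q ^ 2 * wave κ k ^ 2 * (relUU f (-κ) k * relVV f κ k - 1) := by
    rw [Df_sq_eq hη hk_ne, freeDet]
    ring
  rw [h_eq]
  calc _ ≤ ‖q‖ * ‖relUV f (-κ) k - 1‖ + ‖q‖ * ‖relUV f κ k - 1‖ +
        ‖q‖ ^ 2 * ‖relUV f (-κ) k * relUV f κ k - 1‖ +
        ‖q‖ ^ 2 * ‖wave κ k‖ ^ 2 * ‖relUU f (-κ) k * relVV f κ k - 1‖ := by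
        refine norm_add₄_le.trans_eq ?_
        simp only [norm_mul, norm_pow, hx]
    _ ≤ ‖q‖ * δ + ‖q‖ * δ + ‖q‖ ^ 2 * (3 * δ) + ‖q‖ ^ 2 * 1 ^ 2 * (3 * δ) := by
        gcongr
        · exact h_neg.relUV
        · exact h_pos.relUV
        · exact norm_wave_le_one hκ hk
    _ ≤ 6 * δ * ‖q‖ * (1 + ‖q‖) := by nlinarith [mul_nonneg hδ0 (norm_nonneg q)]

lemma norm_growth_sub_freeGrowth_le :
    ‖growth κ η f k - freeGrowth κ η k‖ ≤ 6 * δ * (1 + ‖coupling η k‖) := by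
  set x := coupling η k * I
  have hx : ‖x‖ = ‖coupling η k‖ := by simp [x]
  have h_wave : ‖wave κ k ^ 2‖ ≤ 1 :=
    (norm_pow _ _).trans_le (pow_le_one₀ (norm_nonneg _) (norm_wave_le_one hκ hk))
  have h_minus := norm_mul_one_add_mul_sub_le (x := -x) h_neg.relUU h_pos.relUV hδ
  have h_plus := norm_mul_one_add_mul_sub_le (x := x) h_pos.relUU h_neg.relUV hδ
  rw [norm_neg] at h_minus
  have h_eq : growth κ η f k - freeGrowth κ η k =
      wave κ k ^ 2 * (relUU f (-κ) k * (1 + -x * relUV f κ k) - (1 + -x)) +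
        (relUU f κ k * (1 + x * relUV f (-κ) k) - (1 + x)) := by
    rw [growth, freeGrowth]
    ring
  rw [h_eq, ← hx]
  calc _ ≤ ‖wave κ k ^ 2‖ * ‖relUU f (-κ) k * (1 + -x * relUV f κ k) - (1 + -x)‖ +
        ‖relUU f κ k * (1 + x * relUV f (-κ) k) - (1 + x)‖ :=
        (norm_add_le _ _).trans_eq (by rw [norm_mul])
    _ ≤ 1 * (3 * δ * (1 + ‖x‖)) + 3 * δ * (1 + ‖x‖) := by gcongr
    _ = 6 * δ * (1 + ‖x‖) := by ring

end Perturbation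

/-- The coefficient in front of `growth κ η f k` in the determinant below the real axis. -/
noncomputable def gain (κ η f : ℝ) (k : ℂ) : ℂ := coupling η k / (airyPhase f 0 k * wave κ k)

lemma norm_Df_conj_sq {κ η f : ℝ} (hf : 0 < f) (hη : η ≠ 0) {k : ℂ} (hk : k ≠ 0) :
    ‖Df κ η f (starRingEnd ℂ (k ^ 2))‖ =
      ‖Df κ η f (k ^ 2) + gain κ η f k * growth κ η f k‖ := by
  rw [← RCLike.norm_conj, conj_Df_conj_sq hη hk hf, gain]

lemma norm_gain {η : ℝ} (hη : 0 < η) (κ f : ℝ) (k : ℂ) :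
    ‖gain κ η f k‖ = 1 / (2 * η) * ‖k‖⁻¹ * rexp (phaseExp f k + 2 * κ * k.im) := by
  rw [gain, norm_div, norm_mul, norm_coupling hη, norm_airyPhase_zero, norm_wave, ← Real.exp_add,
    div_eq_mul_inv, ← Real.exp_neg]
  ring_nf

lemma phaseExp_le {f : ℝ} (hf : 0 < f) {k : ℂ} (hk : 0 ≤ k.im) :
    phaseExp f k ≤ 4 / f * (‖k‖ ^ 2 * k.im) := by
  have h_norm := Complex.sq_norm_sub_sq_re k
  have h_im : (k ^ 3).im ≤ 3 * (‖k‖ ^ 2 * k.im) := by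
    rw [im_cube]
    nlinarith [mul_nonneg hk (sq_nonneg k.im)]
  calc phaseExp f k ≤ 4 / (3 * f) * (3 * (‖k‖ ^ 2 * k.im)) := by
        rw [phaseExp]
        gcongr
    _ = 4 / f * (‖k‖ ^ 2 * k.im) := by field_simp

namespace AiryRegime

variable {τ f : ℝ} {k : ℂ} (h : AiryRegime τ f k)
include h

lemma le_exp_mul_logErr {M : ℝ} (hM : 0 ≤ M) : M ≤ rexp (M * logErr f ‖k‖) := by
  linarith [Real.add_one_le_exp (M * logErr f ‖k‖), le_mul_of_one_le_right hM h.one_le_logErr]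

lemma mul_exp_mul_logErr_le {M : ℝ} (hM : 0 ≤ M) (c : ℝ) :
    M * rexp (c * logErr f ‖k‖) ≤ rexp ((M + c) * logErr f ‖k‖) := by
  rw [add_mul, Real.exp_add]
  exact mul_le_mul_of_nonneg_right (h.le_exp_mul_logErr hM) (Real.exp_pos _).le

lemma exp_neg_mul_logErr_le {M : ℝ} (hM : 0 < M) : rexp (-(M * logErr f ‖k‖)) ≤ M⁻¹ := by
  rw [Real.exp_neg]
  exact inv_anti₀ hM (h.le_exp_mul_logErr hM.le)

lemma one_add_norm_coupling_le {η : ℝ} (hη : 0 < η) :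
    1 + ‖coupling η k‖ ≤ (1 + 1 / (2 * η)) * rexp (logErr f ‖k‖) := by
  have h_one : 1 ≤ rexp (logErr f ‖k‖) := Real.one_le_exp (by linarith [h.one_le_logErr])
  rw [norm_coupling hη, add_mul, one_mul]
  gcongr
  exact h.inv_norm_le_exp_logErr

lemma norm_gain_le {κ η : ℝ} (hκ : 0 ≤ κ) (hη : 0 < η) : ‖gain κ η f k‖ ≤
    1 / (2 * η) * rexp (phaseExp f k + (1 + 2 * κ) * logErr f ‖k‖) := by
  have h_im : k.im ≤ logErr f ‖k‖ := (Complex.im_le_norm k).trans h.norm_le_logErr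
  rw [norm_gain hη, mul_assoc]
  gcongr
  calc ‖k‖⁻¹ * rexp (phaseExp f k + 2 * κ * k.im)
      ≤ rexp (logErr f ‖k‖) * rexp (phaseExp f k + 2 * κ * logErr f ‖k‖) := by
        gcongr
        exact h.inv_norm_le_exp_logErr
    _ = rexp (phaseExp f k + (1 + 2 * κ) * logErr f ‖k‖) := by
        rw [← Real.exp_add]
        ring_nf

lemma le_norm_gain {κ η : ℝ} (hκ : 0 ≤ κ) (hη : 0 < η) :
    1 / (2 * η) * rexp (phaseExp f k - logErr f ‖k‖) ≤ ‖gain κ η f k‖ := by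
  have h_inv : rexp (-logErr f ‖k‖) ≤ ‖k‖⁻¹ := by
    rw [Real.exp_neg]
    exact inv_anti₀ h.norm_pos h.norm_le_exp_logErr
  have h_im := h.im_nonneg
  rw [norm_gain hη, mul_assoc]
  gcongr
  calc rexp (phaseExp f k - logErr f ‖k‖) = rexp (-logErr f ‖k‖) * rexp (phaseExp f k) := by
        rw [← Real.exp_add]
        ring_nf
    _ ≤ ‖k‖⁻¹ * rexp (phaseExp f k + 2 * κ * k.im) := by
        gcongr
        exact le_add_of_nonneg_right (by positivity)

lemma mul_div_norm_le_of_mul_logErr_le {K : ℝ} (hK : 0 ≤ K) (hS : K * logErr f ‖k‖ ≤ phaseExp f k) :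
    K * (f / ‖k‖) ≤ 4 * k.im := by
  have hf := h.pos
  have hx := h.norm_pos
  have h_le : K * ‖k‖ ≤ 4 / f * (‖k‖ ^ 2 * k.im) :=
    (mul_le_mul_of_nonneg_left h.norm_le_logErr hK).trans (hS.trans (phaseExp_le hf h.im_nonneg))
  calc K * (f / ‖k‖) = K * ‖k‖ * (f / ‖k‖ ^ 2) := by field_simp
    _ ≤ 4 / f * (‖k‖ ^ 2 * k.im) * (f / ‖k‖ ^ 2) := by gcongr
    _ = 4 * k.im := by field_simp

end AiryRegime

lemma airyError_neg_and_self {κ f δ : ℝ} {k : ℂ} (hκ : 0 ≤ κ)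
    (h : ∀ t, |t| ≤ κ → AiryError f t k δ) : AiryError f (-κ) k δ ∧ AiryError f κ k δ :=
  ⟨h _ ((abs_neg κ).trans (abs_of_nonneg hκ)).le, h _ (abs_of_nonneg hκ).le⟩

lemma airyEps_add_div_le {k₀ x f : ℝ} (hf : 0 ≤ f) (hk₀ : 0 < k₀) (hx : k₀ ≤ x) :
    airyEps f x + airyEps f x / x ≤ (1 + 1 / k₀ ^ 2) * (1 + 1 / k₀) * (f / x) := by
  have hx' : 0 < x := hk₀.trans_le hx
  calc airyEps f x + airyEps f x / x = (1 + 1 / x ^ 2) * (1 + 1 / x) * (f / x) := by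
        rw [airyEps]
        field_simp
        ring
    _ ≤ (1 + 1 / k₀ ^ 2) * (1 + 1 / k₀) * (f / x) := by gcongr

section Bounds

variable {κ η : ℝ} (hκ : 0 < κ) (hη : 0 < η)
include hκ hη

lemma exists_norm_le_exp_mul_logErr : ∃ τ C : ℝ, 0 < τ ∧ τ ≤ 1 / 4 ∧ 0 < C ∧ ∀ (f : ℝ) (k : ℂ),
    AiryRegime τ f k → ‖Df κ η f (k ^ 2)‖ ≤ rexp (C * logErr f ‖k‖) ∧
      ‖growth κ η f k‖ ≤ rexp (C * logErr f ‖k‖) := by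
  obtain ⟨τ, C, hτ, hτ', hC, h_asymp⟩ := exists_airyAsymptotics hκ.le
  set M := 2 * ((1 + 1 / (2 * η)) * (1 + C)) ^ 2
  refine ⟨τ, M + (2 + 8 * κ), hτ, hτ', by positivity, fun f k hr => ?_⟩
  obtain ⟨h_neg, h_pos⟩ := airyError_neg_and_self hκ.le (h_asymp f k hr).general
  have hE := hr.one_le_logErr
  have h_bound : 2 * ((1 + ‖coupling η k‖) * (1 + C * rexp (4 * κ * logErr f ‖k‖))) ^ 2 ≤
      rexp ((M + (2 + 8 * κ)) * logErr f ‖k‖) := by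
    have h_one : 1 ≤ rexp (4 * κ * logErr f ‖k‖) := Real.one_le_exp (by positivity)
    calc _ ≤ 2 * ((1 + 1 / (2 * η)) * rexp (logErr f ‖k‖) *
          ((1 + C) * rexp (4 * κ * logErr f ‖k‖))) ^ 2 := by
          rw [one_add_mul C]
          gcongr
          exact hr.one_add_norm_coupling_le hη
      _ = M * (rexp (logErr f ‖k‖) * rexp (4 * κ * logErr f ‖k‖)) ^ 2 := by ring
      _ = M * rexp ((2 + 8 * κ) * logErr f ‖k‖) := by
          rw [← Real.exp_add, ← Real.exp_nat_mul]
          ring_nf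
      _ ≤ rexp ((M + (2 + 8 * κ)) * logErr f ‖k‖) := hr.mul_exp_mul_logErr_le (by positivity) _
  exact ⟨(norm_Df_sq_le hκ.le hr.im_nonneg h_neg h_pos hη.ne' hr.ne_zero).trans h_bound,
    (norm_growth_le hκ.le hr.im_nonneg h_neg h_pos).trans h_bound⟩

lemma exists_norm_Df_le : ∃ τ C : ℝ, 0 < τ ∧ τ ≤ 1 / 4 ∧ 0 < C ∧ ∀ (f : ℝ) (k : ℂ),
    AiryRegime τ f k → ‖Df κ η f (k ^ 2)‖ ≤ rexp (C * logErr f ‖k‖) ∧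
      ‖Df κ η f (starRingEnd ℂ (k ^ 2))‖ ≤ rexp (max (phaseExp f k) 0 + C * logErr f ‖k‖) := by
  obtain ⟨τ, C, hτ, hτ', hC, h_le⟩ := exists_norm_le_exp_mul_logErr hκ hη
  set a := 1 / (2 * η)
  refine ⟨τ, (1 + a) + (C + (1 + 2 * κ)), hτ, hτ', by positivity, fun f k hr => ?_⟩
  obtain ⟨h_det, h_growth⟩ := h_le f k hr
  set E := logErr f ‖k‖
  set S := phaseExp f k
  have hE : 1 ≤ E := hr.one_le_logErr
  have h_exp : rexp (C * E) ≤ rexp ((C + (1 + 2 * κ)) * E) := by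
    gcongr
    linarith
  have h_total := hr.mul_exp_mul_logErr_le (show 0 ≤ 1 + a by positivity) (C + (1 + 2 * κ))
  refine ⟨(h_det.trans h_exp).trans (le_trans ?_ h_total), ?_⟩
  · exact le_mul_of_one_le_left (Real.exp_pos _).le (le_add_of_nonneg_right (by positivity))
  have h_gain : ‖gain κ η f k‖ ≤ a * rexp (S + (1 + 2 * κ) * E) := hr.norm_gain_le hκ.le hη
  rw [norm_Df_conj_sq hr.pos hη.ne' hr.ne_zero]
  calc _ ≤ ‖Df κ η f (k ^ 2)‖ + ‖gain κ η f k‖ * ‖growth κ η f k‖ :=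
        (norm_add_le _ _).trans_eq (by rw [norm_mul])
    _ ≤ 1 * rexp ((C + (1 + 2 * κ)) * E) + a * rexp (S + (1 + 2 * κ) * E) * rexp (C * E) := by
        rw [one_mul]
        gcongr
        exact h_det.trans h_exp
    _ = rexp 0 * rexp ((C + (1 + 2 * κ)) * E) +
        a * (rexp S * rexp ((C + (1 + 2 * κ)) * E)) := by
        rw [Real.exp_zero, mul_assoc a, ← Real.exp_add, ← Real.exp_add]
        ring_nf
    _ ≤ rexp (max S 0) * rexp ((C + (1 + 2 * κ)) * E) +
        a * (rexp (max S 0) * rexp ((C + (1 + 2 * κ)) * E)) := by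
        gcongr
        · exact le_max_right _ _
        · exact le_max_left _ _
    _ = rexp (max S 0) * ((1 + a) * rexp ((C + (1 + 2 * κ)) * E)) := by ring
    _ ≤ rexp (max S 0 + ((1 + a) + (C + (1 + 2 * κ))) * E) := by
        rw [Real.exp_add]
        gcongr

lemma exists_le_norm_Df : ∃ τ c : ℝ, 0 < τ ∧ τ ≤ 1 / 4 ∧ 0 < c ∧ ∀ (f : ℝ) (k : ℂ),
    AiryRegime τ f k → StokesNegligible κ f k → c ≤ ‖Df κ η f (k ^ 2)‖ := by
  obtain ⟨τ₀, C, hτ₀, hτ₀', hC, h_asymp⟩ := exists_airyAsymptotics hκ.le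
  obtain ⟨c, hc, h_free⟩ := exists_le_norm_freeDet hκ hη
  set a := 1 / (2 * η)
  have ha : 0 < a := by positivity
  set τ := min τ₀ (min (1 / (2 * C)) (c / (24 * C * a * (1 + a))))
  have hτ₁ : τ ≤ 1 / (2 * C) := (min_le_right _ _).trans (min_le_left _ _)
  have hτ₂ : τ ≤ c / (24 * C * a * (1 + a)) := (min_le_right _ _).trans (min_le_right _ _)
  refine ⟨τ, c / 2, by positivity, (min_le_left _ _).trans hτ₀', half_pos hc,
    fun f k hr h_stokes => ?_⟩
  have hx := hr.norm_pos
  have hε := hr.airyEps_nonneg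
  have hδ : C * airyEps f ‖k‖ ≤ 1 := by
    rw [le_div_iff₀ (by positivity)] at hτ₁
    nlinarith [hr.airyEps_le]
  obtain ⟨h_neg, h_pos⟩ := airyError_neg_and_self hκ.le
    ((h_asymp f k (hr.mono (min_le_left _ _) hτ₀')).sharp h_stokes)
  have h_error : 6 * (C * airyEps f ‖k‖) * ‖coupling η k‖ * (1 + ‖coupling η k‖) ≤
      c / 2 * (1 + 1 / ‖k‖) := by
    rw [norm_coupling hη]
    calc _ = 6 * C * a * (airyEps f ‖k‖ / ‖k‖) * (1 + a * (1 / ‖k‖)) := by ring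
      _ ≤ 6 * C * a * (2 * (c / (24 * C * a * (1 + a)))) * ((1 + a) * (1 + 1 / ‖k‖)) := by
          gcongr
          · linarith [hr.airyEps_div_norm_le]
          · nlinarith [one_div_pos.2 hx]
      _ = c / 2 * (1 + 1 / ‖k‖) := by
          field_simp
          norm_num
  have h_sub := norm_Df_sq_sub_freeDet_le hκ.le hr.im_nonneg h_neg h_pos hδ hη.ne' hr.ne_zero
  have h_tri := norm_le_norm_add_norm_sub (Df κ η f (k ^ 2)) (freeDet κ η k)
  have h_one : c / 2 * 1 ≤ c / 2 * (1 + 1 / ‖k‖) := by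
    gcongr
    exact le_add_of_nonneg_right (by positivity)
  linarith [h_free k hr.im_nonneg hr.ne_zero]

omit hκ in
lemma exists_norm_growth_sub_freeGrowth_le (hκ : 0 ≤ κ) : ∃ τ C : ℝ, 0 < τ ∧ τ ≤ 1 / 4 ∧ 0 < C ∧
    ∀ (f : ℝ) (k : ℂ), AiryRegime τ f k → StokesNegligible κ f k →
      ‖growth κ η f k - freeGrowth κ η k‖ ≤ C * (airyEps f ‖k‖ + airyEps f ‖k‖ / ‖k‖) := by
  obtain ⟨τ₀, C, hτ₀, hτ₀', hC, h_asymp⟩ := exists_airyAsymptotics hκ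
  set a := 1 / (2 * η)
  have ha : 0 < a := by positivity
  set τ := min τ₀ (1 / (2 * C))
  refine ⟨τ, 6 * C * (1 + a), by positivity, (min_le_left _ _).trans hτ₀', by positivity,
    fun f k hr h_stokes => ?_⟩
  have hε := hr.airyEps_nonneg
  have hδ : C * airyEps f ‖k‖ ≤ 1 := by
    have hτ := (le_div_iff₀ (by positivity)).1 (min_le_right τ₀ (1 / (2 * C)))
    nlinarith [hr.airyEps_le]
  obtain ⟨h_neg, h_pos⟩ := airyError_neg_and_self hκ
    ((h_asymp f k (hr.mono (min_le_left _ _) hτ₀')).sharp h_stokes)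
  refine (norm_growth_sub_freeGrowth_le hκ hr.im_nonneg h_neg h_pos hδ).trans ?_
  rw [norm_coupling hη]
  calc _ = 6 * C * (airyEps f ‖k‖ + a * (airyEps f ‖k‖ / ‖k‖)) := by ring
    _ ≤ 6 * C * ((1 + a) * airyEps f ‖k‖ + (1 + a) * (airyEps f ‖k‖ / ‖k‖)) := by
        gcongr
        · exact le_mul_of_one_le_left hε (by linarith)
        · linarith
    _ = 6 * C * (1 + a) * (airyEps f ‖k‖ + airyEps f ‖k‖ / ‖k‖) := by ring

lemma exists_half_exp_le_norm_growth : ∃ τ K : ℝ, 0 < τ ∧ τ ≤ 1 / 4 ∧ 0 < K ∧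
    ∀ (f : ℝ) (k : ℂ), AiryRegime τ f k → K * logErr f ‖k‖ ≤ phaseExp f k →
      1 / 2 * rexp (-(2 * logErr f ‖k‖)) ≤ ‖growth κ η f k‖ := by
  obtain ⟨τ₀, C, hτ₀, hτ₀', hC, h_sub⟩ := exists_norm_growth_sub_freeGrowth_le hη hκ.le
  obtain ⟨k₀, hk₀, h_near⟩ := exists_one_le_norm_freeGrowth hκ hη
  set B := max 1 (C * ((1 + 1 / k₀ ^ 2) * (1 + 1 / k₀)))
  have hB : 1 ≤ B := le_max_left _ _
  set τ := min τ₀ (min (1 / (8 * C)) (1 / (4 * B)))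
  have hτ₁ : 8 * C * τ ≤ 1 :=
    (le_div_iff₀' (by positivity)).1 ((min_le_right _ _).trans (min_le_left _ _))
  have hτ₂ : 4 * B * τ ≤ 1 :=
    (le_div_iff₀' (by positivity)).1 ((min_le_right _ _).trans (min_le_right _ _))
  refine ⟨τ, max (4 * B / κ) (2 * κ + 2), by positivity, (min_le_left _ _).trans hτ₀',
    by positivity, fun f k hr hS => ?_⟩
  have hf := hr.pos
  have hx := hr.norm_pos
  have hE := hr.one_le_logErr
  have h_error := h_sub f k (hr.mono (min_le_left _ _) hτ₀') (Or.inr (le_trans (by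
    gcongr
    exact le_max_right _ _) hS))
  have h_tri := norm_le_norm_add_norm_sub (growth κ η f k) (freeGrowth κ η k)
  rcases le_total ‖k‖ k₀ with hk | hk
  · have h_exp : rexp (-(2 * logErr f ‖k‖)) ≤ 1 := Real.exp_le_one_iff.2 (by linarith)
    nlinarith [h_near k hr.ne_zero hk, hr.airyEps_le, hr.airyEps_div_norm_le]
  · have h_far : ‖growth κ η f k - freeGrowth κ η k‖ ≤ B * (f / ‖k‖) := by
      refine h_error.trans ((mul_le_mul_of_nonneg_left
        (airyEps_add_div_le hf.le hk₀ hk) hC.le).trans ?_)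
      rw [← mul_assoc]
      gcongr
      exact le_max_right _ _
    have h_im : 4 * B / κ * (f / ‖k‖) ≤ 4 * k.im :=
      hr.mul_div_norm_le_of_mul_logErr_le (by positivity) (le_trans (by
        gcongr
        exact le_max_left _ _) hS)
    have h_min : 2 * B * (f / ‖k‖) ≤ min (1 / 2) (2 * κ * k.im) := by
      refine le_min (by nlinarith [hr.div_norm_le]) ?_
      rw [div_mul_eq_mul_div, div_le_iff₀ hκ] at h_im
      linarith
    have h_free := h_min.trans (min_le_norm_freeGrowth hκ.le hη.le hr.im_nonneg)
    have h_one : 1 * (f / ‖k‖) ≤ B * (f / ‖k‖) := by gcongr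
    linarith [hr.exp_neg_two_mul_logErr_le, Real.exp_pos (-(2 * logErr f ‖k‖))]

lemma exists_exp_le_norm_Df_conj : ∃ τ C K : ℝ, 0 < τ ∧ τ ≤ 1 / 4 ∧ 0 < C ∧ 0 < K ∧
    ∀ (f : ℝ) (k : ℂ), AiryRegime τ f k → K * logErr f ‖k‖ ≤ phaseExp f k →
      rexp (phaseExp f k - C * logErr f ‖k‖) ≤ ‖Df κ η f (starRingEnd ℂ (k ^ 2))‖ := by
  obtain ⟨τ₁, C₁, hτ₁, hτ₁', -, h_le⟩ := exists_norm_le_exp_mul_logErr hκ hη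
  obtain ⟨τ₂, K, hτ₂, hτ₂', hK, h_growth⟩ := exists_half_exp_le_norm_growth hκ hη
  set a := 1 / (2 * η)
  have h_ratio : 0 < 4 / a := by positivity
  have h_tol : min τ₁ τ₂ ≤ 1 / 4 := (min_le_left _ _).trans hτ₁'
  refine ⟨min τ₁ τ₂, 3 + 4 / a, max K (C₁ + (3 + 4 / a)), by positivity, h_tol,
    by positivity, lt_max_of_lt_left hK, fun f k hr hS => ?_⟩
  have h_det := (h_le f k (hr.mono (min_le_left _ _) hτ₁')).1
  have h_gain : a * rexp (phaseExp f k - logErr f ‖k‖) ≤ ‖gain κ η f k‖ := hr.le_norm_gain hκ.le hη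
  have h_four : rexp (-(4 / a * logErr f ‖k‖)) ≤ a / 4 :=
    (hr.exp_neg_mul_logErr_le h_ratio).trans_eq (inv_div 4 a)
  set E := logErr f ‖k‖
  set S := phaseExp f k
  have hE : 1 ≤ E := hr.one_le_logErr
  have h_growth' := h_growth f k (hr.mono (min_le_right _ _) hτ₂') (le_trans (by
    gcongr
    exact le_max_left _ _) hS)
  have h_prod : 2 * rexp (S - (3 + 4 / a) * E) ≤ ‖gain κ η f k * growth κ η f k‖ := by
    rw [norm_mul]
    calc 2 * rexp (S - (3 + 4 / a) * E)
        = 2 * (rexp (S - E) * rexp (-(2 * E)) * rexp (-(4 / a * E))) := by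
          rw [← Real.exp_add, ← Real.exp_add]
          ring_nf
      _ ≤ 2 * (rexp (S - E) * rexp (-(2 * E)) * (a / 4)) := by gcongr
      _ = a * rexp (S - E) * (1 / 2 * rexp (-(2 * E))) := by ring
      _ ≤ ‖gain κ η f k‖ * ‖growth κ η f k‖ := by gcongr
  have h_small : rexp (C₁ * E) ≤ rexp (S - (3 + 4 / a) * E) := by
    have h_max : (C₁ + (3 + 4 / a)) * E ≤ S := le_trans (by
      gcongr
      exact le_max_right _ _) hS
    gcongr
    linarith
  have h_tri := norm_sub_le (Df κ η f (k ^ 2) + gain κ η f k * growth κ η f k) (Df κ η f (k ^ 2))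
  rw [add_sub_cancel_left] at h_tri
  rw [norm_Df_conj_sq hr.pos hη.ne' hr.ne_zero]
  linarith

lemma exists_le_norm_Df_conj : ∃ τ c K : ℝ, 0 < τ ∧ τ ≤ 1 / 4 ∧ 0 < c ∧ 0 < K ∧
    ∀ (f : ℝ) (k : ℂ), AiryRegime τ f k → phaseExp f k ≤ -(K * logErr f ‖k‖) →
      c ≤ ‖Df κ η f (starRingEnd ℂ (k ^ 2))‖ := by
  obtain ⟨τ₁, C, hτ₁, hτ₁', hC, h_le⟩ := exists_norm_le_exp_mul_logErr hκ hη
  obtain ⟨τ₂, c, hτ₂, hτ₂', hc, h_det⟩ := exists_le_norm_Df hκ hη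
  set a := 1 / (2 * η)
  have ha : 0 < a := by positivity
  refine ⟨min τ₁ τ₂, c / 2, C + (1 + 2 * κ) + 2 * a / c, by positivity,
    (min_le_left _ _).trans hτ₁', by positivity, by positivity, fun f k hr hS => ?_⟩
  have h_growth := (h_le f k (hr.mono (min_le_left _ _) hτ₁')).2
  have h_gain : ‖gain κ η f k‖ ≤ a * rexp (phaseExp f k + (1 + 2 * κ) * logErr f ‖k‖) :=
    hr.norm_gain_le hκ.le hη
  have h_exp : rexp (-(2 * a / c * logErr f ‖k‖)) ≤ c / (2 * a) :=
    (hr.exp_neg_mul_logErr_le (by positivity)).trans_eq (inv_div (2 * a) c)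
  set E := logErr f ‖k‖
  set S := phaseExp f k
  have hE : 1 ≤ E := hr.one_le_logErr
  have h_im : ‖k‖ / 2 ≤ k.im := by
    by_contra! h_lt
    have h_nonneg := phaseExp_nonneg_of_im_lt hr.pos hr.im_nonneg h_lt
    have h_pos : 0 < (C + (1 + 2 * κ) + 2 * a / c) * E := by positivity
    linarith
  have h_lower := h_det f k (hr.mono (min_le_right _ _) hτ₂') (Or.inl h_im)
  have h_prod : ‖gain κ η f k * growth κ η f k‖ ≤ c / 2 := by
    rw [norm_mul]
    calc _ ≤ a * rexp (S + (1 + 2 * κ) * E) * rexp (C * E) := by gcongr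
      _ = a * rexp (S + (C + (1 + 2 * κ)) * E) := by
        rw [mul_assoc, ← Real.exp_add]
        ring_nf
      _ ≤ a * rexp (-(2 * a / c * E)) := by
        gcongr
        linarith
      _ ≤ a * (c / (2 * a)) := by gcongr
      _ = c / 2 := by field_simp
  have h_tri := norm_sub_le (Df κ η f (k ^ 2) + gain κ η f k * growth κ η f k)
    (gain κ η f k * growth κ η f k)
  rw [add_sub_cancel_right] at h_tri
  rw [norm_Df_conj_sq hr.pos hη.ne' hr.ne_zero]
  linarith

end Bounds

/-! ### The Poisson–Jensen inequality -/

lemma sq_norm_sub_conj_mul (R : ℝ) (u z : ℂ) :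
    ‖(R : ℂ) ^ 2 - starRingEnd ℂ u * z‖ ^ 2 - R ^ 2 * ‖z - u‖ ^ 2 =
      (R ^ 2 - ‖u‖ ^ 2) * (R ^ 2 - ‖z‖ ^ 2) := by
  simp only [← Complex.normSq_eq_norm_sq, Complex.normSq_apply]
  simp [sq]
  ring

lemma log_norm_canonicalFactor_nonneg {R : ℝ} {u w : ℂ} (hu : ‖u‖ < R) (hw : ‖w‖ < R) :
    0 ≤ Real.log ‖Complex.canonicalFactor R u w‖ := by
  rcases eq_or_ne w u with rfl | hwu
  · simp
  have hR : 0 < R := (norm_nonneg u).trans_lt hu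
  refine Real.log_nonneg ?_
  rw [Complex.canonicalFactor_apply, norm_div, norm_mul, Complex.norm_real,
    Real.norm_of_nonneg hR.le,
    one_le_div₀ (mul_pos hR (norm_pos_iff.2 (sub_ne_zero.2 hwu)))]
  refine le_of_sq_le_sq ?_ (norm_nonneg _)
  have hfactors : 0 ≤ (R ^ 2 - ‖u‖ ^ 2) * (R ^ 2 - ‖w‖ ^ 2) :=
    mul_nonneg (sub_nonneg.2 (by gcongr)) (sub_nonneg.2 (by gcongr))
  linarith [sq_norm_sub_conj_mul R u w, mul_pow R ‖w - u‖ 2]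

section PoissonJensen

variable {g : ℂ → ℂ} {R : ℝ}

lemma meromorphicOrderAt_eq_zero_of_ne_zero (hg : Differentiable ℂ g) {z : ℂ} (hz : g z ≠ 0) :
    meromorphicOrderAt g z = 0 := by
  rw [(hg.analyticAt z).meromorphicOrderAt_eq, (hg.analyticAt z).analyticOrderAt_eq_zero.2 hz]
  rfl

lemma exists_ecanonicalDecomp_of_differentiable (hg : Differentiable ℂ g) (hR : 0 ≤ R) {w : ℂ}
    (hw : ‖w‖ ≤ R) (hgw : g w ≠ 0) : ∃ h, Complex.ECanonicalDecomp g h R := by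
  have hmero : MeromorphicOn g (Metric.closedBall 0 R) :=
    fun z _ => (hg.analyticAt z).meromorphicAt
  refine hmero.exists_ecanonicalDecomp ?_
  rw [← hmero.exists_meromorphicOrderAt_ne_top_iff_forall (Metric.isConnected_closedBall hR)]
  exact ⟨⟨w, by simpa using hw⟩, by simp [meromorphicOrderAt_eq_zero_of_ne_zero hg hgw]⟩

variable {h : ℂ → ℂ}

lemma log_norm_eq_of_ecanonicalDecomp (hg : Differentiable ℂ g) (hR : 0 < R)
    (hsph : ∀ z : ℂ, ‖z‖ = R → g z ≠ 0) (D : Complex.ECanonicalDecomp g h R) {z : ℂ}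
    (hz : ‖z‖ ≤ R) (hgz : g z ≠ 0) :
    Real.log ‖h z‖ = (∑ᶠ i, (MeromorphicOn.divisor g (Metric.ball 0 R) i) *
      Real.log ‖Complex.canonicalFactor R i z‖) + Real.log ‖g z‖ := by
  have hdiv : ∀ i, MeromorphicOn.divisor g (Metric.sphere 0 R) i = 0 := fun i => by
    by_cases hi : i ∈ Metric.sphere (0 : ℂ) R
    · rw [MeromorphicOn.divisor_apply (fun z _ => (hg.analyticAt z).meromorphicAt) hi,
        meromorphicOrderAt_eq_zero_of_ne_zero hg (hsph i (by simpa using hi))]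
      rfl
    · exact Function.locallyFinsuppWithin.apply_eq_zero_of_notMem _ hi
  rw [D.log_norm_eq (by simpa using hz) (meromorphicOrderAt_eq_zero_of_ne_zero hg hgz) hR,
    (hg.analyticAt z).meromorphicTrailingCoeffAt_of_ne_zero hgz]
  simp [hdiv]

lemma log_norm_eq_of_ecanonicalDecomp_sphere (hg : Differentiable ℂ g) (hR : 0 < R)
    (hsph : ∀ z : ℂ, ‖z‖ = R → g z ≠ 0) (D : Complex.ECanonicalDecomp g h R) {z : ℂ}
    (hz : ‖z‖ = R) : Real.log ‖h z‖ = Real.log ‖g z‖ := by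
  rw [log_norm_eq_of_ecanonicalDecomp hg hR hsph D hz.le (hsph z hz), add_eq_right]
  refine finsum_eq_zero_of_forall_eq_zero fun i => ?_
  by_cases hi : i ∈ Metric.ball (0 : ℂ) R
  · rw [Complex.norm_canonicalFactor_eval_circle_eq_one hi (by simpa using hz), Real.log_one,
      mul_zero]
  · rw [Function.locallyFinsuppWithin.apply_eq_zero_of_notMem _ hi, Int.cast_zero, zero_mul]

lemma log_norm_le_of_ecanonicalDecomp (hg : Differentiable ℂ g) (hR : 0 < R)
    (hsph : ∀ z : ℂ, ‖z‖ = R → g z ≠ 0) (D : Complex.ECanonicalDecomp g h R) {w : ℂ}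
    (hw : ‖w‖ < R) (hgw : g w ≠ 0) : Real.log ‖g w‖ ≤ Real.log ‖h w‖ := by
  rw [log_norm_eq_of_ecanonicalDecomp hg hR hsph D hw.le hgw]
  refine le_add_of_nonneg_left (finsum_nonneg fun i => ?_)
  by_cases hi : i ∈ Metric.ball (0 : ℂ) R
  · have hdiv := MeromorphicOn.AnalyticOnNhd.divisor_nonneg (𝕜 := ℂ) (f := g)
      (U := Metric.ball 0 R) (fun z _ => hg.analyticAt z) i
    exact mul_nonneg (by exact_mod_cast hdiv)
      (log_norm_canonicalFactor_nonneg (by simpa using hi) hw)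
  · rw [Function.locallyFinsuppWithin.apply_eq_zero_of_notMem _ hi, Int.cast_zero, zero_mul]

-- Removing the zeros of `g` by Blaschke factors preserves `|g|` on the circle and increases it
-- inside, and the Poisson formula is exact for the zero-free quotient.
lemma log_norm_le_circleAverage_poissonKernel (hg : Differentiable ℂ g)
    (hsph : ∀ z : ℂ, ‖z‖ = R → g z ≠ 0) {w : ℂ} (hw : ‖w‖ < R) (hgw : g w ≠ 0) :
    Real.log ‖g w‖ ≤
      Real.circleAverage (poissonKernel 0 w • fun z => Real.log ‖g z‖) 0 R := by
  have hR : 0 < R := (norm_nonneg w).trans_lt hw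
  obtain ⟨h, D⟩ := exists_ecanonicalDecomp_of_differentiable hg hR.le hw.le hgw
  have hharmonic : InnerProductSpace.HarmonicOnNhd (fun z => Real.log ‖h z‖)
      (Metric.closedBall 0 R) := fun z hz =>
    (D.analyticOnNhd z hz).harmonicAt_log_norm (D.ne_zero z hz)
  calc Real.log ‖g w‖ ≤ Real.log ‖h w‖ := log_norm_le_of_ecanonicalDecomp hg hR hsph D hw hgw
    _ = Real.circleAverage (poissonKernel 0 w • fun z => Real.log ‖h z‖) 0 R :=
      (hharmonic.circleAverage_poissonKernel_smul (by simpa using hw)).symm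
    _ = Real.circleAverage (poissonKernel 0 w • fun z => Real.log ‖g z‖) 0 R := by
      refine Real.circleAverage_congr_sphere fun z hz => ?_
      have hzR : ‖z‖ = R := by simpa [abs_of_pos hR] using hz
      simp only [Pi.smul_apply', log_norm_eq_of_ecanonicalDecomp_sphere hg hR hsph D hzR]

end PoissonJensen

/-! ### The logarithm of the determinant on a circle -/

/-- The size `(4/3) x³/f` of the exponent `phaseExp f k` on the circle `‖k‖ = x`. -/
noncomputable def peakExp (f x : ℝ) : ℝ := 4 / 3 * x ^ 3 / f

/-- The leading part of `log ‖Df κ η f (x² e^{it})‖` for `t ∈ [-π, π]`, which vanishes outside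
the sector `-2π/3 < t < 0`. -/
noncomputable def logModel (f x t : ℝ) : ℝ := peakExp f x * max (Real.sin (3 / 2 * max (-t) 0)) 0

/-- The square root `x e^{iθ/2}` of the energy `x² e^{iθ}`. -/
noncomputable def circleSqrt (x θ : ℝ) : ℂ := circleMap 0 x (θ / 2)

lemma norm_circleSqrt {x : ℝ} (hx : 0 < x) (θ : ℝ) : ‖circleSqrt x θ‖ = x := by
  rw [circleSqrt, norm_circleMap_zero, abs_of_pos hx]

lemma circleSqrt_re (x θ : ℝ) : (circleSqrt x θ).re = x * Real.cos (θ / 2) := by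
  rw [circleSqrt, circleMap_zero, Complex.re_ofReal_mul, Complex.exp_ofReal_mul_I_re]

lemma circleSqrt_im (x θ : ℝ) : (circleSqrt x θ).im = x * Real.sin (θ / 2) := by
  rw [circleSqrt, circleMap_zero, Complex.im_ofReal_mul, Complex.exp_ofReal_mul_I_im]

lemma circleSqrt_sq (x θ : ℝ) : circleSqrt x θ ^ 2 = circleMap 0 (x ^ 2) θ := by
  rw [circleSqrt, circleMap_zero_pow]
  congr 1
  push_cast
  ring

lemma conj_circleSqrt_sq (x θ : ℝ) :
    starRingEnd ℂ (circleSqrt x θ ^ 2) = circleMap 0 (x ^ 2) (-θ) := by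
  rw [circleSqrt_sq, circleMap_zero, circleMap_zero, map_mul, Complex.conj_ofReal,
    ← Complex.exp_conj]
  simp

lemma phaseExp_circleSqrt (f x θ : ℝ) :
    phaseExp f (circleSqrt x θ) = peakExp f x * Real.sin (3 / 2 * θ) := by
  have h_cube : circleSqrt x θ ^ 3 = ((x ^ 3 : ℝ) : ℂ) * Complex.exp ((3 / 2 * θ : ℝ) * I) := by
    rw [circleSqrt, circleMap_zero_pow, circleMap_zero]
    push_cast
    ring_nf
  rw [phaseExp, h_cube, Complex.im_ofReal_mul, Complex.exp_ofReal_mul_I_im, peakExp]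
  ring

lemma half_le_sin_three_halves {θ : ℝ} (h0 : 0 ≤ θ) (hθ : θ ≤ π / 3) :
    θ / 2 ≤ Real.sin (3 / 2 * θ) := by
  have h_chord := Real.mul_le_sin (x := 3 / 2 * θ) (by linarith) (by linarith)
  have h_slope : 1 / 2 * θ ≤ 2 / π * (3 / 2) * θ := by
    gcongr
    rw [div_mul_eq_mul_div, div_le_div_iff₀ (by norm_num) Real.pi_pos]
    linarith [Real.pi_lt_four]
  linarith

lemma half_le_circleSqrt_im {x θ : ℝ} (hx : 0 < x) (h0 : π / 3 ≤ θ) (hπ : θ ≤ π) :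
    x / 2 ≤ (circleSqrt x θ).im := by
  have h_sin : Real.sin (π / 6) ≤ Real.sin (θ / 2) :=
    Real.sin_le_sin_of_le_of_le_pi_div_two (by linarith [Real.pi_pos]) (by linarith) (by linarith)
  rw [Real.sin_pi_div_six] at h_sin
  rw [circleSqrt_im]
  nlinarith

lemma peakExp_nonneg {f x : ℝ} (hf : 0 ≤ f) (hx : 0 ≤ x) : 0 ≤ peakExp f x := by
  unfold peakExp; positivity

lemma logModel_of_nonneg (f x : ℝ) {t : ℝ} (ht : 0 ≤ t) : logModel f x t = 0 := by
  rw [logModel, max_eq_right (by linarith : -t ≤ 0)]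
  simp

lemma logModel_neg {f x θ : ℝ} (hf : 0 ≤ f) (hx : 0 ≤ x) (h0 : 0 ≤ θ) :
    logModel f x (-θ) = max (phaseExp f (circleSqrt x θ)) 0 := by
  rw [logModel, neg_neg, max_eq_left h0, phaseExp_circleSqrt, mul_max_of_nonneg _ _
    (peakExp_nonneg hf hx), mul_zero]

namespace AiryRegime

variable {τ f x θ : ℝ} (h : AiryRegime τ f (x : ℂ))
include h

lemma ofReal_pos : 0 < x :=
  lt_of_le_of_ne (by simpa using h.re_nonneg) fun hx => h.ne_zero (by simp [← hx])

lemma norm_ofReal : ‖(x : ℂ)‖ = x := by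
  rw [Complex.norm_real, Real.norm_of_nonneg h.ofReal_pos.le]

lemma circleSqrt (h0 : 0 ≤ θ) (hπ : θ ≤ π) : AiryRegime τ f (circleSqrt x θ) where
  tol_le := h.tol_le
  pos := h.pos
  small := h.small
  large := by simpa only [norm_circleSqrt h.ofReal_pos, h.norm_ofReal] using h.large
  re_nonneg := by
    rw [circleSqrt_re]
    exact mul_nonneg h.ofReal_pos.le
      (Real.cos_nonneg_of_mem_Icc ⟨by linarith [Real.pi_pos], by linarith⟩)
  im_nonneg := by
    rw [circleSqrt_im]
    exact mul_nonneg h.ofReal_pos.le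
      (Real.sin_nonneg_of_nonneg_of_le_pi (by linarith) (by linarith [Real.pi_pos]))
  ne_zero := norm_pos_iff.1 (by rw [norm_circleSqrt h.ofReal_pos]; exact h.ofReal_pos)

lemma one_le_logErr_ofReal : 1 ≤ logErr f x := by
  simpa only [h.norm_ofReal] using h.one_le_logErr

end AiryRegime

lemma ne_zero_and_le_log_norm {w : ℂ} {m : ℝ} (h : rexp m ≤ ‖w‖) :
    w ≠ 0 ∧ m ≤ Real.log ‖w‖ :=
  have hw : 0 < ‖w‖ := (Real.exp_pos m).trans_le h
  ⟨norm_pos_iff.1 hw, (Real.le_log_iff_exp_le hw).2 h⟩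

-- Since `Real.log 0 = 0`, the case `w = 0` is covered.
lemma log_norm_le_of_le_exp {w : ℂ} {m : ℝ} (h : ‖w‖ ≤ rexp m) (hm : 0 ≤ m) :
    Real.log ‖w‖ ≤ m := by
  rcases eq_or_ne w 0 with rfl | hw
  · simpa using hm
  · exact (Real.log_le_iff_le_exp (norm_pos_iff.2 hw)).2 h

section LogBounds

variable {κ η : ℝ} (hκ : 0 < κ) (hη : 0 < η)
include hκ hη

lemma exists_log_norm_Df_le : ∃ τ C : ℝ, 0 < τ ∧ τ ≤ 1 / 4 ∧ 0 < C ∧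
    ∀ f x t : ℝ, AiryRegime τ f (x : ℂ) → -π ≤ t → t ≤ π →
      Real.log ‖Df κ η f (circleMap 0 (x ^ 2) t)‖ ≤ logModel f x t + C * logErr f x := by
  obtain ⟨τ, C, hτ, hτ4, hC, hup⟩ := exists_norm_Df_le hκ hη
  refine ⟨τ, C, hτ, hτ4, hC, fun f x t h htl htr => ?_⟩
  have hCE : 0 ≤ C * logErr f x := mul_nonneg hC.le (zero_le_one.trans h.one_le_logErr_ofReal)
  rcases le_total 0 t with ht | ht
  · have hbound := (hup f _ (h.circleSqrt ht htr)).1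
    rw [norm_circleSqrt h.ofReal_pos, circleSqrt_sq] at hbound
    rw [logModel_of_nonneg f x ht, zero_add]
    exact log_norm_le_of_le_exp hbound hCE
  · have hbound := (hup f _ (h.circleSqrt (neg_nonneg.2 ht) (neg_le.1 htl))).2
    rw [norm_circleSqrt h.ofReal_pos, conj_circleSqrt_sq, ← logModel_neg h.pos.le h.ofReal_pos.le
      (neg_nonneg.2 ht), neg_neg] at hbound
    refine log_norm_le_of_le_exp hbound (add_nonneg ?_ hCE)
    exact mul_nonneg (peakExp_nonneg h.pos.le h.ofReal_pos.le) (le_max_right _ _)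

lemma exists_le_log_norm_Df_of_nonneg : ∃ τ C K : ℝ, 0 < τ ∧ τ ≤ 1 / 4 ∧ 0 ≤ C ∧ 0 < K ∧
    ∀ f x t : ℝ, AiryRegime τ f (x : ℂ) → 0 ≤ t → t ≤ π → K * logErr f x ≤ peakExp f x * t →
      Df κ η f (circleMap 0 (x ^ 2) t) ≠ 0 ∧
      logModel f x t - C * logErr f x ≤ Real.log ‖Df κ η f (circleMap 0 (x ^ 2) t)‖ := by
  obtain ⟨τ, c, hτ, hτ4, hc, hlow⟩ := exists_le_norm_Df hκ hη
  refine ⟨τ, |Real.log c|, 2 * (2 * κ + 2), hτ, hτ4, abs_nonneg _, by positivity,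
    fun f x t h ht htr hgap => ?_⟩
  have hΦ : 0 ≤ peakExp f x := peakExp_nonneg h.pos.le h.ofReal_pos.le
  have hstokes : StokesNegligible κ f (circleSqrt x t) := by
    rw [StokesNegligible, norm_circleSqrt h.ofReal_pos, phaseExp_circleSqrt]
    rcases le_total t (π / 3) with ht3 | ht3
    · right
      linarith [mul_le_mul_of_nonneg_left (half_le_sin_three_halves ht ht3) hΦ]
    · exact Or.inl (half_le_circleSqrt_im h.ofReal_pos ht3 htr)
  have hbound := hlow f _ (h.circleSqrt ht htr) hstokes
  rw [circleSqrt_sq, ← Real.exp_log hc] at hbound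
  obtain ⟨hne, hlog⟩ := ne_zero_and_le_log_norm hbound
  refine ⟨hne, le_trans ?_ hlog⟩
  rw [logModel_of_nonneg f x ht]
  linarith [neg_abs_le (Real.log c),
    le_mul_of_one_le_right (abs_nonneg (Real.log c)) h.one_le_logErr_ofReal]

lemma exists_le_log_norm_Df_neg_of_le : ∃ τ C K : ℝ, 0 < τ ∧ τ ≤ 1 / 4 ∧ 0 ≤ C ∧ 0 < K ∧
    ∀ f x θ : ℝ, AiryRegime τ f (x : ℂ) → 0 ≤ θ → θ ≤ 2 * π / 3 →
      K * logErr f x ≤ peakExp f x * θ → K * logErr f x ≤ peakExp f x * (2 * π / 3 - θ) →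
      Df κ η f (circleMap 0 (x ^ 2) (-θ)) ≠ 0 ∧
      logModel f x (-θ) - C * logErr f x ≤ Real.log ‖Df κ η f (circleMap 0 (x ^ 2) (-θ))‖ := by
  obtain ⟨τ, C, K, hτ, hτ4, hC, hK, hlow⟩ := exists_exp_le_norm_Df_conj hκ hη
  refine ⟨τ, C, 2 * K, hτ, hτ4, hC.le, by positivity, fun f x θ h h0 hθ hgap hgap' => ?_⟩
  have hΦ : 0 ≤ peakExp f x := peakExp_nonneg h.pos.le h.ofReal_pos.le
  have hKE : 0 ≤ K * logErr f x := mul_nonneg hK.le (zero_le_one.trans h.one_le_logErr_ofReal)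
  have hgrow : K * logErr f x ≤ phaseExp f (circleSqrt x θ) := by
    rw [phaseExp_circleSqrt]
    rcases le_total θ (π / 3) with h3 | h3
    · linarith [mul_le_mul_of_nonneg_left (half_le_sin_three_halves h0 h3) hΦ]
    · have hsin := half_le_sin_three_halves (θ := 2 * π / 3 - θ) (by linarith) (by linarith)
      rw [show 3 / 2 * (2 * π / 3 - θ) = π - 3 / 2 * θ by ring, Real.sin_pi_sub] at hsin
      linarith [mul_le_mul_of_nonneg_left hsin hΦ]
  have hbound := hlow f _ (h.circleSqrt h0 (by linarith [Real.pi_pos]))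
    (by rwa [norm_circleSqrt h.ofReal_pos])
  rw [norm_circleSqrt h.ofReal_pos, conj_circleSqrt_sq] at hbound
  rw [logModel_neg h.pos.le h.ofReal_pos.le h0, max_eq_left (hKE.trans hgrow)]
  exact ne_zero_and_le_log_norm hbound

lemma exists_le_log_norm_Df_neg_of_ge : ∃ τ C K : ℝ, 0 < τ ∧ τ ≤ 1 / 4 ∧ 0 ≤ C ∧ 0 < K ∧
    ∀ f x θ : ℝ, AiryRegime τ f (x : ℂ) → 2 * π / 3 ≤ θ → θ ≤ π →
      K * logErr f x ≤ peakExp f x * (θ - 2 * π / 3) →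
      Df κ η f (circleMap 0 (x ^ 2) (-θ)) ≠ 0 ∧
      logModel f x (-θ) - C * logErr f x ≤ Real.log ‖Df κ η f (circleMap 0 (x ^ 2) (-θ))‖ := by
  obtain ⟨τ, c, K, hτ, hτ4, hc, hK, hlow⟩ := exists_le_norm_Df_conj hκ hη
  refine ⟨τ, |Real.log c|, 2 * K, hτ, hτ4, abs_nonneg _, by positivity,
    fun f x θ h hθ hπ hgap => ?_⟩
  have h0 : 0 ≤ θ := (by positivity : 0 ≤ 2 * π / 3).trans hθ
  have hΦ : 0 ≤ peakExp f x := peakExp_nonneg h.pos.le h.ofReal_pos.le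
  have hKE : 0 ≤ K * logErr f x := mul_nonneg hK.le (zero_le_one.trans h.one_le_logErr_ofReal)
  have hdecay : phaseExp f (circleSqrt x θ) ≤ -(K * logErr f x) := by
    have hsin := half_le_sin_three_halves (θ := θ - 2 * π / 3) (by linarith) (by linarith)
    rw [show 3 / 2 * (θ - 2 * π / 3) = 3 / 2 * θ - π by ring, Real.sin_sub_pi] at hsin
    rw [phaseExp_circleSqrt]
    linarith [mul_le_mul_of_nonneg_left hsin hΦ]
  have hbound := hlow f _ (h.circleSqrt h0 hπ) (by rwa [norm_circleSqrt h.ofReal_pos])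
  rw [conj_circleSqrt_sq, ← Real.exp_log hc] at hbound
  obtain ⟨hne, hlog⟩ := ne_zero_and_le_log_norm hbound
  refine ⟨hne, le_trans ?_ hlog⟩
  rw [logModel_neg h.pos.le h.ofReal_pos.le h0, max_eq_right (by linarith)]
  linarith [neg_abs_le (Real.log c),
    le_mul_of_one_le_right (abs_nonneg (Real.log c)) h.one_le_logErr_ofReal]

lemma exists_le_log_norm_Df : ∃ τ C K : ℝ, 0 < τ ∧ τ ≤ 1 / 4 ∧ 0 ≤ C ∧ 0 < K ∧
    ∀ f x t : ℝ, AiryRegime τ f (x : ℂ) → -π ≤ t → t ≤ π →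
      K * logErr f x ≤ peakExp f x * |t| → K * logErr f x ≤ peakExp f x * |t + 2 * π / 3| →
      Df κ η f (circleMap 0 (x ^ 2) t) ≠ 0 ∧
      logModel f x t - C * logErr f x ≤ Real.log ‖Df κ η f (circleMap 0 (x ^ 2) t)‖ := by
  obtain ⟨τ₁, C₁, K₁, hτ₁, hτ₁4, hC₁, hK₁, hupper⟩ := exists_le_log_norm_Df_of_nonneg hκ hη
  obtain ⟨τ₂, C₂, K₂, hτ₂, hτ₂4, hC₂, hK₂, hgrow⟩ := exists_le_log_norm_Df_neg_of_le hκ hη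
  obtain ⟨τ₃, C₃, K₃, hτ₃, hτ₃4, hC₃, hK₃, hdecay⟩ := exists_le_log_norm_Df_neg_of_ge hκ hη
  refine ⟨min τ₁ (min τ₂ τ₃), C₁ + C₂ + C₃, K₁ + K₂ + K₃, lt_min hτ₁ (lt_min hτ₂ hτ₃),
    (min_le_left _ _).trans hτ₁4, by positivity, by positivity,
    fun f x t h htl htr hgap hgap' => ?_⟩
  have hE : 0 ≤ logErr f x := zero_le_one.trans h.one_le_logErr_ofReal
  have hC₁E := mul_nonneg hC₁ hE
  have hC₂E := mul_nonneg hC₂ hE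
  have hC₃E := mul_nonneg hC₃ hE
  have hK₁E := mul_nonneg hK₁.le hE
  have hK₂E := mul_nonneg hK₂.le hE
  have hK₃E := mul_nonneg hK₃.le hE
  rcases le_total 0 t with ht | ht
  · rw [abs_of_nonneg ht] at hgap
    obtain ⟨hne, hlog⟩ := hupper f x t (h.mono (min_le_left _ _) hτ₁4) ht htr (by linarith)
    exact ⟨hne, by linarith⟩
  obtain ⟨θ, rfl⟩ : ∃ θ, t = -θ := ⟨-t, (neg_neg t).symm⟩
  rw [abs_neg, abs_of_nonneg (by linarith)] at hgap
  rcases le_total θ (2 * π / 3) with hθ | hθ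
  · rw [abs_of_nonneg (by linarith)] at hgap'
    obtain ⟨hne, hlog⟩ := hgrow f x θ
      (h.mono ((min_le_right _ _).trans (min_le_left _ _)) hτ₂4) (by linarith) hθ
      (by linarith) (by linarith)
    exact ⟨hne, by linarith⟩
  · rw [abs_of_nonpos (by linarith)] at hgap'
    obtain ⟨hne, hlog⟩ := hdecay f x θ
      (h.mono ((min_le_right _ _).trans (min_le_right _ _)) hτ₃4) hθ (by linarith) (by linarith)
    exact ⟨hne, by linarith⟩

end LogBounds

/-! ### Mean values controlled off two arcs -/

lemma circleAverage_eq_integral_symm (F : ℂ → ℝ) (r : ℝ) :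
    Real.circleAverage F 0 r = (2 * π)⁻¹ * ∫ t in (-π)..π, F (circleMap 0 r t) := by
  have h := ((periodic_circleMap 0 r).comp F).intervalIntegral_add_eq (-π) 0
  rw [show -π + 2 * π = π by ring, zero_add] at h
  rw [Real.circleAverage_def, smul_eq_mul]
  exact congrArg _ h.symm

section PoissonKernel

variable {w : ℂ} {r : ℝ} (hw : ‖w‖ < r)
include hw

lemma continuous_poissonKernel_circleMap :
    Continuous fun t => poissonKernel 0 w (circleMap 0 r t) := by
  simp only [poissonKernel_def, sub_zero]
  refine Continuous.div (by fun_prop) (by fun_prop) fun t => ?_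
  refine pow_ne_zero 2 (norm_ne_zero_iff.2 (sub_ne_zero.2 fun h => ?_))
  rw [← h, norm_circleMap_zero] at hw
  exact (le_abs_self r).not_gt hw

lemma poissonKernel_circleMap_nonneg (t : ℝ) : 0 ≤ poissonKernel 0 w (circleMap 0 r t) := by
  simp only [poissonKernel_def, sub_zero, norm_circleMap_zero, sq_abs]
  have hsq : ‖w‖ ^ 2 ≤ r ^ 2 := by gcongr
  exact div_nonneg (by linarith) (by positivity)

lemma integral_poissonKernel_circleMap :
    ∫ t in (-π)..π, poissonKernel 0 w (circleMap 0 r t) = 2 * π := by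
  have hharmonic : InnerProductSpace.HarmonicOnNhd (fun _ : ℂ => (1 : ℝ))
      (Metric.closedBall 0 r) := fun z _ => by simp
  have h := hharmonic.circleAverage_poissonKernel_smul (w := w) (by simpa using hw)
  rw [circleAverage_eq_integral_symm] at h
  simp only [Pi.smul_apply', smul_eq_mul, mul_one] at h
  field_simp at h
  linarith

end PoissonKernel

section PoissonKernelLowerBound

variable {r s t : ℝ} (hr : 0 < r) (hs : 0 < s)
include hr hs

lemma norm_circleMap_sub_circleMap_le {θ : ℝ} (ht : |t - θ| ≤ 10 * s) :
    ‖circleMap 0 r t - circleMap 0 (r * (1 - s)) θ‖ ≤ 11 * (r * s) := by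
  have h_tangential : ‖circleMap 0 r t - circleMap 0 r θ‖ ≤ r * |t - θ| := by
    have h := (lipschitzWith_circleMap 0 r).dist_le_mul t θ
    rwa [dist_eq_norm, Real.dist_eq, Real.coe_nnabs, abs_of_pos hr] at h
  have h_radial : ‖circleMap 0 r θ - circleMap 0 (r * (1 - s)) θ‖ = r * s := by
    have h : circleMap 0 r θ - circleMap 0 (r * (1 - s)) θ = circleMap 0 (r * s) θ := by
      simp only [circleMap_zero]; push_cast; ring
    rw [h, norm_circleMap_zero, abs_of_pos (mul_pos hr hs)]
  have h_triangle := norm_sub_le_norm_sub_add_norm_sub (circleMap 0 r t) (circleMap 0 r θ)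
    (circleMap 0 (r * (1 - s)) θ)
  linarith [mul_le_mul_of_nonneg_left ht hr.le]

variable (hs1 : s < 1)
include hs1

lemma norm_circleMap_mul_one_sub_lt (θ : ℝ) : ‖circleMap 0 (r * (1 - s)) θ‖ < r := by
  rw [norm_circleMap_zero, abs_of_pos (mul_pos hr (by linarith))]
  nlinarith

lemma one_le_mul_poissonKernel_circleMap {θ : ℝ} (ht : |t - θ| ≤ 10 * s) :
    1 ≤ 121 * s * poissonKernel 0 (circleMap 0 (r * (1 - s)) θ) (circleMap 0 r t) := by
  have h_dist := norm_circleMap_sub_circleMap_le hr hs ht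
  have h_pos : 0 < ‖circleMap 0 r t - circleMap 0 (r * (1 - s)) θ‖ := by
    have h := norm_sub_norm_le (circleMap 0 r t) (circleMap 0 (r * (1 - s)) θ)
    rw [norm_circleMap_zero, abs_of_pos hr] at h
    linarith [norm_circleMap_mul_one_sub_lt hr hs hs1 θ]
  simp only [poissonKernel_def, sub_zero, norm_circleMap_zero, sq_abs]
  rw [← mul_div_assoc, le_div_iff₀ (by positivity), one_mul]
  refine (pow_le_pow_left₀ h_pos.le h_dist 2).trans ?_
  have h_factor : 0 ≤ s * (1 - s) := mul_nonneg hs.le (by linarith)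
  nlinarith [mul_nonneg (sq_nonneg r) h_factor]

lemma neg_add_mul_sum_poissonKernel_mul_le {ι : Type*} [Fintype ι] {θ ψ : ι → ℝ}
    (hψ : ∀ i, |θ i - ψ i| ≤ 8 * s) {L u : ℝ} (hL : 0 ≤ L) (hu : u ≤ 0)
    (h_far : (∀ i, 2 * s ≤ |t - θ i|) → -L ≤ u) :
    -L + 121 * s * ∑ i, poissonKernel 0 (circleMap 0 (r * (1 - s)) (ψ i)) (circleMap 0 r t) * u ≤
      u := by
  set P : ι → ℝ := fun i =>
    poissonKernel 0 (circleMap 0 (r * (1 - s)) (ψ i)) (circleMap 0 r t)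
  have hP0 i : 0 ≤ P i :=
    poissonKernel_circleMap_nonneg (norm_circleMap_mul_one_sub_lt hr hs hs1 (ψ i)) t
  rw [← Finset.sum_mul]
  by_cases h : ∀ i, 2 * s ≤ |t - θ i|
  · have h_sum : 0 ≤ ∑ i, P i := Finset.sum_nonneg fun i _ => hP0 i
    have h_nonpos := mul_nonpos_of_nonneg_of_nonpos h_sum hu
    linarith [h_far h, mul_nonpos_of_nonneg_of_nonpos (by positivity : 0 ≤ 121 * s) h_nonpos]
  · push Not at h
    obtain ⟨i, hi⟩ := h
    have h_near := one_le_mul_poissonKernel_circleMap hr hs hs1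
      ((abs_sub_le t (θ i) (ψ i)).trans (by linarith [hψ i] : _ ≤ 10 * s))
    have h_single : P i ≤ ∑ j, P j :=
      Finset.single_le_sum (fun j _ => hP0 j) (Finset.mem_univ i)
    have h_one : 1 ≤ 121 * s * ∑ j, P j := h_near.trans (by gcongr)
    linarith [mul_le_mul_of_nonpos_right h_one hu]

end PoissonKernelLowerBound

section LogNormComparison

variable {g : ℂ → ℂ} (hg : Differentiable ℂ g) {r : ℝ} (hr : 0 < r)
  (hsph : ∀ z : ℂ, ‖z‖ = r → g z ≠ 0)
include hg hr hsph

lemma continuous_log_norm_circleMap :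
    Continuous fun t => Real.log ‖g (circleMap 0 r t)‖ :=
  ((hg.continuous.comp (continuous_circleMap 0 r)).norm).log fun t =>
    norm_ne_zero_iff.2 (hsph _ (by simp [abs_of_pos hr]))

lemma le_integral_poissonKernel_mul_log_norm_sub {w : ℂ} (hw : ‖w‖ < r) (hgw : g w ≠ 0)
    {M : ℝ → ℝ} (hM : Continuous M) {B : ℝ} (hMB : ∀ t, M t ≤ B) :
    2 * π * (Real.log ‖g w‖ - B) ≤ ∫ t in (-π)..π, poissonKernel 0 w (circleMap 0 r t) *
      (Real.log ‖g (circleMap 0 r t)‖ - M t) := by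
  have hP := continuous_poissonKernel_circleMap hw
  have hu := continuous_log_norm_circleMap hg hr hsph
  have h_jensen := log_norm_le_circleAverage_poissonKernel hg hsph hw hgw
  rw [circleAverage_eq_integral_symm, inv_mul_eq_div, le_div_iff₀ (by positivity)] at h_jensen
  simp only [Pi.smul_apply', smul_eq_mul] at h_jensen
  have h_model : ∫ t in (-π)..π, poissonKernel 0 w (circleMap 0 r t) * M t ≤ 2 * π * B := by
    rw [← integral_poissonKernel_circleMap hw, ← intervalIntegral.integral_mul_const]
    exact intervalIntegral.integral_mono_on (by linarith [Real.pi_pos])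
      ((hP.mul hM).intervalIntegrable _ _) ((hP.mul continuous_const).intervalIntegrable _ _)
      fun t _ => mul_le_mul_of_nonneg_left (hMB t) (poissonKernel_circleMap_nonneg hw t)
  simp only [mul_sub]
  rw [intervalIntegral.integral_sub (Continuous.intervalIntegrable (by fun_prop) _ _)
    (Continuous.intervalIntegrable (by fun_prop) _ _)]
  linarith

variable {ι : Type*} [Fintype ι] {θ ψ : ι → ℝ} {A B s : ℝ} (hs : 0 < s) (hs1 : s < 1)
  (hψ : ∀ i, |θ i - ψ i| ≤ 8 * s) (h_base : ∀ i, g (circleMap 0 (r * (1 - s)) (ψ i)) ≠ 0)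
  (h_log : ∀ i, -A ≤ Real.log ‖g (circleMap 0 (r * (1 - s)) (ψ i))‖)
include hs hs1 hψ h_base h_log

-- On the exceptional arc around `θ i` the Poisson kernel of the `i`-th base point is at least
-- `1/(121 s)`, so the Poisson-Jensen inequality there controls the missing part of the integral.
lemma neg_le_integral_log_norm_sub {M : ℝ → ℝ} (hM : Continuous M) (hMB : ∀ t, M t ≤ B) {L : ℝ}
    (hL : 0 ≤ L) (h_up : ∀ t ∈ Icc (-π) π, Real.log ‖g (circleMap 0 r t)‖ ≤ M t)
    (h_low : ∀ t ∈ Icc (-π) π, (∀ i, 2 * s ≤ |t - θ i|) →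
      M t - L ≤ Real.log ‖g (circleMap 0 r t)‖) :
    -(2 * π * L + 242 * π * s * (Fintype.card ι * (A + B))) ≤
      ∫ t in (-π)..π, (Real.log ‖g (circleMap 0 r t)‖ - M t) := by
  set φ : ℝ → ℝ := fun t => Real.log ‖g (circleMap 0 r t)‖ - M t
  set P : ι → ℝ → ℝ := fun i t =>
    poissonKernel 0 (circleMap 0 (r * (1 - s)) (ψ i)) (circleMap 0 r t)
  have hw i := norm_circleMap_mul_one_sub_lt hr hs hs1 (ψ i)
  have hφ : Continuous φ := (continuous_log_norm_circleMap hg hr hsph).sub hM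
  have hP i : Continuous (P i) := continuous_poissonKernel_circleMap (hw i)
  have h_pointwise : ∀ t ∈ Icc (-π) π, -L + 121 * s * ∑ i, P i t * φ t ≤ φ t := fun t ht =>
    neg_add_mul_sum_poissonKernel_mul_le hr hs hs1 hψ hL (sub_nonpos.2 (h_up t ht))
      fun h_far => le_sub_iff_add_le'.2 (h_low t ht h_far)
  have h_kernel i : -(2 * π * (A + B)) ≤ ∫ t in (-π)..π, P i t * φ t := by
    refine le_trans ?_
      (le_integral_poissonKernel_mul_log_norm_sub hg hr hsph (hw i) (h_base i) hM hMB)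
    linarith [mul_le_mul_of_nonneg_left (h_log i) Real.two_pi_pos.le]
  have h_int := intervalIntegral.integral_mono_on (μ := volume) (by linarith [Real.pi_pos])
    (Continuous.intervalIntegrable (by fun_prop) _ _) (hφ.intervalIntegrable _ _) h_pointwise
  refine le_trans ?_ h_int
  rw [intervalIntegral.integral_add (Continuous.intervalIntegrable (by fun_prop) _ _)
    (Continuous.intervalIntegrable (by fun_prop) _ _), intervalIntegral.integral_const_mul,
    intervalIntegral.integral_finsetSum
      fun i _ => Continuous.intervalIntegrable (by fun_prop) _ _,
    intervalIntegral.integral_const, smul_eq_mul]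
  have h_sum := Finset.card_nsmul_le_sum Finset.univ _ _ fun i _ => h_kernel i
  rw [nsmul_eq_mul, Finset.card_univ] at h_sum
  linarith [mul_le_mul_of_nonneg_left h_sum (by positivity : 0 ≤ 121 * s)]

lemma abs_integral_log_norm_sub_le {H : ℝ → ℝ} (hH : Continuous H) (hHB : ∀ t, H t ≤ B)
    (hA : 0 ≤ A) (h_up : ∀ t ∈ Icc (-π) π, Real.log ‖g (circleMap 0 r t)‖ ≤ H t + A)
    (h_low : ∀ t ∈ Icc (-π) π, (∀ i, 2 * s ≤ |t - θ i|) →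
      H t - A ≤ Real.log ‖g (circleMap 0 r t)‖) (hB : 0 ≤ B) :
    |(∫ t in (-π)..π, Real.log ‖g (circleMap 0 r t)‖) - ∫ t in (-π)..π, H t| ≤
      2 * π * A + 242 * π * s * (Fintype.card ι * (2 * A + B)) := by
  have hu := continuous_log_norm_circleMap hg hr hsph
  have h_lower := neg_le_integral_log_norm_sub hg hr hsph hs hs1 hψ h_base h_log
    (M := fun t => H t + A) (B := B + A) (L := 2 * A) (by fun_prop)
    (fun t => by linarith [hHB t]) (by linarith) h_up
    fun t ht h_far => by linarith [h_low t ht h_far]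
  have h_upper : ∫ t in (-π)..π, Real.log ‖g (circleMap 0 r t)‖ ≤ ∫ t in (-π)..π, (H t + A) :=
    intervalIntegral.integral_mono_on (by linarith [Real.pi_pos])
      (hu.intervalIntegrable _ _) (Continuous.intervalIntegrable (by fun_prop) _ _) h_up
  rw [intervalIntegral.integral_sub (hu.intervalIntegrable _ _)
    (Continuous.intervalIntegrable (by fun_prop) _ _)] at h_lower
  rw [intervalIntegral.integral_add (hH.intervalIntegrable _ _)
    (continuous_const.intervalIntegrable _ _), intervalIntegral.integral_const,
    smul_eq_mul] at h_lower h_upper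
  have h_exceptional : 0 ≤ 242 * π * s * (Fintype.card ι * (2 * A + B)) := by positivity
  rw [abs_le]
  constructor <;> linarith

end LogNormComparison

lemma differentiable_Df (κ η f : ℝ) : Differentiable ℂ (Df κ η f) := by
  have hAi := differentiable_Ai
  unfold Df alphaP alphaM betaP betaM
  fun_prop

lemma peakExp_mul (f x c : ℝ) : peakExp f (x * c) = c ^ 3 * peakExp f x := by
  unfold peakExp; ring

lemma logErr_mono {f x y : ℝ} (hf : 0 < f) (hf1 : f ≤ 1) (hx : 0 ≤ x) (hxy : x ≤ y) :
    logErr f x ≤ logErr f y := by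
  have h_inv : 1 ≤ f⁻¹ := (one_le_inv₀ hf).2 hf1
  have h_log : 0 ≤ Real.log (f⁻¹ + x ^ 2) := Real.log_nonneg (by nlinarith)
  have hy : 0 ≤ 1 + y := by linarith
  unfold logErr
  gcongr

section ModelIntegral

lemma continuous_logModel (f x : ℝ) : Continuous (logModel f x) := by
  unfold logModel; fun_prop

lemma logModel_nonneg {f x : ℝ} (hf : 0 ≤ f) (hx : 0 ≤ x) (t : ℝ) : 0 ≤ logModel f x t :=
  mul_nonneg (peakExp_nonneg hf hx) (le_max_right _ _)

lemma logModel_le_peakExp {f x : ℝ} (hf : 0 ≤ f) (hx : 0 ≤ x) (t : ℝ) :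
    logModel f x t ≤ peakExp f x :=
  mul_le_of_le_one_right (peakExp_nonneg hf hx) (max_le (Real.sin_le_one _) zero_le_one)

lemma logModel_of_le_neg (f x : ℝ) {t : ℝ} (hπ : -π ≤ t) (ht : t ≤ -(2 * π / 3)) :
    logModel f x t = 0 := by
  have h_sin : Real.sin (3 / 2 * -t) ≤ 0 := by
    rw [← neg_neg (Real.sin _), ← Real.sin_sub_pi, neg_nonpos]
    exact Real.sin_nonneg_of_nonneg_of_le_pi (by linarith) (by linarith)
  rw [logModel, max_eq_left (by linarith [Real.pi_pos] : 0 ≤ -t), max_eq_right h_sin, mul_zero]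

lemma logModel_of_neg_le_of_nonpos (f x : ℝ) {t : ℝ} (ht : -(2 * π / 3) ≤ t) (h0 : t ≤ 0) :
    logModel f x t = peakExp f x * Real.sin (-(3 / 2) * t) := by
  have h_sin : 0 ≤ Real.sin (3 / 2 * -t) :=
    Real.sin_nonneg_of_nonneg_of_le_pi (by linarith) (by linarith)
  rw [logModel, max_eq_left (by linarith : 0 ≤ -t), max_eq_left h_sin, mul_neg, neg_mul]

lemma integral_logModel (f x : ℝ) : ∫ t in (-π)..π, logModel f x t = 4 / 3 * peakExp f x := by
  have hπ := Real.pi_pos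
  have h_left : ∫ t in (-π)..(-(2 * π / 3)), logModel f x t = 0 := by
    refine intervalIntegral.integral_zero_ae (ae_of_all _ fun t ht => ?_)
    rw [uIoc_of_le (by linarith)] at ht
    exact logModel_of_le_neg f x ht.1.le ht.2
  have h_mid : ∫ t in (-(2 * π / 3))..0, logModel f x t = 4 / 3 * peakExp f x := by
    rw [intervalIntegral.integral_congr (g := fun t => peakExp f x * Real.sin (-(3 / 2) * t))
      fun t ht => ?_, intervalIntegral.integral_const_mul,
      intervalIntegral.integral_comp_mul_left (fun t => Real.sin t) (by norm_num), integral_sin,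
      show -(3 / 2 : ℝ) * -(2 * π / 3) = π by ring, mul_zero, Real.cos_pi, Real.cos_zero,
      smul_eq_mul]
    · ring
    · rw [uIcc_of_le (by linarith)] at ht
      exact logModel_of_neg_le_of_nonpos f x ht.1 ht.2
  have h_right : ∫ t in (0 : ℝ)..π, logModel f x t = 0 := by
    refine intervalIntegral.integral_zero_ae (ae_of_all _ fun t ht => ?_)
    rw [uIoc_of_le hπ.le] at ht
    exact logModel_of_nonneg f x ht.1.le
  have h_int a b : IntervalIntegrable (logModel f x) volume a b :=
    (continuous_logModel f x).intervalIntegrable a b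
  rw [← intervalIntegral.integral_add_adjacent_intervals (h_int (-π) 0) (h_int 0 π),
    ← intervalIntegral.integral_add_adjacent_intervals (h_int (-π) (-(2 * π / 3))) (h_int _ 0),
    h_left, h_mid, h_right]
  ring

end ModelIntegral

-- The model `logModel` vanishes at the exceptional angles `0` and `-2π/3`, where `log |g|` may be
-- very negative; the base points of the Poisson-Jensen inequality are shifted off them by `8 s`.
lemma abs_integral_log_norm_sub_peakExp_le {g : ℂ → ℂ} (hg : Differentiable ℂ g) {f x s A : ℝ}
    (hf : 0 ≤ f) (hx : 0 < x) (hsph : ∀ z : ℂ, ‖z‖ = x ^ 2 → g z ≠ 0) (hs : 0 < s)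
    (hs1 : s ≤ 1 / 100) (hA : 0 ≤ A)
    (h_up : ∀ t, -π ≤ t → t ≤ π → Real.log ‖g (circleMap 0 (x ^ 2) t)‖ ≤ logModel f x t + A)
    (h_low : ∀ t, -π ≤ t → t ≤ π → 2 * s ≤ |t| → 2 * s ≤ |t + 2 * π / 3| →
      logModel f x t - A ≤ Real.log ‖g (circleMap 0 (x ^ 2) t)‖)
    (h_base : ∀ t, -π ≤ t → t ≤ π → 8 * s ≤ |t| → 8 * s ≤ |t + 2 * π / 3| →
      g (circleMap 0 (x ^ 2 * (1 - s)) t) ≠ 0 ∧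
        -A ≤ Real.log ‖g (circleMap 0 (x ^ 2 * (1 - s)) t)‖) :
    |(∫ t in (-π)..π, Real.log ‖g (circleMap 0 (x ^ 2) t)‖) - 4 / 3 * peakExp f x| ≤
      2 * π * A + 484 * π * s * (2 * A + peakExp f x) := by
  have hπ := Real.pi_gt_three
  have h₀ := h_base (8 * s) (by linarith) (by linarith) (le_abs_self _)
    (le_trans (by linarith) (le_abs_self _))
  have h₁ := h_base (-(2 * π / 3) - 8 * s) (by linarith) (by linarith)
    (le_trans (by linarith) (neg_le_abs _)) (le_trans (by linarith) (neg_le_abs _))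
  have key := abs_integral_log_norm_sub_le hg (by positivity : 0 < x ^ 2) hsph
    (θ := ![0, -(2 * π / 3)]) (ψ := ![8 * s, -(2 * π / 3) - 8 * s]) (A := A) hs (by linarith)
    (by simp [Fin.forall_fin_two, abs_of_pos hs]) (by simpa [Fin.forall_fin_two] using ⟨h₀.1, h₁.1⟩)
    (by simpa [Fin.forall_fin_two] using ⟨h₀.2, h₁.2⟩) (continuous_logModel f x)
    (logModel_le_peakExp hf hx.le) hA (fun t ht => h_up t ht.1 ht.2)
    (fun t ht h_far => by
      rw [Fin.forall_fin_two] at h_far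
      simp only [Matrix.cons_val_zero, Matrix.cons_val_one, sub_zero, sub_neg_eq_add] at h_far
      exact h_low t ht.1 ht.2 h_far.1 h_far.2)
    (peakExp_nonneg hf hx.le)
  rw [integral_logModel, Fintype.card_fin] at key
  refine key.trans_eq ?_
  push_cast
  ring

lemma AiryRegime.ofReal_mul {τ f x c : ℝ} (h : AiryRegime (τ / 2) f (x : ℂ)) (hτ : τ ≤ 1 / 4)
    (hc : 0 < c) (hc4 : 1 / 2 ≤ c ^ 4) : AiryRegime τ f ((x * c : ℝ) : ℂ) := by
  have hx := h.ofReal_pos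
  have hτ2 : f ≤ τ / 2 := h.small
  have h_large := h.large
  rw [h.norm_ofReal] at h_large
  refine ⟨hτ, h.pos, by linarith [h.pos], ?_, ?_, by simp, by simp [hx.ne', hc.ne']⟩
  · rw [Complex.norm_real, Real.norm_of_nonneg (by positivity), mul_pow]
    nlinarith [mul_nonneg (by linarith [h.pos] : 0 ≤ τ) (by positivity : 0 ≤ x ^ 4)]
  · rw [Complex.ofReal_re]
    positivity

section MeanValue

variable {κ η : ℝ} (hκ : 0 < κ) (hη : 0 < η)
include hκ hη

lemma exists_neg_le_log_norm_Df_circleMap_mul_one_sub : ∃ τ C K : ℝ, 0 < τ ∧ τ ≤ 1 / 4 ∧ 0 ≤ C ∧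
    0 < K ∧ ∀ f x s t : ℝ, AiryRegime τ f (x : ℂ) → 0 < s → s ≤ 1 / 100 →
      K * logErr f x ≤ s * peakExp f x → -π ≤ t → t ≤ π → 8 * s ≤ |t| →
        8 * s ≤ |t + 2 * π / 3| → Df κ η f (circleMap 0 (x ^ 2 * (1 - s)) t) ≠ 0 ∧
          -(C * logErr f x) ≤ Real.log ‖Df κ η f (circleMap 0 (x ^ 2 * (1 - s)) t)‖ := by
  obtain ⟨τ, C, K, hτ, hτ4, hC, hK, h_low⟩ := exists_le_log_norm_Df hκ hη
  refine ⟨τ / 2, C, K, by positivity, by linarith, hC, hK,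
    fun f x s t h hs hs1 hsΦ h1 h2 h3 h4 => ?_⟩
  have hx := h.ofReal_pos
  have hΦ := peakExp_nonneg h.pos.le hx.le
  set c := √(1 - s)
  have hc2 : c ^ 2 = 1 - s := Real.sq_sqrt (by linarith)
  have hc : 0 < c := Real.sqrt_pos.2 (by linarith)
  have hc1 : c ≤ 1 := Real.sqrt_le_one.2 (by linarith)
  have hc3 : 1 / 2 ≤ c ^ 3 := by
    rw [pow_succ, hc2]
    nlinarith
  have hc4 : 1 / 2 ≤ c ^ 4 := by
    rw [show c ^ 4 = (c ^ 2) ^ 2 by ring, hc2]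
    nlinarith
  have hE : logErr f (x * c) ≤ logErr f x := logErr_mono h.pos (by linarith [h.small, h.tol_le])
    (by positivity) (mul_le_of_le_one_right hx.le hc1)
  have h_gap : ∀ d, 8 * s ≤ d → K * logErr f (x * c) ≤ peakExp f (x * c) * d := fun d hd => by
    have h_scale : peakExp f x / 2 * (8 * s) ≤ peakExp f (x * c) * d := by
      rw [peakExp_mul]
      exact mul_le_mul (by nlinarith) hd (by positivity) (by positivity)
    have hKE : K * logErr f (x * c) ≤ K * logErr f x := by gcongr
    linarith [mul_nonneg hs.le hΦ]
  obtain ⟨h_ne, h_log⟩ := h_low f (x * c) t (h.ofReal_mul hτ4 hc hc4) h1 h2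
    (h_gap _ h3) (h_gap _ h4)
  rw [mul_pow, hc2] at h_ne h_log
  have hCE : C * logErr f (x * c) ≤ C * logErr f x := by gcongr
  exact ⟨h_ne, by linarith [logModel_nonneg h.pos.le (by positivity : 0 ≤ x * c) t]⟩

lemma exists_log_norm_Df_bounds : ∃ τ C K : ℝ, 0 < τ ∧ τ ≤ 1 / 4 ∧ 0 < C ∧ 0 < K ∧
    ∀ f x s : ℝ, AiryRegime τ f (x : ℂ) → 0 < s → s ≤ 1 / 100 → K * logErr f x ≤ s * peakExp f x →
      (∀ t, -π ≤ t → t ≤ π →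
        Real.log ‖Df κ η f (circleMap 0 (x ^ 2) t)‖ ≤ logModel f x t + C * logErr f x) ∧
      (∀ t, -π ≤ t → t ≤ π → 2 * s ≤ |t| → 2 * s ≤ |t + 2 * π / 3| →
        logModel f x t - C * logErr f x ≤ Real.log ‖Df κ η f (circleMap 0 (x ^ 2) t)‖) ∧
      ∀ t, -π ≤ t → t ≤ π → 8 * s ≤ |t| → 8 * s ≤ |t + 2 * π / 3| →
        Df κ η f (circleMap 0 (x ^ 2 * (1 - s)) t) ≠ 0 ∧
          -(C * logErr f x) ≤ Real.log ‖Df κ η f (circleMap 0 (x ^ 2 * (1 - s)) t)‖ := by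
  obtain ⟨τ₁, C₁, hτ₁, hτ₁4, hC₁, h_up⟩ := exists_log_norm_Df_le hκ hη
  obtain ⟨τ₂, C₂, K₂, hτ₂, hτ₂4, hC₂, hK₂, h_low⟩ := exists_le_log_norm_Df hκ hη
  obtain ⟨τ₃, C₃, K₃, hτ₃, hτ₃4, hC₃, hK₃, h_base⟩ :=
    exists_neg_le_log_norm_Df_circleMap_mul_one_sub hκ hη
  refine ⟨min τ₁ (min τ₂ τ₃), C₁ + C₂ + C₃, K₂ + K₃, by positivity,
    (min_le_left _ _).trans hτ₁4, by positivity, by positivity, fun f x s h hs hs1 hsΦ => ?_⟩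
  have hE : 0 < logErr f x := zero_lt_one.trans_le h.one_le_logErr_ofReal
  have hΦ := peakExp_nonneg h.pos.le h.ofReal_pos.le
  have hC₁E : C₁ * logErr f x ≤ (C₁ + C₂ + C₃) * logErr f x := by gcongr; linarith
  have hC₂E : C₂ * logErr f x ≤ (C₁ + C₂ + C₃) * logErr f x := by gcongr; linarith
  have hC₃E : C₃ * logErr f x ≤ (C₁ + C₂ + C₃) * logErr f x := by gcongr; linarith
  have h_far : ∀ d, 2 * s ≤ d → K₂ * logErr f x ≤ peakExp f x * d := fun d hd => by
    linarith [mul_le_mul_of_nonneg_left hd hΦ, mul_pos hK₂ hE, mul_pos hK₃ hE]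
  have h₁ := h.mono (min_le_left _ _) hτ₁4
  have h₂ := h.mono ((min_le_right _ _).trans (min_le_left _ _)) hτ₂4
  have h₃ := h.mono ((min_le_right _ _).trans (min_le_right _ _)) hτ₃4
  refine ⟨fun t h1 h2 => (h_up f x t h₁ h1 h2).trans (by linarith), fun t h1 h2 h3 h4 => ?_,
    fun t h1 h2 h3 h4 => ?_⟩
  · linarith [(h_low f x t h₂ h1 h2 (h_far _ h3) (h_far _ h4)).2]
  · exact (h_base f x s t h₃ hs hs1 (by linarith [mul_pos hK₂ hE]) h1 h2 h3 h4).imp_right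
      (neg_le_neg hC₃E).trans

-- The exceptional arcs have width of order `logErr / peakExp`, so that they contribute only
-- `O(logErr)`.
lemma exists_abs_integral_log_norm_Df_sub_le : ∃ τ C : ℝ, 0 < τ ∧ τ ≤ 1 / 4 ∧ 0 < C ∧
    ∀ f x : ℝ, AiryRegime τ f (x : ℂ) → C * logErr f x ≤ peakExp f x →
      (∀ z : ℂ, ‖z‖ = x ^ 2 → Df κ η f z ≠ 0) →
      |(∫ t in (-π)..π, Real.log ‖Df κ η f (circleMap 0 (x ^ 2) t)‖) - 4 / 3 * peakExp f x| ≤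
        C * logErr f x := by
  obtain ⟨τ, C, K, hτ, hτ4, hC, hK, h_bounds⟩ := exists_log_norm_Df_bounds hκ hη
  refine ⟨τ, 2 * π * C + 484 * π * (2 * C + K) + 100 * K, hτ, hτ4, by positivity,
    fun f x h h_small hsph => ?_⟩
  have hE : 0 < logErr f x := zero_lt_one.trans_le h.one_le_logErr_ofReal
  have hΦ : 0 < peakExp f x := lt_of_lt_of_le (by positivity) h_small
  set s := K * logErr f x / peakExp f x with hs_def
  have hs : 0 < s := by positivity
  have hsΦ : s * peakExp f x = K * logErr f x := div_mul_cancel₀ _ hΦ.ne'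
  have hs1 : s ≤ 1 / 100 := by
    rw [hs_def, div_le_iff₀ hΦ]
    linarith [(by positivity : 0 ≤ (2 * π * C + 484 * π * (2 * C + K)) * logErr f x)]
  obtain ⟨h_up, h_low, h_base⟩ := h_bounds f x s h hs hs1 hsΦ.ge
  refine (abs_integral_log_norm_sub_peakExp_le (differentiable_Df κ η f) h.pos.le h.ofReal_pos hsph
    hs hs1 (by positivity) h_up h_low h_base).trans ?_
  have h_exceptional : s * (2 * (C * logErr f x) + peakExp f x) ≤ (2 * C + K) * logErr f x := by
    nlinarith [mul_pos hC hE]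
  linarith [mul_le_mul_of_nonneg_left h_exceptional (by positivity : 0 ≤ 484 * π),
    (by positivity : 0 ≤ 100 * K * logErr f x)]

end MeanValue

/-! ### The determinant at the origin -/

lemma cubicMoment_zero_mul_one : cubicMoment 0 * cubicMoment 1 = 2 * π / (3 * √3) := by
  have h_three : (3 : ℝ) ^ (-2 / 3 : ℝ) * 3 ^ (-1 / 3 : ℝ) = 3⁻¹ := by
    rw [← Real.rpow_add (by norm_num), ← Real.rpow_neg_one]
    norm_num
  rw [cubicMoment_eq, cubicMoment_eq, mul_mul_mul_comm]
  norm_num only [Nat.cast_zero, Nat.cast_one] at h_three ⊢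
  rw [h_three, Gamma_one_third_mul_Gamma_two_thirds]
  field_simp

/-- The constant `e^{-iπ/6} / (2π)`, so that `Wf f = f^{1/3} * airyUnit`. -/
noncomputable def airyUnit : ℂ := I * ωc ^ 2 / (2 * π)

lemma airyUnit_ne_zero : airyUnit ≠ 0 :=
  div_ne_zero (mul_ne_zero Complex.I_ne_zero (pow_ne_zero 2 ωc_ne_zero))
    (mul_ne_zero two_ne_zero (mod_cast Real.pi_ne_zero))

lemma ωc_sub_one_mul_airyCoeff_zero_mul_one :
    (ωc - 1) * (airyCoeff 0 * airyCoeff 1) = airyUnit := by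
  have h3 : (√3 : ℂ) ^ 2 = 3 := mod_cast Real.sq_sqrt (by norm_num : (0 : ℝ) ≤ 3)
  have h30 : (√3 : ℂ) ≠ 0 := mod_cast (Real.sqrt_pos.2 (by norm_num : (0 : ℝ) < 3)).ne'
  have hπ : (π : ℂ) ≠ 0 := mod_cast Real.pi_ne_zero
  have hω : 1 - ωc = √3 * (I * ωc ^ 2) := by
    rw [ωc_sq_eq, ωc_eq]
    push_cast
    linear_combination (-1 / 2 : ℂ) * h3 + (√3 : ℂ) ^ 2 / 2 * Complex.I_sq
  have h_coeff : airyCoeff 0 * airyCoeff 1 = -(1 / (2 * π * √3)) := by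
    have h : airyCoeff 0 * airyCoeff 1 =
        ((-(√3 ^ 2 / (4 * π ^ 2) * (cubicMoment 0 * cubicMoment 1)) : ℝ) : ℂ) := by
      rw [airyCoeff_zero, airyCoeff_one]
      push_cast
      ring
    rw [h, cubicMoment_zero_mul_one]
    push_cast
    rw [h3]
    field_simp
    norm_num
  rw [h_coeff, airyUnit, ← neg_sub, hω]
  field_simp

/-- The combination of Airy functions that vanishes at `0` and gives the last factor
`betaM - betaP` of `Df κ η f 0`. -/
noncomputable def airyBracket (s : ℂ) : ℂ := Ai (ωc * s) * Ai (-s) - Ai (-(ωc * s)) * Ai s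

lemma airyBracket_zero : airyBracket 0 = 0 := by simp [airyBracket]

lemma hasDerivAt_airyBracket_zero : HasDerivAt airyBracket (2 * airyUnit) 0 := by
  have h_scaled (u : ℂ) : HasDerivAt (fun s => Ai (u * s)) (airyCoeff 1 * u) 0 :=
    HasDerivAt.comp (h₂ := Ai) 0 (by simpa using hasDerivAt_Ai_zero)
      (by simpa using (hasDerivAt_id (0 : ℂ)).const_mul u)
  have h := ((h_scaled ωc).mul (h_scaled (-1))).sub ((h_scaled (-ωc)).mul (h_scaled 1))
  simp only [mul_zero, Ai_zero] at h
  refine (h.congr_deriv ?_).congr_of_eventuallyEq (.of_forall fun s => ?_)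
  · rw [← ωc_sub_one_mul_airyCoeff_zero_mul_one]
    ring
  · simp [airyBracket]

/-- The continuous extension to `p = 0` of `p * Df κ η (p ^ 3) 0`. -/
noncomputable def scaledDf (κ η : ℝ) (p : ℂ) : ℂ :=
  p + (Ai (ωc * (κ * p)) * Ai (κ * p) + Ai (-(ωc * (κ * p))) * Ai (-(κ * p))) / (η * airyUnit) +
    Ai (-(ωc * (κ * p))) * Ai (κ * p) * (κ * dslope airyBracket 0 (κ * p)) /
      (η ^ 2 * airyUnit ^ 2)

lemma continuousAt_scaledDf_zero (κ η : ℝ) : ContinuousAt (scaledDf κ η) 0 := by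
  have h_slope : ContinuousAt (fun p : ℂ => dslope airyBracket 0 (κ * p)) 0 := by
    refine ContinuousAt.comp (g := dslope airyBracket 0) ?_ (by fun_prop)
    rw [mul_zero]
    exact continuousAt_dslope_same.2 hasDerivAt_airyBracket_zero.differentiableAt
  have hAi := differentiable_Ai.continuous
  unfold scaledDf
  fun_prop

lemma scaledDf_zero (κ : ℝ) {η : ℝ} (hη : η ≠ 0) :
    scaledDf κ η 0 = 2 * airyCoeff 0 ^ 2 * (1 + κ / η) / (η * airyUnit) := by
  have hη' : (η : ℂ) ≠ 0 := mod_cast hη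
  have hc := airyUnit_ne_zero
  simp only [scaledDf, mul_zero, neg_zero, Ai_zero, dslope_same, hasDerivAt_airyBracket_zero.deriv]
  field_simp
  ring

lemma scaledDf_zero_ne_zero {κ η : ℝ} (hκ : 0 < κ) (hη : 0 < η) : scaledDf κ η 0 ≠ 0 := by
  have h_sum : (1 + κ / η : ℂ) ≠ 0 := mod_cast (by positivity : 1 + κ / η ≠ 0)
  have hη' : (η : ℂ) ≠ 0 := mod_cast hη.ne'
  rw [scaledDf_zero κ hη.ne']
  exact div_ne_zero (mul_ne_zero (mul_ne_zero two_ne_zero (pow_ne_zero 2 airyCoeff_zero_ne_zero))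
    h_sum) (mul_ne_zero hη' airyUnit_ne_zero)

lemma mul_Df_cube_zero (κ : ℝ) {η p : ℝ} (hη : η ≠ 0) (hp : 0 < p) :
    p * Df κ η (p ^ 3) 0 = scaledDf κ η p := by
  have hη' : (η : ℂ) ≠ 0 := mod_cast hη
  have hp' : (p : ℂ) ≠ 0 := mod_cast hp.ne'
  have hc := airyUnit_ne_zero
  have h_rpow (q : ℝ) : (p ^ 3) ^ (q / 3) = p ^ q := by
    rw [← Real.rpow_natCast, ← Real.rpow_mul hp.le]
    congr 1
    push_cast
    ring
  have hW : Wf (p ^ 3) = p * airyUnit := by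
    rw [Wf_eq, h_rpow, Real.rpow_one, airyUnit]
    ring
  have h_scale : (κ : ℂ) * ((p ^ 3 : ℝ) * (((p ^ 3) ^ (-(2 : ℝ) / 3) : ℝ) : ℂ)) = κ * p := by
    rw [h_rpow, Real.rpow_neg hp.le, Real.rpow_two]
    push_cast
    field_simp
  have h_bracket : Ai (ωc * (κ * p)) * Ai (-(κ * p)) - Ai (-(ωc * (κ * p))) * Ai (κ * p) =
      κ * p * dslope airyBracket 0 (κ * p) := by
    have h := sub_smul_dslope airyBracket 0 ((κ : ℂ) * p)
    rw [airyBracket_zero, sub_zero, sub_zero, smul_eq_mul] at h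
    exact h.symm
  simp only [Df, alphaP, alphaM, betaP, betaM, hW, zero_sub, zero_add, neg_mul, mul_neg, neg_neg,
    mul_assoc, h_scale]
  rw [h_bracket, scaledDf]
  generalize dslope airyBracket 0 (κ * p) = δ
  field_simp

lemma exists_log_norm_Df_zero {κ η : ℝ} (hκ : 0 < κ) (hη : 0 < η) :
    ∃ f₀ C : ℝ, 0 < f₀ ∧ 0 < C ∧ ∀ f, 0 < f → f < f₀ →
      Df κ η f 0 ≠ 0 ∧ |Real.log ‖Df κ η f 0‖| ≤ C * Real.log f⁻¹ := by
  set L := ‖scaledDf κ η 0‖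
  have hL : 0 < L := norm_pos_iff.2 (scaledDf_zero_ne_zero hκ hη)
  have h_near : ∀ᶠ p in 𝓝 (0 : ℂ), ‖scaledDf κ η p‖ ∈ Ioo (L / 2) (2 * L) :=
    (continuousAt_scaledDf_zero κ η).norm.eventually_mem
      (Ioo_mem_nhds (by linarith) (by linarith))
  obtain ⟨ε, hε, h_near⟩ := Metric.eventually_nhds_iff.1 h_near
  refine ⟨min (ε ^ 3) (1 / 4), |Real.log (L / 2)| + |Real.log (2 * L)| + 1, by positivity,
    by positivity, fun f hf hff => ?_⟩
  obtain ⟨hfε, hf4⟩ := lt_min_iff.1 hff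
  obtain ⟨p, hp, rfl⟩ : ∃ p : ℝ, 0 < p ∧ p ^ 3 = f :=
    ⟨f ^ ((3 : ℕ) : ℝ)⁻¹, by positivity, Real.rpow_inv_natCast_pow hf.le three_ne_zero⟩
  have hpε : p < ε := lt_of_pow_lt_pow_left₀ 3 hε.le hfε
  obtain ⟨h_low, h_up⟩ := h_near (y := p) (by simpa [abs_of_pos hp] using hpε)
  rw [← mul_Df_cube_zero κ hη.ne' hp, norm_mul, Complex.norm_real, Real.norm_of_nonneg hp.le]
    at h_low h_up
  have hD : 0 < ‖Df κ η (p ^ 3) 0‖ := pos_of_mul_pos_right (lt_trans (by positivity) h_low) hp.le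
  refine ⟨norm_pos_iff.1 hD, ?_⟩
  have h_log : 1 ≤ Real.log (p ^ 3)⁻¹ := by
    rw [Real.le_log_iff_exp_le (by positivity)]
    have h4 : 4 ≤ (p ^ 3)⁻¹ := by rw [le_inv_comm₀ (by norm_num) hf]; linarith
    linarith [Real.exp_one_lt_d9]
  have h_log_low := Real.log_le_log (by positivity) h_low.le
  have h_log_up := Real.log_le_log (by positivity) h_up.le
  rw [Real.log_mul hp.ne' hD.ne'] at h_log_low h_log_up
  rw [Real.log_inv, Real.log_pow] at h_log ⊢
  push_cast at h_log ⊢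
  have h₁ := mul_le_mul_of_nonneg_left h_log (abs_nonneg (Real.log (L / 2)))
  have h₂ := mul_le_mul_of_nonneg_left h_log (abs_nonneg (Real.log (2 * L)))
  have h₃ := neg_abs_le (Real.log (L / 2))
  have h₄ := le_abs_self (Real.log (2 * L))
  rw [abs_le]
  constructor <;> linarith [abs_nonneg (Real.log (L / 2)), abs_nonneg (Real.log (2 * L))]

/-! ### Choice of the radius -/

lemma finite_zeros_closedBall {g : ℂ → ℂ} (hg : Differentiable ℂ g) {w : ℂ} (hw : g w ≠ 0)
    (r : ℝ) : {z ∈ Metric.closedBall (0 : ℂ) r | g z = 0}.Finite := by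
  have h_codiscrete : g ⁻¹' {0}ᶜ ∈ codiscrete ℂ :=
    (hg.differentiableOn.analyticOnNhd isOpen_univ).preimage_zero_mem_codiscrete hw
  refine ((isCompact_closedBall (0 : ℂ) r).finite_sdiff_of_mem_codiscreteWithin
    (codiscreteWithin_mono (subset_univ _) h_codiscrete)).subset fun z hz => ⟨hz.1, ?_⟩
  simp [hz.2]

lemma exists_radius_forall_ne_zero {g : ℂ → ℂ} (hg : Differentiable ℂ g) {w : ℂ} (hw : g w ≠ 0)
    {a b : ℝ} (hab : a < b) : ∃ r, a < r ∧ r < b ∧ ∀ z : ℂ, ‖z‖ = r → g z ≠ 0 := by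
  obtain ⟨r, hr, hr'⟩ := (Ioo_infinite hab).exists_notMem_finite
    ((finite_zeros_closedBall hg hw b).image norm)
  refine ⟨r, hr.1, hr.2, fun z hz h0 => hr' ⟨z, ⟨?_, h0⟩, hz⟩⟩
  simpa [hz] using hr.2.le

lemma integral_log_norm_div {g : ℂ → ℂ} (hg : Differentiable ℂ g) {r : ℝ} (hr : 0 < r)
    (hsph : ∀ z : ℂ, ‖z‖ = r → g z ≠ 0) {c : ℂ} (hc : c ≠ 0) :
    ∫ t in (0 : ℝ)..(2 * π), Real.log ‖g ((r : ℂ) * Complex.exp (I * t)) / c‖ =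
      (∫ t in (-π)..π, Real.log ‖g (circleMap 0 r t)‖) - 2 * π * Real.log ‖c‖ := by
  have h_period : Function.Periodic (fun t => Real.log ‖g (circleMap 0 r t)‖) (2 * π) :=
    (periodic_circleMap 0 r).comp fun z => Real.log ‖g z‖
  have h_shift := h_period.intervalIntegral_add_eq (-π) 0
  rw [show -π + 2 * π = π by ring, zero_add] at h_shift
  have h_cont := continuous_log_norm_circleMap hg hr hsph
  have h_log (t : ℝ) : Real.log ‖g ((r : ℂ) * Complex.exp (I * t)) / c‖ =
      Real.log ‖g (circleMap 0 r t)‖ - Real.log ‖c‖ := by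
    have h_ne : g (circleMap 0 r t) ≠ 0 := hsph _ (by simp [abs_of_pos hr])
    rw [mul_comm I, ← circleMap_zero, norm_div,
      Real.log_div (norm_ne_zero_iff.2 h_ne) (norm_ne_zero_iff.2 hc)]
  simp only [h_log]
  rw [intervalIntegral.integral_sub (h_cont.intervalIntegrable _ _)
    (continuous_const.intervalIntegrable _ _), intervalIntegral.integral_const, h_shift,
    smul_eq_mul, sub_zero]

section EighthRoot

variable {x y : ℝ} (hy : 0 < y) (hy1 : y ≤ 1) (hyx : y ^ 2 ≤ x)
include hy hy1 hyx

lemma pow_mul_log_inv_pow_add_sq_le : y ^ 5 * Real.log ((y ^ 8)⁻¹ + x ^ 2) ≤ 9 * x ^ 2 := by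
  have h_inv : 1 ≤ (y ^ 8)⁻¹ := (one_le_inv₀ (by positivity)).2 (pow_le_one₀ hy.le hy1)
  have h_log : Real.log ((y ^ 8)⁻¹ + x ^ 2) ≤ 8 * y⁻¹ + x ^ 2 := by
    have h_factor : (y ^ 8)⁻¹ + x ^ 2 ≤ y⁻¹ ^ 8 * (1 + x ^ 2) := by
      rw [inv_pow]
      nlinarith [sq_nonneg x]
    have h := Real.log_le_log (by positivity) h_factor
    rw [Real.log_mul (by positivity) (by positivity), Real.log_pow] at h
    push_cast at h
    linarith [Real.log_le_sub_one_of_pos (inv_pos.2 hy),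
      Real.log_le_sub_one_of_pos (by positivity : 0 < 1 + x ^ 2)]
  have h_four : (y ^ 2) ^ 2 ≤ x ^ 2 := by gcongr
  calc y ^ 5 * Real.log ((y ^ 8)⁻¹ + x ^ 2) ≤ y ^ 5 * (8 * y⁻¹ + x ^ 2) := by gcongr
    _ = 8 * (y ^ 2) ^ 2 + y ^ 5 * x ^ 2 := by field_simp
    _ ≤ 8 * x ^ 2 + 1 * x ^ 2 := by gcongr; exact pow_le_one₀ hy.le hy1
    _ = 9 * x ^ 2 := by ring

lemma logErr_pow_eight_le_peakExp {C : ℝ} (hC : 0 ≤ C) (hyC : 27 / 2 * C * y ≤ 1) :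
    C * logErr (y ^ 8) x ≤ peakExp (y ^ 8) x := by
  have hx : 0 < x := lt_of_lt_of_le (by positivity) hyx
  have h_linear : y ^ 2 * (1 + x) ≤ 2 * x := by
    nlinarith [pow_le_one₀ hy.le hy1 (n := 2)]
  rw [peakExp, le_div_iff₀ (by positivity), logErr]
  calc C * ((1 + x) * Real.log ((y ^ 8)⁻¹ + x ^ 2)) * y ^ 8
      = C * y * ((y ^ 2 * (1 + x)) * (y ^ 5 * Real.log ((y ^ 8)⁻¹ + x ^ 2))) := by ring
    _ ≤ C * y * ((y ^ 2 * (1 + x)) * (9 * x ^ 2)) := by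
      gcongr ?_ * (?_ * ?_)
      exact pow_mul_log_inv_pow_add_sq_le hy hy1 hyx
    _ ≤ C * y * (2 * x * (9 * x ^ 2)) := by gcongr
    _ = 27 / 2 * C * y * (4 / 3 * x ^ 3) := by ring
    _ ≤ 1 * (4 / 3 * x ^ 3) := by gcongr
    _ = 4 / 3 * x ^ 3 := one_mul _

end EighthRoot

section SmallField

variable {a f r : ℝ} (ha : a < 1 / 2) (hf : 0 < f) (hfr : f ^ a ≤ r)
include ha hf hfr

lemma le_mul_sq_of_rpow_le {τ : ℝ} (hτ : 0 ≤ τ) (hfτ : f ≤ τ ^ (1 / (1 - 2 * a))) :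
    f ≤ τ * r ^ 2 := by
  have ha' : 0 < 1 - 2 * a := by linarith
  have h_tol : f ^ (1 - 2 * a) ≤ τ := by
    have h := Real.rpow_le_rpow hf.le hfτ ha'.le
    rwa [← Real.rpow_mul hτ, one_div_mul_cancel ha'.ne', Real.rpow_one] at h
  calc f = f ^ (1 - 2 * a) * (f ^ a) ^ 2 := by
        rw [← Real.rpow_mul_natCast hf.le, ← Real.rpow_add hf]
        ring_nf
        rw [Real.rpow_one]
    _ ≤ τ * r ^ 2 := by gcongr

lemma logErr_sqrt_le_peakExp_sqrt {C : ℝ} (hC : 0 < C) (hf1 : f ≤ 1)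
    (hfC : f ≤ (27 / 2 * C)⁻¹ ^ 8) : C * logErr f √r ≤ peakExp f √r := by
  obtain ⟨y, hy, rfl⟩ : ∃ y : ℝ, 0 < y ∧ y ^ 8 = f :=
    ⟨f ^ ((8 : ℕ) : ℝ)⁻¹, by positivity, Real.rpow_inv_natCast_pow hf.le (by norm_num)⟩
  have hy1 : y ≤ 1 := (pow_le_one_iff_of_nonneg hy.le (by norm_num)).1 hf1
  have hyC : y ≤ (27 / 2 * C)⁻¹ := le_of_pow_le_pow_left₀ (by norm_num) (by positivity) hfC
  refine logErr_pow_eight_le_peakExp hy hy1 (Real.le_sqrt_of_sq_le (le_trans ?_ hfr)) hC.le ?_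
  · calc (y ^ 2) ^ 2 = (y ^ 8) ^ (1 / 2 : ℝ) := by
          rw [← Real.sqrt_eq_rpow, show y ^ 8 = ((y ^ 2) ^ 2) ^ 2 by ring,
            Real.sqrt_sq (by positivity)]
      _ ≤ (y ^ 8) ^ a := Real.rpow_le_rpow_of_exponent_ge hf hf1 ha.le
  · calc 27 / 2 * C * y ≤ 27 / 2 * C * (27 / 2 * C)⁻¹ := by gcongr
      _ = 1 := mul_inv_cancel₀ (by positivity)

end SmallField

lemma exists_airyRegime_and_logErr_le_peakExp {a τ C : ℝ} (ha : a < 1 / 2) (hτ : 0 < τ)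
    (hτ4 : τ ≤ 1 / 4) (hC : 0 < C) : ∃ f₀ > 0, ∀ f r, 0 < f → f < f₀ → f ^ a ≤ r →
      AiryRegime τ f (√r : ℂ) ∧ C * logErr f √r ≤ peakExp f √r := by
  refine ⟨min (min τ (τ ^ (1 / (1 - 2 * a)))) ((27 / 2 * C)⁻¹ ^ 8), by positivity,
    fun f r hf hff hfr => ?_⟩
  simp only [lt_min_iff] at hff
  obtain ⟨⟨hfτ, hfτa⟩, hfC⟩ := hff
  have hr : 0 < r := (Real.rpow_pos_of_pos hf a).trans_le hfr
  refine ⟨⟨hτ4, hf, hfτ.le, ?_, by simp [Real.sqrt_nonneg], by simp,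
    by simp [(Real.sqrt_pos.2 hr).ne']⟩,
    logErr_sqrt_le_peakExp_sqrt ha hf hfr hC (by linarith) hfC.le⟩
  rw [Complex.norm_real, Real.norm_of_nonneg (Real.sqrt_nonneg r),
    show √r ^ 4 = (√r ^ 2) ^ 2 by ring, Real.sq_sqrt hr.le]
  exact le_mul_sq_of_rpow_le ha hf hfr hτ.le hfτa.le

lemma abs_sub_peakExp_le {f r J d C₀ C₁ : ℝ} (hf : 0 < f) (hf4 : f ≤ 1 / 4) (hr : 0 ≤ r)
    (hC₀ : 0 ≤ C₀) (hC₁ : 0 ≤ C₁) (hd : |d| ≤ C₀ * Real.log f⁻¹)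
    (hJ : |J - 4 / 3 * peakExp f √r| ≤ C₁ * logErr f √r) :
    |1 / (2 * π) * (J - 2 * π * d) - 8 / (9 * π) * r ^ ((3 : ℝ) / 2) / f| ≤
      (C₁ + C₀) * (1 + r ^ ((1 : ℝ) / 2)) * Real.log (f⁻¹ + r) ^ 2 := by
  have h_cube : r ^ ((3 : ℝ) / 2) = √r ^ 3 := by
    rw [Real.sqrt_eq_rpow, ← Real.rpow_mul_natCast hr]; norm_num
  have h_split : 1 / (2 * π) * (J - 2 * π * d) - 8 / (9 * π) * √r ^ 3 / f =
      1 / (2 * π) * (J - 4 / 3 * peakExp f √r) - d := by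
    unfold peakExp
    field_simp
    ring
  have hf_inv : 4 ≤ f⁻¹ := by rw [le_inv_comm₀ (by norm_num) hf]; linarith
  have h_log : Real.log f⁻¹ ≤ Real.log (f⁻¹ + r) := Real.log_le_log (by positivity) (by linarith)
  have h_one : 1 ≤ Real.log (f⁻¹ + r) := by
    rw [Real.le_log_iff_exp_le (by positivity)]
    linarith [Real.exp_one_lt_d9]
  rw [logErr, Real.sq_sqrt hr] at hJ
  rw [h_cube, ← Real.sqrt_eq_rpow, h_split]
  set l := Real.log (f⁻¹ + r)
  have h_sq : l ≤ l ^ 2 := by nlinarith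
  have h_mean : |1 / (2 * π) * (J - 4 / 3 * peakExp f √r)| ≤ C₁ * ((1 + √r) * l ^ 2) := by
    rw [abs_mul, abs_of_pos (by positivity)]
    have h_le_one : 1 / (2 * π) ≤ 1 := by
      rw [div_le_one (by positivity)]
      linarith [Real.pi_gt_three]
    exact (mul_le_of_le_one_left (abs_nonneg _) h_le_one).trans (hJ.trans (by gcongr))
  have h_zero : |d| ≤ C₀ * ((1 + √r) * l ^ 2) := hd.trans (by
    gcongr
    nlinarith [mul_nonneg (Real.sqrt_nonneg r) (sq_nonneg l)])
  linarith [abs_sub (1 / (2 * π) * (J - 4 / 3 * peakExp f √r)) d]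

/-- Evaluation of the Jensen integral of `B_f = D_f/D_f(0)`: for small `f` and
any `R_L > 2f^a` there is a radius `r` close to `R_L`, with no zeros of `D_f`
on the circle `|z| = r`, such that the Jensen integral equals
`(8/(9π))·r^{3/2}/f` up to `O((1 + r^{1/2})·log²(f⁻¹ + r))`. -/
theorem stmt18 (κ η a : ℝ) (hκ : 0 < κ) (hη : 0 < η)
    (ha0 : 0 < a) (ha1 : a < 1 / 2) :
    ∃ C > (0 : ℝ), ∃ f₀ > (0 : ℝ), ∀ f : ℝ, 0 < f → f < f₀ →
      Df κ η f 0 ≠ 0 ∧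
      ∀ RL : ℝ, 2 * f ^ a < RL → ∃ r : ℝ, (1 - f) * RL < r ∧ r < RL ∧
        (∀ z : ℂ, ‖z‖ = r → Df κ η f z ≠ 0) ∧
        |(1 / (2 * π)) *
            (∫ t in (0 : ℝ)..(2 * π),
              Real.log (‖Df κ η f ((r : ℂ) * Complex.exp (Complex.I * t))
                / Df κ η f 0‖))
          - (8 / (9 * π)) * r ^ ((3 : ℝ) / 2) / f| ≤
          C * (1 + r ^ ((1 : ℝ) / 2)) * (Real.log (f⁻¹ + r)) ^ 2 := by
  obtain ⟨τ, C₁, hτ, hτ4, hC₁, h_mean⟩ := exists_abs_integral_log_norm_Df_sub_le hκ hη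
  obtain ⟨f₁, C₀, hf₁, hC₀, h_zero⟩ := exists_log_norm_Df_zero hκ hη
  obtain ⟨f₂, hf₂, h_regime⟩ := exists_airyRegime_and_logErr_le_peakExp ha1 hτ hτ4 hC₁
  refine ⟨C₁ + C₀, by positivity, min (min f₁ f₂) (1 / 4), by positivity, fun f hf hff => ?_⟩
  simp only [lt_min_iff] at hff
  obtain ⟨⟨hff₁, hff₂⟩, hf4⟩ := hff
  obtain ⟨h_ne, h_log⟩ := h_zero f hf hff₁
  refine ⟨h_ne, fun RL hRL => ?_⟩
  have h_pow : 0 < f ^ a := Real.rpow_pos_of_pos hf a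
  obtain ⟨r, hrL, hrR, h_sphere⟩ := exists_radius_forall_ne_zero (differentiable_Df κ η f) h_ne
    (show (1 - f) * RL < RL by nlinarith)
  refine ⟨r, hrL, hrR, h_sphere, ?_⟩
  have hfr : f ^ a ≤ r := by nlinarith
  have hr : 0 < r := h_pow.trans_le hfr
  obtain ⟨h_airy, h_small⟩ := h_regime f r hf hff₂ hfr
  have h_int := h_mean f √r h_airy h_small (by rwa [Real.sq_sqrt hr.le])
  rw [Real.sq_sqrt hr.le] at h_int
  rw [integral_log_norm_div (differentiable_Df κ η f) hr h_sphere h_ne]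
  exact abs_sub_peakExp_le hf hf4.le hr.le hC₀.le hC₁.le h_log h_int
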